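/- arXiv:1203.6623 — 5 statements merged into one kernel-verified Lean document; each statement's English description precedes it below -/
import Mathlib

section
/- A simple graph G with at least two vertices is (2,3)-tight if and only if there is a finite sequence of simple graphs G_0, G_1, …, G_n with G_0 = K_2 (a single edge), G_n = G, and each G_{i+1} obtained from G_i by either a vertex addition or an edge splitting operation. -/
open Finset

/-- A finite simple graph given by a finite vertex set of natural numbers and a finite set of
edges (unordered pairs of distinct vertices). -/
structure FinGraph where
  verts : Finset ℕ
  edges : Finset (Sym2 ℕ)
  not_isDiag : ∀ e ∈ edges, ¬ e.IsDiag
  mem_verts : ∀ e ∈ edges, ∀ v ∈ e, v ∈ verts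

/-- Adjacency in a `FinGraph`. -/
def FinGraph.Adj (G : FinGraph) (a b : ℕ) : Prop := s(a, b) ∈ G.edges

/-- `(V', E')` is a subgraph of `G`: the vertices and edges come from `G` and every endpoint
of an edge of `E'` lies in `V'`. -/
def SubgraphPair (G : FinGraph) (V' : Finset ℕ) (E' : Finset (Sym2 ℕ)) : Prop :=
  V' ⊆ G.verts ∧ E' ⊆ G.edges ∧ ∀ e ∈ E', ∀ v ∈ e, v ∈ V'

/-- Vertex addition: add a new vertex `v` of degree 2 joined to two distinct existing
vertices `a` and `b`. -/
def VertexAddition (G G' : FinGraph) : Prop :=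
  ∃ v a b : ℕ, v ∉ G.verts ∧ a ∈ G.verts ∧ b ∈ G.verts ∧ a ≠ b ∧
    G'.verts = insert v G.verts ∧
    G'.edges = insert s(v, a) (insert s(v, b) G.edges)

/-- Edge splitting: remove an edge `xy`, add a new vertex `v` of degree 3 joined to `x`, `y`
and a third existing vertex `z` distinct from `x` and `y`. -/
def EdgeSplit (G G' : FinGraph) : Prop :=
  ∃ v x y z : ℕ, v ∉ G.verts ∧ x ∈ G.verts ∧ y ∈ G.verts ∧ z ∈ G.verts ∧
    z ≠ x ∧ z ≠ y ∧ s(x, y) ∈ G.edges ∧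
    G'.verts = insert v G.verts ∧
    G'.edges = insert s(v, x) (insert s(v, y) (insert s(v, z) (G.edges.erase s(x, y))))

/-- `G` is a copy of `K₂`: a single edge. -/
def IsK2 (G : FinGraph) : Prop :=
  ∃ a b : ℕ, a ≠ b ∧ G.verts = {a, b} ∧ G.edges = {s(a, b)}

/-- `G` is (2,3)-tight: every subgraph with at least one edge satisfies `|E'| ≤ 2|V'| − 3`,
and `|E| = 2|V| − 3`. -/
def Tight23 (G : FinGraph) : Prop :=
  (∀ V' E', SubgraphPair G V' E' → E'.Nonempty → (E'.card : ℤ) ≤ 2 * V'.card - 3) ∧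
  (G.edges.card : ℤ) = 2 * G.verts.card - 3

namespace HL

/-- Number of edges of `E` induced by `X`. -/
def I (E : Finset (Sym2 ℕ)) (X : Finset ℕ) : ℕ := (E.filter (fun e => e ∈ X.sym2)).card

def Sp (E : Finset (Sym2 ℕ)) (V : Finset ℕ) : Prop :=
  ∀ X ⊆ V, 2 ≤ X.card → I E X + 3 ≤ 2 * X.card

def T (E : Finset (Sym2 ℕ)) (V : Finset ℕ) : Prop := Sp E V ∧ E.card + 3 = 2 * V.card

def ND (E : Finset (Sym2 ℕ)) : Prop := ∀ e ∈ E, ¬ e.IsDiag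

lemma I_insert {E : Finset (Sym2 ℕ)} {a b : ℕ} (h : s(a, b) ∉ E) (X : Finset ℕ) :
    I (insert s(a, b) E) X = I E X + if a ∈ X ∧ b ∈ X then 1 else 0 := by
  unfold I
  rw [Finset.filter_insert]
  by_cases hx : a ∈ X ∧ b ∈ X
  · rw [if_pos (by simpa using hx), if_pos hx, Finset.card_insert_of_notMem (by simp [h])]
  · rw [if_neg (by simpa using hx), if_neg hx]; rfl

lemma I_mono {E F : Finset (Sym2 ℕ)} (h : E ⊆ F) (X : Finset ℕ) : I E X ≤ I F X :=
  Finset.card_le_card (Finset.filter_subset_filter _ h)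

lemma I_full {E : Finset (Sym2 ℕ)} {V : Finset ℕ} (h : ∀ e ∈ E, ∀ v ∈ e, v ∈ V) :
    I E V = E.card := by
  unfold I
  rw [Finset.filter_true_of_mem]
  intro e he
  rw [Finset.mem_sym2_iff]
  exact h e he

lemma I_erase {F : Finset (Sym2 ℕ)} {v : ℕ} (h : ∀ e ∈ F, v ∉ e) (X : Finset ℕ) :
    I F (X.erase v) = I F X := by
  unfold I
  congr 1
  apply Finset.filter_congr
  intro e he
  simp only [Finset.mem_sym2_iff, Finset.mem_erase]
  have := h e he
  constructor
  · intro h1 a ha; exact (h1 a ha).2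
  · intro h1 a ha; exact ⟨fun h2 => this (h2 ▸ ha), h1 a ha⟩

lemma nd_card {e : Sym2 ℕ} (he : ¬ e.IsDiag) {X : Finset ℕ} (h : e ∈ X.sym2) : 2 ≤ X.card := by
  induction e using Sym2.ind with
  | _ a b =>
    simp at he h
    have : ({a, b} : Finset ℕ) ⊆ X := by
      intro c; simp; rintro (rfl | rfl)
      · exact h.1
      · exact h.2
    calc 2 = ({a, b} : Finset ℕ).card := (Finset.card_pair he).symm
      _ ≤ _ := Finset.card_le_card this

lemma I_small {E : Finset (Sym2 ℕ)} (h : ND E) {X : Finset ℕ} (hX : X.card ≤ 1) : I E X = 0 := by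
  unfold I
  rw [Finset.card_eq_zero, Finset.filter_eq_empty_iff]
  intro e he h2
  have := nd_card (h e he) h2
  omega

lemma I_super (E : Finset (Sym2 ℕ)) (X Y : Finset ℕ) :
    I E X + I E Y ≤ I E (X ∪ Y) + I E (X ∩ Y) := by
  unfold I
  rw [← Finset.card_union_add_card_inter]
  apply Nat.add_le_add <;> apply Finset.card_le_card <;> intro e <;>
    simp only [Finset.mem_union, Finset.mem_inter, Finset.mem_filter, Finset.mem_sym2_iff] <;> grind

lemma tight_iff (G : FinGraph) : Tight23 G ↔ T G.edges G.verts := by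
  unfold Tight23 T
  refine and_congr ?_ (by omega)
  constructor
  · intro h X hX h2
    rcases Nat.eq_zero_or_pos (I G.edges X) with h0 | h0
    · omega
    · have := h X (G.edges.filter (fun e => e ∈ X.sym2))
        ⟨hX, Finset.filter_subset _ _, by
          intro e he
          have := (Finset.mem_filter.1 he).2
          rwa [Finset.mem_sym2_iff] at this⟩ (Finset.card_pos.1 h0)
      unfold I
      omega
  · rintro h V' E' ⟨h1, h2, h3⟩ ⟨e, he⟩
    have hs : ∀ e ∈ E', e ∈ V'.sym2 := fun e he => Finset.mem_sym2_iff.2 (h3 e he)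
    have := h V' h1 (nd_card (G.not_isDiag e (h2 he)) (hs e he))
    have h4 : E'.card ≤ I G.edges V' := by
      apply Finset.card_le_card
      intro e he
      exact Finset.mem_filter.2 ⟨h2 he, hs e he⟩
    omega

lemma T_K2 {a b : ℕ} (h : a ≠ b) : T {s(a, b)} {a, b} := by
  constructor
  · intro X hX h2
    have : I {s(a, b)} X ≤ 1 := (Finset.card_filter_le _ _).trans (by simp)
    omega
  · simp [Finset.card_pair h]

lemma notMem_of {F : Finset (Sym2 ℕ)} {v : ℕ} (hv : ∀ e ∈ F, v ∉ e) (a : ℕ) : s(v, a) ∉ F :=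
  fun h => hv _ h (by simp)

lemma I_two {F : Finset (Sym2 ℕ)} {v a b : ℕ} (hv : ∀ e ∈ F, v ∉ e) (hab : a ≠ b) (X : Finset ℕ) :
    I (insert s(v, a) (insert s(v, b) F)) X = I F X +
      (if v ∈ X ∧ b ∈ X then 1 else 0) + (if v ∈ X ∧ a ∈ X then 1 else 0) := by
  rw [I_insert, I_insert (notMem_of hv b)]
  have := notMem_of hv a
  simp only [Finset.mem_insert, this, or_false]
  simp; grind

lemma I_three {F : Finset (Sym2 ℕ)} {v x y z : ℕ} (hv : ∀ e ∈ F, v ∉ e) (hxy : x ≠ y)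
    (hzx : z ≠ x) (hzy : z ≠ y) (X : Finset ℕ) :
    I (insert s(v, x) (insert s(v, y) (insert s(v, z) F))) X = I F X +
      (if v ∈ X ∧ z ∈ X then 1 else 0) + (if v ∈ X ∧ y ∈ X then 1 else 0) +
      (if v ∈ X ∧ x ∈ X then 1 else 0) := by
  rw [I_insert, I_two hv hzy.symm]
  have := notMem_of hv x
  simp only [Finset.mem_insert, this, or_false]
  simp; grind

lemma card_two {F : Finset (Sym2 ℕ)} {v a b : ℕ} (hv : ∀ e ∈ F, v ∉ e) (hab : a ≠ b) :
    (insert s(v, a) (insert s(v, b) F)).card = F.card + 2 := by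
  have := notMem_of hv a
  have := notMem_of hv b
  rw [Finset.card_insert_of_notMem, Finset.card_insert_of_notMem this]
  simp only [Finset.mem_insert, not_or]
  refine ⟨?_, by assumption⟩
  simp; grind

lemma card_three {F : Finset (Sym2 ℕ)} {v x y z : ℕ} (hv : ∀ e ∈ F, v ∉ e) (hxy : x ≠ y)
    (hzx : z ≠ x) (hzy : z ≠ y) :
    (insert s(v, x) (insert s(v, y) (insert s(v, z) F))).card = F.card + 3 := by
  have := notMem_of hv x
  rw [Finset.card_insert_of_notMem, card_two hv hzy.symm]
  simp only [Finset.mem_insert, not_or]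
  refine ⟨?_, ?_, by assumption⟩ <;> (simp; grind)

lemma T_two {F : Finset (Sym2 ℕ)} {V : Finset ℕ} {v a b : ℕ} (hF : ND F) (hv : ∀ e ∈ F, v ∉ e)
    (hab : a ≠ b) (hvV : v ∉ V) (ha : a ∈ V) (hb : b ∈ V) (h : T F V) :
    T (insert s(v, a) (insert s(v, b) F)) (insert v V) := by
  obtain ⟨h1, h2⟩ := h
  refine ⟨?_, by rw [card_two hv hab, Finset.card_insert_of_notMem hvV]; omega⟩
  intro X hX hX2
  rw [I_two hv hab, ← I_erase hv]
  have hs : X.erase v ⊆ V := by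
    intro x hx; have := hX (Finset.mem_of_mem_erase hx); grind
  by_cases hvX : v ∈ X
  · have hc := Finset.card_erase_add_one hvX
    by_cases h3 : 2 ≤ (X.erase v).card
    · have := h1 _ hs h3
      split_ifs <;> omega
    · rw [I_small hF (by omega)]
      have : ¬ (a ∈ X ∧ b ∈ X) := by
        rintro ⟨h4, h5⟩
        apply h3
        apply Finset.one_lt_card.2 ⟨a, by grind, b, by grind, hab⟩
      split_ifs <;> first | omega | (exfalso; tauto)
  · rw [Finset.erase_eq_of_notMem hvX] at *
    have := h1 _ hs hX2
    simp [hvX]; omega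

lemma T_three {F : Finset (Sym2 ℕ)} {V : Finset ℕ} {v x y z : ℕ} (hF : ND F)
    (hv : ∀ e ∈ F, v ∉ e) (hxy : x ≠ y) (hzx : z ≠ x) (hzy : z ≠ y) (hxyF : s(x, y) ∉ F)
    (hvV : v ∉ V) (hx : x ∈ V) (hy : y ∈ V) (hz : z ∈ V) (h : T (insert s(x, y) F) V) :
    T (insert s(v, x) (insert s(v, y) (insert s(v, z) F))) (insert v V) := by
  obtain ⟨h1, h2⟩ := h
  rw [Finset.card_insert_of_notMem hxyF] at h2
  refine ⟨?_, by rw [card_three hv hxy hzx hzy, Finset.card_insert_of_notMem hvV]; omega⟩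
  intro X hX hX2
  rw [I_three hv hxy hzx hzy, ← I_erase hv]
  have hs : X.erase v ⊆ V := by
    intro x hx; have := hX (Finset.mem_of_mem_erase hx); grind
  by_cases hvX : v ∈ X
  · have hc := Finset.card_erase_add_one hvX
    by_cases h3 : 2 ≤ (X.erase v).card
    · have h4 := h1 _ hs h3
      rw [I_insert hxyF] at h4
      have h5 : x ∈ X.erase v ↔ x ∈ X := by grind
      have h6 : y ∈ X.erase v ↔ y ∈ X := by grind
      simp only [h5, h6] at h4
      split_ifs at h4 ⊢ <;> first | omega | (exfalso; tauto)
    · rw [I_small hF (by omega)]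
      have key : ∀ a b, a ∈ V → b ∈ V → a ≠ b → ¬ (a ∈ X ∧ b ∈ X) := by
        rintro a b ha hb hab ⟨h4, h5⟩
        apply h3
        apply Finset.one_lt_card.2 ⟨a, by grind, b, by grind, hab⟩
      have k1 := key x y hx hy hxy
      have k2 := key z x hz hx hzx
      have k3 := key z y hz hy hzy
      split_ifs <;> first | omega | (exfalso; tauto)
  · rw [Finset.erase_eq_of_notMem hvX] at *
    have := h1 _ hs hX2
    have := I_mono (Finset.subset_insert s(x, y) F) X
    simp [hvX]; omega

lemma step_tight {H G : FinGraph} (h : VertexAddition H G ∨ EdgeSplit H G)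
    (hH : T H.edges H.verts) : T G.edges G.verts := by
  rcases h with ⟨v, a, b, hv, ha, hb, hab, h1, h2⟩ | ⟨v, x, y, z, hv, hx, hy, hz, hzx, hzy, he, h1, h2⟩
  · rw [h1, h2]
    exact T_two H.not_isDiag (fun e he h => hv (H.mem_verts e he v h)) hab hv ha hb hH
  · rw [h1, h2]
    have hxy : x ≠ y := by have := H.not_isDiag _ he; simpa using this
    refine T_three (fun e he => H.not_isDiag e (Finset.mem_of_mem_erase he))
      (fun e he h => hv (H.mem_verts e (Finset.mem_of_mem_erase he) v h)) hxy hzx hzy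
      (by simp) hv hx hy hz ?_
    rwa [Finset.insert_erase he]

/-- Existence of a vertex of small degree. -/
lemma exists_low {E : Finset (Sym2 ℕ)} {V : Finset ℕ} (h : E.card + 3 = 2 * V.card) :
    ∃ v ∈ V, (E.filter (fun e => v ∈ e)).card ≤ 3 := by
  by_contra! hc
  have h1 : V.card * 4 ≤ ∑ v ∈ V, (E.filter (fun e => v ∈ e)).card := by
    rw [← smul_eq_mul]
    exact Finset.card_nsmul_le_sum _ _ _ (fun v hv => hc v hv)
  have h2 : ∑ v ∈ V, (E.filter (fun e => v ∈ e)).card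
      = ∑ e ∈ E, (V.filter (fun v => v ∈ e)).card :=
    Finset.sum_card_bipartiteAbove_eq_sum_card_bipartiteBelow (fun v e => v ∈ e)
  have h3 : ∑ e ∈ E, (V.filter (fun v => v ∈ e)).card ≤ E.card * 2 := by
    rw [← smul_eq_mul]
    apply Finset.sum_le_card_nsmul
    intro e _
    induction e using Sym2.ind with
    | _ a b =>
      refine le_trans (Finset.card_le_card (t := {a, b}) ?_) Finset.card_le_two
      intro c; simp
  omega

/-- Every vertex set containing the three neighbours is not tight; so some pair is free. -/
lemma exists_pair {F : Finset (Sym2 ℕ)} {V : Finset ℕ} {x y z : ℕ} (hF : ND F) (hS : Sp F V)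
    (hxy : x ≠ y) (hzx : z ≠ x) (hzy : z ≠ y)
    (h3 : ∀ X ⊆ V, x ∈ X → y ∈ X → z ∈ X → I F X + 4 ≤ 2 * X.card)
    {A B C : Finset ℕ} (hA : A ⊆ V) (hB : B ⊆ V) (hC : C ⊆ V)
    (hxA : x ∈ A) (hyA : y ∈ A) (hyB : y ∈ B) (hzB : z ∈ B) (hxC : x ∈ C) (hzC : z ∈ C)
    (tA : 2 * A.card ≤ I F A + 3) (tB : 2 * B.card ≤ I F B + 3) (tC : 2 * C.card ≤ I F C + 3) :
    False := by
  have key : ∀ P Q : Finset ℕ, P ⊆ V → Q ⊆ V → x ∈ P ∪ Q → y ∈ P ∪ Q → z ∈ P ∪ Q →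
      2 * P.card ≤ I F P + 3 → 2 * Q.card ≤ I F Q + 3 → (P ∩ Q).card ≤ 1 := by
    intro P Q hP hQ h1 h2 h4 tP tQ
    by_contra! h5
    have := hS (P ∩ Q) (Finset.inter_subset_left.trans hP) h5
    have := h3 (P ∪ Q) (Finset.union_subset hP hQ) h1 h2 h4
    have := I_super F P Q
    have := Finset.card_union_add_card_inter P Q
    omega
  have kAB := key A B hA hB (by grind) (by grind) (by grind) tA tB
  have kAC := key A C hA hC (by grind) (by grind) (by grind) tA tC
  have kBC := key B C hB hC (by grind) (by grind) (by grind) tB tC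
  have dis : ∀ P Q : Finset ℕ, (P ∩ Q).card ≤ 1 →
      Disjoint (F.filter (fun e => e ∈ P.sym2)) (F.filter (fun e => e ∈ Q.sym2)) := by
    intro P Q h
    rw [Finset.disjoint_left]
    intro e he he'
    simp only [Finset.mem_filter, Finset.mem_sym2_iff] at he he'
    have := nd_card (hF e he.1) (X := P ∩ Q) (Finset.mem_sym2_iff.2
      (fun a ha => Finset.mem_inter.2 ⟨he.2 a ha, he'.2 a ha⟩))
    omega
  have hI : I F A + I F B + I F C ≤ I F (A ∪ B ∪ C) := by
    unfold I
    rw [← Finset.card_union_of_disjoint (dis A B kAB), ← Finset.card_union_of_disjoint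
      (Finset.disjoint_union_left.2 ⟨dis A C kAC, dis B C kBC⟩)]
    apply Finset.card_le_card
    intro e
    simp only [Finset.mem_union, Finset.mem_filter, Finset.mem_sym2_iff]
    rintro ((⟨h1, h2⟩ | ⟨h1, h2⟩) | ⟨h1, h2⟩)
    · exact ⟨h1, fun a ha => Or.inl (Or.inl (h2 a ha))⟩
    · exact ⟨h1, fun a ha => Or.inl (Or.inr (h2 a ha))⟩
    · exact ⟨h1, fun a ha => Or.inr (h2 a ha)⟩
  have hU := h3 (A ∪ B ∪ C) (Finset.union_subset (Finset.union_subset hA hB) hC)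
    (by grind) (by grind) (by grind)
  have c1 := Finset.card_union_add_card_inter A B
  have c2 := Finset.card_union_add_card_inter (A ∪ B) C
  have c3 : 1 ≤ (A ∩ B).card := Finset.card_pos.2 ⟨y, by grind⟩
  have c4 : 2 ≤ ((A ∪ B) ∩ C).card := Finset.one_lt_card.2 ⟨x, by grind, z, by grind, hzx.symm⟩
  omega

lemma free_pair {F : Finset (Sym2 ℕ)} {V : Finset ℕ} {a b : ℕ} (hF : ND F) (hab : a ≠ b)
    (ha : a ∈ V) (hb : b ∈ V)
    (h : ¬ (s(a, b) ∉ F ∧ Sp (insert s(a, b) F) V)) (hS : Sp F V) :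
    ∃ A ⊆ V, a ∈ A ∧ b ∈ A ∧ 2 * A.card ≤ I F A + 3 := by
  by_cases h1 : s(a, b) ∈ F
  · refine ⟨{a, b}, by grind, by simp, by simp, ?_⟩
    rw [Finset.card_pair hab]
    have : 0 < I F {a, b} := Finset.card_pos.2 ⟨s(a, b), by simp [h1]⟩
    omega
  · have h2 : ¬ Sp (insert s(a, b) F) V := fun h3 => h ⟨h1, h3⟩
    unfold Sp at h2
    push Not at h2
    obtain ⟨X, hX, hX2, h3⟩ := h2
    rw [I_insert h1] at h3
    have := hS X hX hX2
    refine ⟨X, hX, ?_⟩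
    split_ifs at h3 with h4
    · exact ⟨h4.1, h4.2, by omega⟩
    · omega

/-- The reduction step. -/
lemma reduce {G : FinGraph} (hT : T G.edges G.verts) (h3 : 3 ≤ G.verts.card) :
    ∃ H : FinGraph, T H.edges H.verts ∧ H.verts.card + 1 = G.verts.card ∧
      (VertexAddition H G ∨ EdgeSplit H G) := by
  obtain ⟨v, hv, hd⟩ := exists_low hT.2
  set V := G.verts.erase v with hVdef
  set F := G.edges.filter (fun e => v ∉ e) with hFdef
  have hcV : V.card + 1 = G.verts.card := Finset.card_erase_add_one hv
  have hGV : G.verts = insert v V := (Finset.insert_erase hv).symm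
  have hvV : v ∉ V := by simp [V]
  have hsum : (G.edges.filter (fun e => v ∈ e)).card + F.card = G.edges.card :=
    Finset.card_filter_add_card_filter_not _
  have hunion : G.edges = (G.edges.filter (fun e => v ∈ e)) ∪ F :=
    (Finset.filter_union_filter_not_eq _ _).symm
  have hF : ND F := fun e he => G.not_isDiag e (Finset.mem_of_mem_filter e he)
  have hvF : ∀ e ∈ F, v ∉ e := fun e he => (Finset.mem_filter.1 he).2
  have hFV : ∀ e ∈ F, ∀ u ∈ e, u ∈ V := by
    intro e he u hu
    refine Finset.mem_erase.2 ⟨fun h => hvF e he (h ▸ hu), ?_⟩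
    exact G.mem_verts e (Finset.mem_of_mem_filter e he) u hu
  have hS : Sp F V := by
    intro X hX hX2
    have := hT.1 X (hX.trans (Finset.erase_subset _ _)) hX2
    have : I F X ≤ I G.edges X := I_mono (Finset.filter_subset _ _) X
    omega
  have hFc : F.card + 3 ≤ 2 * V.card := by
    rw [← I_full hFV]; exact hS V subset_rfl (by omega)
  have hlink : ∀ e ∈ G.edges.filter (fun e => v ∈ e), ∃ w ∈ V, e = s(v, w) := by
    intro e he
    obtain ⟨he1, he2⟩ := Finset.mem_filter.1 he
    obtain ⟨w, rfl⟩ := Sym2.mem_iff_exists.1 he2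
    refine ⟨w, Finset.mem_erase.2 ⟨?_, G.mem_verts _ he1 w (by simp)⟩, rfl⟩
    have := G.not_isDiag _ he1
    rintro rfl
    simp at this
  have hTc := hT.2
  have hd2 : (G.edges.filter (fun e => v ∈ e)).card = 2 ∨
      (G.edges.filter (fun e => v ∈ e)).card = 3 := by omega
  rcases hd2 with hd2 | hd2
  · obtain ⟨e1, e2, h12, hl⟩ := Finset.card_eq_two.1 hd2
    obtain ⟨a, ha, rfl⟩ := hlink e1 (by rw [hl]; simp)
    obtain ⟨b, hb, rfl⟩ := hlink e2 (by rw [hl]; simp)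
    have hab : a ≠ b := by rintro rfl; exact h12 rfl
    refine ⟨⟨V, F, hF, hFV⟩, ⟨hS, ?_⟩, hcV, Or.inl ⟨v, a, b, hvV, ha, hb, hab, hGV, ?_⟩⟩
    · change F.card + 3 = 2 * V.card
      omega
    · change G.edges = insert s(v, a) (insert s(v, b) F)
      rw [hunion, hl]; ext e; simp
  · obtain ⟨e1, e2, e3, h12, h13, h23, hl⟩ := Finset.card_eq_three.1 hd2
    obtain ⟨x, hx, rfl⟩ := hlink e1 (by rw [hl]; simp)
    obtain ⟨y, hy, rfl⟩ := hlink e2 (by rw [hl]; simp)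
    obtain ⟨z, hz, rfl⟩ := hlink e3 (by rw [hl]; simp)
    have hxy : x ≠ y := by rintro rfl; exact h12 rfl
    have hzx : z ≠ x := by rintro rfl; exact h13 rfl
    have hzy : z ≠ y := by rintro rfl; exact h23 rfl
    have hGE : G.edges = insert s(v, x) (insert s(v, y) (insert s(v, z) F)) := by
      conv_lhs => rw [hunion, hl]
      ext e; simp
    have hN : ∀ X ⊆ V, x ∈ X → y ∈ X → z ∈ X → I F X + 4 ≤ 2 * X.card := by
      intro X hX hxX hyX hzX
      have hvX : v ∉ X := fun h => hvV (hX h)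
      have h5 := hT.1 (insert v X) (by rw [hGV]; exact Finset.insert_subset_insert _ hX) (by
        rw [Finset.card_insert_of_notMem hvX]
        have := Finset.card_pos.2 ⟨x, hxX⟩
        omega)
      rw [hGE, I_three hvF hxy hzx hzy, ← I_erase hvF, Finset.erase_insert hvX,
        Finset.card_insert_of_notMem hvX] at h5
      simp [hxX, hyX, hzX] at h5
      omega
    have fin : ∀ a b c : ℕ, a ∈ V → b ∈ V → c ∈ V → a ≠ b → c ≠ a → c ≠ b →
        G.edges = insert s(v, a) (insert s(v, b) (insert s(v, c) F)) →
        (s(a, b) ∉ F ∧ Sp (insert s(a, b) F) V) →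
        ∃ H : FinGraph, T H.edges H.verts ∧ H.verts.card + 1 = G.verts.card ∧
          (VertexAddition H G ∨ EdgeSplit H G) := by
      intro a b c ha hb hc hab hca hcb hE ⟨hn, hsp⟩
      refine ⟨⟨V, insert s(a, b) F, ?_, ?_⟩, ⟨hsp, ?_⟩, hcV,
        Or.inr ⟨v, a, b, c, hvV, ha, hb, hc, hca, hcb, Finset.mem_insert_self _ _, hGV, ?_⟩⟩
      · intro e he
        rcases Finset.mem_insert.1 he with rfl | he
        · simpa using hab
        · exact hF e he
      · intro e he
        rcases Finset.mem_insert.1 he with rfl | he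
        · intro u hu
          rcases Sym2.mem_iff.1 hu with rfl | rfl <;> assumption
        · exact hFV e he
      · change (insert s(a, b) F).card + 3 = 2 * V.card
        rw [Finset.card_insert_of_notMem hn]
        omega
      · change G.edges = insert s(v, a) (insert s(v, b) (insert s(v, c)
          ((insert s(a, b) F).erase s(a, b))))
        rw [Finset.erase_insert hn]
        exact hE
    by_cases p1 : s(x, y) ∉ F ∧ Sp (insert s(x, y) F) V
    · exact fin x y z hx hy hz hxy hzx hzy hGE p1
    by_cases p2 : s(y, z) ∉ F ∧ Sp (insert s(y, z) F) V
    · refine fin y z x hy hz hx hzy.symm hxy hzx.symm ?_ p2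
      rw [hGE]; ext e; simp only [Finset.mem_insert]; tauto
    by_cases p3 : s(x, z) ∉ F ∧ Sp (insert s(x, z) F) V
    · refine fin x z y hx hz hy hzx.symm hxy.symm hzy.symm ?_ p3
      rw [hGE]; ext e; simp only [Finset.mem_insert]; tauto
    exfalso
    obtain ⟨A, hA, a1, a2, a3⟩ := free_pair hF hxy hx hy p1 hS
    obtain ⟨B, hB, b1, b2, b3⟩ := free_pair hF hzy.symm hy hz p2 hS
    obtain ⟨C, hC, c1, c2, c3⟩ := free_pair hF hzx.symm hx hz p3 hS
    exact exists_pair hF hS hxy hzx hzy hN hA hB hC a1 a2 b1 b2 c1 c2 a3 b3 c3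

lemma K2_of {G : FinGraph} (hT : T G.edges G.verts) (h2 : G.verts.card = 2) : IsK2 G := by
  obtain ⟨a, b, hab, hV⟩ := Finset.card_eq_two.1 h2
  refine ⟨a, b, hab, hV, ?_⟩
  have hc := hT.2
  have h1 : G.edges.card = 1 := by omega
  obtain ⟨e, he⟩ := Finset.card_eq_one.1 h1
  have hm : e ∈ G.edges := by rw [he]; simp
  have hd := G.not_isDiag e hm
  have hv := G.mem_verts e hm
  rw [he]
  congr 1
  induction e using Sym2.ind with
  | _ c d =>
    have hc := hv c (by simp)
    have hd' := hv d (by simp)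
    rw [hV] at hc hd'
    simp at hc hd' hd ⊢
    grind

lemma main_rev (n : ℕ) : ∀ G : FinGraph, T G.edges G.verts → G.verts.card = n + 2 →
    ∃ G₀ : FinGraph, IsK2 G₀ ∧
      Relation.ReflTransGen (fun H H' => VertexAddition H H' ∨ EdgeSplit H H') G₀ G := by
  induction n with
  | zero => exact fun G hT hc => ⟨G, K2_of hT (by omega), Relation.ReflTransGen.refl⟩
  | succ n ih =>
    intro G hT hc
    obtain ⟨H, hH, hc', hs⟩ := reduce hT (by omega)
    obtain ⟨G₀, h0, hr⟩ := ih H hH (by omega)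
    exact ⟨G₀, h0, hr.tail hs⟩

lemma main_fwd {G₀ G : FinGraph} (h0 : IsK2 G₀)
    (hr : Relation.ReflTransGen (fun H H' => VertexAddition H H' ∨ EdgeSplit H H') G₀ G) :
    T G.edges G.verts := by
  obtain ⟨a, b, hab, h1, h2⟩ := h0
  induction hr with
  | refl => rw [h1, h2]; exact T_K2 hab
  | tail _ hs ih => exact step_tight hs ih

end HL

/-- **Henneberg–Laman.** A simple graph with at least two vertices is (2,3)-tight if and only
if it can be derived from `K₂` by a finite sequence of vertex additions and edge splits. -/
theorem statement_1 (G : FinGraph) (hV : 2 ≤ G.verts.card) :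
    Tight23 G ↔
      ∃ G₀ : FinGraph, IsK2 G₀ ∧
        Relation.ReflTransGen (fun H H' => VertexAddition H H' ∨ EdgeSplit H H') G₀ G := by

  rw [HL.tight_iff]
  constructor
  · intro hT
    exact HL.main_rev (G.verts.card - 2) G hT (by omega)
  · rintro ⟨G₀, h0, hr⟩
    exact HL.main_fwd h0 hr
end

section
/- Berg–Jordán reduction lemma: let G be a 3-vertex-connected (2,3)-circuit with at least five vertices. Then G has a vertex v of degree 3 with neighbours x,y,z such that the graph obtained from G by deleting v (and its three incident edges) and adding one new edge between two of x,y,z is again a (2,3)-circuit. -/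
open Finset

/-- `G` is a (2,3)-circuit: `|E| = 2|V| − 2` and every proper subgraph with at least one edge
satisfies `|E'| ≤ 2|V'| − 3`. -/
def Circuit23 (G : FinGraph) : Prop :=
  (G.edges.card : ℤ) = 2 * G.verts.card - 2 ∧
  ∀ V' E', SubgraphPair G V' E' → (V' ≠ G.verts ∨ E' ≠ G.edges) → E'.Nonempty →
    (E'.card : ℤ) ≤ 2 * V'.card - 3

/-- The graph obtained from `G` by deleting the vertex set `S` is connected: any two
remaining vertices are joined by a walk avoiding `S`. -/
def ConnectedOff (G : FinGraph) (S : Finset ℕ) : Prop :=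
  ∀ a ∈ G.verts, a ∉ S → ∀ b ∈ G.verts, b ∉ S →
    Relation.ReflTransGen (fun x y => G.Adj x y ∧ x ∉ S ∧ y ∉ S) a b

/-- `G` is 3-vertex-connected: it has more than 3 vertices and remains connected after
deleting any set of fewer than 3 vertices. -/
def ThreeConnected (G : FinGraph) : Prop :=
  3 < G.verts.card ∧ ∀ S : Finset ℕ, S.card < 3 → ConnectedOff G S


namespace BJ

/-- Number of edges induced by `X`. -/
def ii (G : FinGraph) (X : Finset ℕ) : ℕ := (G.edges ∩ X.sym2).card

/-- Number of neighbours of `t` in `X`. -/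
def dd (G : FinGraph) (t : ℕ) (X : Finset ℕ) : ℕ :=
  (X.filter (fun u => s(t, u) ∈ G.edges)).card

/-- Critical sets. -/
def Crit (G : FinGraph) (X : Finset ℕ) : Prop :=
  X ⊆ G.verts ∧ X ≠ G.verts ∧ 2 ≤ X.card ∧ ii G X + 3 = 2 * X.card

/-- `t` is a node with neighbours `a, b, c`. -/
def Nd (G : FinGraph) (t a b c : ℕ) : Prop :=
  a ≠ b ∧ a ≠ c ∧ b ≠ c ∧ s(t, a) ∈ G.edges ∧ s(t, b) ∈ G.edges ∧ s(t, c) ∈ G.edges ∧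
    ∀ w, s(t, w) ∈ G.edges → w = a ∨ w = b ∨ w = c

variable {G : FinGraph}

theorem Nd.swap12 {t a b c : ℕ} (h : Nd G t a b c) : Nd G t b a c := by
  obtain ⟨h1, h2, h3, h4, h5, h6, h7⟩ := h
  refine ⟨h1.symm, h3, h2, h5, h4, h6, fun w hw => ?_⟩
  have := h7 w hw
  tauto

theorem Nd.swap23 {t a b c : ℕ} (h : Nd G t a b c) : Nd G t a c b := by
  obtain ⟨h1, h2, h3, h4, h5, h6, h7⟩ := h
  refine ⟨h2, h1, h3.symm, h4, h6, h5, fun w hw => ?_⟩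
  have := h7 w hw
  tauto

theorem edge_ne {p q : ℕ} (h : s(p, q) ∈ G.edges) : p ≠ q := by
  have := G.not_isDiag _ h
  simpa using this

theorem edge_left {p q : ℕ} (h : s(p, q) ∈ G.edges) : p ∈ G.verts :=
  G.mem_verts _ h p (by simp)

theorem edge_right {p q : ℕ} (h : s(p, q) ∈ G.edges) : q ∈ G.verts :=
  G.mem_verts _ h q (by simp)

theorem edge_symm {p q : ℕ} (h : s(p, q) ∈ G.edges) : s(q, p) ∈ G.edges := by
  rwa [Sym2.eq_swap]

theorem ii_insert {t : ℕ} {X : Finset ℕ} (ht : t ∉ X) :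
    ii G (insert t X) = ii G X + dd G t X := by
  have h : G.edges ∩ (insert t X).sym2 = (G.edges ∩ X.sym2) ∪
      (X.filter (fun u => s(t, u) ∈ G.edges)).image (fun u => s(t, u)) := by
    ext e
    induction e using Sym2.ind with
    | _ p q =>
      simp only [mem_inter, mem_union, mem_image, mem_filter, Finset.mk_mem_sym2_iff, mem_insert]
      constructor
      · rintro ⟨he, hp, hq⟩
        rcases hp with rfl | hp
        · rcases hq with rfl | hq
          · exact absurd rfl (edge_ne he)
          · exact Or.inr ⟨q, ⟨hq, he⟩, rfl⟩
        · rcases hq with rfl | hq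
          · exact Or.inr ⟨p, ⟨hp, edge_symm he⟩, Sym2.eq_swap⟩
          · exact Or.inl ⟨he, hp, hq⟩
      · rintro (⟨he, hp, hq⟩ | ⟨u, ⟨hu, he⟩, h⟩)
        · exact ⟨he, Or.inr hp, Or.inr hq⟩
        · rw [← h]
          refine ⟨he, ?_⟩
          rcases Sym2.eq_iff.1 h with ⟨rfl, rfl⟩ | ⟨rfl, rfl⟩
          · exact ⟨Or.inl rfl, Or.inr hu⟩
          · exact ⟨Or.inr hu, Or.inl rfl⟩
  unfold ii dd
  rw [h, card_union_of_disjoint, card_image_of_injective]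
  · intro u v huv
    exact Sym2.congr_right.1 huv
  · rw [Finset.disjoint_left]
    intro e he he2
    simp only [mem_image, mem_filter] at he2
    obtain ⟨u, -, rfl⟩ := he2
    simp only [mem_inter, Finset.mk_mem_sym2_iff] at he
    exact ht he.2.1

theorem ii_super_aux (A B : Finset ℕ) (F : Finset (Sym2 ℕ)) (hF : F ⊆ G.edges ∩ (A ∪ B).sym2)
    (hF2 : ∀ e ∈ F, e ∉ A.sym2 ∧ e ∉ B.sym2) :
    ii G A + ii G B + F.card ≤ ii G (A ∩ B) + ii G (A ∪ B) := by
  unfold ii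
  have h1 := card_union_add_card_inter (G.edges ∩ A.sym2) (G.edges ∩ B.sym2)
  have h2 : (G.edges ∩ A.sym2) ∩ (G.edges ∩ B.sym2) = G.edges ∩ (A ∩ B).sym2 := by
    ext e
    simp only [mem_inter, Finset.mem_sym2_iff]
    constructor
    · rintro ⟨⟨h, h1⟩, _, h2⟩
      exact ⟨h, fun a ha => ⟨h1 a ha, h2 a ha⟩⟩
    · rintro ⟨h, h1⟩
      exact ⟨⟨h, fun a ha => (h1 a ha).1⟩, h, fun a ha => (h1 a ha).2⟩
  have h3 : ((G.edges ∩ A.sym2) ∪ (G.edges ∩ B.sym2)) ∪ F ⊆ G.edges ∩ (A ∪ B).sym2 := by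
    refine union_subset (union_subset ?_ ?_) hF
    · exact inter_subset_inter_left (Finset.sym2_mono subset_union_left)
    · exact inter_subset_inter_left (Finset.sym2_mono subset_union_right)
  have h4 := card_le_card h3
  rw [card_union_of_disjoint] at h4
  · rw [h2] at h1
    omega
  · rw [Finset.disjoint_left]
    intro e he he2
    have := hF2 e he2
    simp only [mem_union, mem_inter] at he
    tauto

theorem ii_super (A B : Finset ℕ) :
    ii G A + ii G B ≤ ii G (A ∩ B) + ii G (A ∪ B) := by
  have := ii_super_aux (G := G) A B ∅ (by simp) (by simp)
  simpa using this

theorem ii_super_edge {A B : Finset ℕ} {p q : ℕ} (hp : p ∈ A) (hp' : p ∉ B) (hq : q ∈ B)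
    (hq' : q ∉ A) (he : s(p, q) ∈ G.edges) :
    ii G A + ii G B + 1 ≤ ii G (A ∩ B) + ii G (A ∪ B) := by
  have := ii_super_aux (G := G) A B {s(p, q)} (by simp [he, hp, hq]) (by simp [hp', hq'])
  simpa using this

theorem ii_verts : ii G G.verts = G.edges.card := by
  unfold ii
  congr 1
  rw [inter_eq_left]
  intro e he
  rw [Finset.mem_sym2_iff]
  exact G.mem_verts e he

theorem dd_insert {s : ℕ} {t : ℕ} {X : Finset ℕ} (ht : t ∉ X) :
    dd G s (insert t X) = dd G s X + if s(s, t) ∈ G.edges then 1 else 0 := by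
  unfold dd
  rw [filter_insert]
  split_ifs with h
  · rw [card_insert_of_notMem (by simp [ht])]
  · simp

theorem dd_self {t : ℕ} {X : Finset ℕ} (ht : t ∉ X) : dd G t (insert t X) = dd G t X := by
  rw [dd_insert ht, if_neg]
  · rfl
  · intro h
    exact edge_ne h rfl

theorem dd_mono {t : ℕ} {X Y : Finset ℕ} (h : X ⊆ Y) : dd G t X ≤ dd G t Y :=
  card_le_card (filter_subset_filter _ h)

theorem dd_union {t : ℕ} {X Y : Finset ℕ} (h : Disjoint X Y) :
    dd G t (X ∪ Y) = dd G t X + dd G t Y := by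
  unfold dd
  rw [filter_union, card_union_of_disjoint]
  exact disjoint_filter_filter h

theorem ii_empty : ii G ∅ = 0 := by simp [ii]

theorem ii_union (A B : Finset ℕ) (h : Disjoint A B) :
    ii G (A ∪ B) = ii G A + ii G B + ∑ b ∈ B, dd G b A := by
  induction B using Finset.induction_on with
  | empty => simp [ii_empty]
  | insert t B ht ih =>
    rw [disjoint_insert_right] at h
    rw [union_insert, ii_insert (by simp [h.1, ht]), ih h.2, ii_insert ht, sum_insert ht,
      dd_union h.2]
    omega

theorem handshake (X : Finset ℕ) : ∑ x ∈ X, dd G x X = 2 * ii G X := by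
  induction X using Finset.induction_on with
  | empty => simp [ii_empty]
  | insert t X ht ih =>
    rw [sum_insert ht, dd_self ht, ii_insert ht]
    have h1 : ∑ x ∈ X, dd G x (insert t X) = ∑ x ∈ X, (dd G x X +
      if s(t, x) ∈ G.edges then 1 else 0) := by
      refine sum_congr rfl fun x _ => ?_
      rw [dd_insert ht, Sym2.eq_swap]
    rw [h1, sum_add_distrib, ih]
    have h2 : (∑ x ∈ X, if s(t, x) ∈ G.edges then 1 else 0) = dd G t X := by
      unfold dd
      rw [card_filter]
    rw [h2]
    omega

/-- degree sum of the complement -/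
theorem degsum {W : Finset ℕ} (hW : W ⊆ G.verts) :
    ii G W + ∑ y ∈ G.verts \ W, dd G y G.verts = G.edges.card + ii G (G.verts \ W) := by
  have h1 := ii_union (G := G) W (G.verts \ W) disjoint_sdiff
  rw [union_sdiff_of_subset hW, ii_verts] at h1
  have h2 := handshake (G := G) (G.verts \ W)
  have h3 : ∑ y ∈ G.verts \ W, dd G y G.verts =
      ∑ y ∈ G.verts \ W, (dd G y W + dd G y (G.verts \ W)) := by
    refine sum_congr rfl fun y _ => ?_
    rw [← dd_union disjoint_sdiff, union_sdiff_of_subset hW]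
  rw [h3, sum_add_distrib]
  omega

theorem card_E (hG : Circuit23 G) : G.edges.card + 2 = 2 * G.verts.card := by
  have := hG.1
  omega

theorem ii_le (hG : Circuit23 G) {X : Finset ℕ} (hX : X ⊆ G.verts) (hne : X ≠ G.verts)
    (h2 : 2 ≤ X.card) : ii G X + 3 ≤ 2 * X.card := by
  rcases (G.edges ∩ X.sym2).eq_empty_or_nonempty with h | h
  · have : ii G X = 0 := by simp [ii, h]
    omega
  · have := hG.2 X (G.edges ∩ X.sym2) ⟨hX, inter_subset_left, fun e he v hv => by
      simp only [mem_inter, Finset.mem_sym2_iff] at he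
      exact he.2 v hv⟩ (Or.inl hne) h
    unfold ii
    omega

theorem crit_union (hG : Circuit23 G) {A B : Finset ℕ} (hA : Crit G A) (hB : Crit G B)
    (h2 : 2 ≤ (A ∩ B).card) {t : ℕ} (ht : t ∈ G.verts) (htA : t ∉ A) (htB : t ∉ B) :
    Crit G (A ∪ B) ∧ ∀ p ∈ A, p ∉ B → ∀ q ∈ B, q ∉ A → s(p, q) ∉ G.edges := by
  obtain ⟨a1, a2, a3, a4⟩ := hA
  obtain ⟨b1, b2, b3, b4⟩ := hB
  have hne : A ∪ B ≠ G.verts := by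
    intro h
    rw [← h] at ht
    simp [htA, htB] at ht
  have hne' : A ∩ B ≠ G.verts := by
    intro h
    rw [← h] at ht
    simp [htA] at ht
  have hc := card_union_add_card_inter A B
  have hu : 2 ≤ (A ∪ B).card := a3.trans (card_le_card subset_union_left)
  have l1 := ii_le hG (union_subset a1 b1) hne hu
  have l2 := ii_le hG (inter_subset_left.trans a1) hne' h2
  refine ⟨⟨union_subset a1 b1, hne, hu, ?_⟩, ?_⟩
  · have := ii_super (G := G) A B
    omega
  · intro p hp hp' q hq hq' he
    have := ii_super_edge hp hp' hq hq' he
    omega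

theorem Nd.dd_three {t a b c : ℕ} (h : Nd G t a b c) {X : Finset ℕ} (ha : a ∈ X) (hb : b ∈ X)
    (hc : c ∈ X) : dd G t X = 3 := by
  obtain ⟨h1, h2, h3, h4, h5, h6, h7⟩ := h
  unfold dd
  rw [Finset.card_eq_three]
  refine ⟨a, b, c, h1, h2, h3, ?_⟩
  ext w
  simp only [mem_filter, mem_insert, mem_singleton]
  constructor
  · exact fun h => h7 w h.2
  · rintro (rfl | rfl | rfl) <;> tauto

theorem Nd.mem {t a b c : ℕ} (h : Nd G t a b c) :
    t ∈ G.verts ∧ a ∈ G.verts ∧ b ∈ G.verts ∧ c ∈ G.verts :=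
  ⟨edge_left h.2.2.2.1, edge_right h.2.2.2.1, edge_right h.2.2.2.2.1, edge_right h.2.2.2.2.2.1⟩

theorem Nd.deg {t a b c : ℕ} (h : Nd G t a b c) : dd G t G.verts = 3 :=
  h.dd_three h.mem.2.1 h.mem.2.2.1 h.mem.2.2.2

theorem exists_Nd {t : ℕ} (h : dd G t G.verts = 3) : ∃ a b c, Nd G t a b c := by
  unfold dd at h
  rw [Finset.card_eq_three] at h
  obtain ⟨a, b, c, h1, h2, h3, h4⟩ := h
  have key : ∀ w, s(t, w) ∈ G.edges ↔ w = a ∨ w = b ∨ w = c := by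
    intro w
    have : w ∈ G.verts.filter (fun u => s(t, u) ∈ G.edges) ↔ w ∈ ({a, b, c} : Finset ℕ) := by
      rw [h4]
    simp only [mem_filter, mem_insert, mem_singleton] at this
    rw [← this]
    exact ⟨fun h => ⟨edge_right h, h⟩, fun h => h.2⟩
  exact ⟨a, b, c, h1, h2, h3, (key a).2 (by simp), (key b).2 (by simp), (key c).2 (by simp),
    fun w => (key w).1⟩

/-- A critical set absorbing a vertex with three neighbours is everything. -/
theorem absorb3 (hG : Circuit23 G) {X : Finset ℕ} (hX : Crit G X) {t : ℕ} (ht : t ∈ G.verts)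
    (htX : t ∉ X) (h : 3 ≤ dd G t X) : insert t X = G.verts := by
  by_contra hne
  obtain ⟨a1, a2, a3, a4⟩ := hX
  have := ii_le hG (insert_subset ht a1) hne (by rw [card_insert_of_notMem htX]; omega)
  rw [ii_insert htX, card_insert_of_notMem htX] at this
  omega

theorem absorb2 {X : Finset ℕ} (hX : Crit G X) {t : ℕ} (ht : t ∈ G.verts)
    (htX : t ∉ X) (h : dd G t X = 2) (hne : insert t X ≠ G.verts) : Crit G (insert t X) := by
  obtain ⟨a1, a2, a3, a4⟩ := hX
  refine ⟨insert_subset ht a1, hne, ?_, ?_⟩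
  · rw [card_insert_of_notMem htX]; omega
  · rw [ii_insert htX, card_insert_of_notMem htX]; omega

theorem crit_deg (hG : Circuit23 G) {X : Finset ℕ} (hX : Crit G X) (h3 : 3 ≤ X.card) {x : ℕ}
    (hx : x ∈ X) : 2 ≤ dd G x X := by
  obtain ⟨a1, a2, a3, a4⟩ := hX
  have hc := card_erase_of_mem hx
  have hx' : x ∉ X.erase x := by simp
  have hi := insert_erase hx
  have h1 := ii_insert (G := G) hx'
  have h2 := dd_self (G := G) hx'
  rw [hi] at h1 h2
  have h4 : X.erase x ≠ G.verts := by
    intro h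
    apply hx'
    rw [h]
    exact a1 hx
  have := ii_le hG ((erase_subset _ _).trans a1) h4 (by omega)
  omega

theorem crit_nbr (hG : Circuit23 G) {X : Finset ℕ} (hX : Crit G X) (h3 : 3 ≤ X.card)
    {p t q r : ℕ} (hp : p ∈ X) (hN : Nd G p t q r) (ht : t ∉ X) : q ∈ X ∧ r ∈ X := by
  have h := crit_deg hG hX h3 hp
  unfold dd at h
  have hsub : X.filter (fun u => s(p, u) ∈ G.edges) ⊆ ({q, r} : Finset ℕ) := by
    intro w hw
    simp only [mem_filter] at hw
    have := hN.2.2.2.2.2.2 w hw.2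
    simp only [mem_insert, mem_singleton]
    rcases this with rfl | h | h
    · exact absurd hw.1 ht
    · exact Or.inl h
    · exact Or.inr h
  have heq := eq_of_subset_of_card_le hsub ((card_le_two).trans h)
  have hq : q ∈ X.filter (fun u => s(p, u) ∈ G.edges) := by rw [heq]; simp
  have hr : r ∈ X.filter (fun u => s(p, u) ∈ G.edges) := by rw [heq]; simp
  exact ⟨(mem_filter.1 hq).1, (mem_filter.1 hr).1⟩

theorem deg_ge (hG : Circuit23 G) (hV : 5 ≤ G.verts.card) {x : ℕ} (hx : x ∈ G.verts) :
    3 ≤ dd G x G.verts := by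
  have hc := card_erase_of_mem hx
  have hx' : x ∉ G.verts.erase x := by simp
  have hi := insert_erase hx
  have h1 := ii_insert (G := G) hx'
  have h2 := dd_self (G := G) hx'
  rw [hi] at h1 h2
  have h4 : G.verts.erase x ≠ G.verts := by
    intro h
    apply hx'
    rw [h]
    exact hx
  have := ii_le hG (erase_subset _ _) h4 (by omega)
  have := card_E hG
  rw [ii_verts] at h1
  omega

theorem sep (h3 : ThreeConnected G) (S A : Finset ℕ) (hS : S.card < 3) {x y : ℕ}
    (hx : x ∈ G.verts) (hxS : x ∉ S) (hxA : x ∈ A) (hy : y ∈ G.verts) (hyS : y ∉ S) (hyA : y ∉ A)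
    (h : ∀ p ∈ A, p ∉ S → ∀ q, q ∉ S → s(p, q) ∈ G.edges → q ∈ A) : False := by
  have := h3.2 S hS x hx hxS y hy hyS
  have key : ∀ z, Relation.ReflTransGen (fun x y => G.Adj x y ∧ x ∉ S ∧ y ∉ S) x z → z ∈ A := by
    intro z hz
    induction hz with
    | refl => exact hxA
    | tail _ hbc ih => exact h _ ih hbc.2.1 _ hbc.2.2 hbc.1
  exact hyA (key y this)

/-- The standing assumption: no admissible splitting. -/
def NoAdm (G : FinGraph) : Prop := ∀ t a b c, Nd G t a b c →
  ∃ X, Crit G X ∧ a ∈ X ∧ b ∈ X ∧ c ∉ X ∧ t ∉ X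

theorem two_le_of_mem {X : Finset ℕ} {p q : ℕ} (hp : p ∈ X) (hq : q ∈ X) (h : p ≠ q) :
    2 ≤ X.card := by
  have : 1 < X.card := Finset.one_lt_card.2 ⟨p, hp, q, hq, h⟩
  omega

theorem eq_pair {X : Finset ℕ} {p q : ℕ} (hp : p ∈ X) (hq : q ∈ X) (h : p ≠ q)
    (hc : X.card ≤ 2) : X = {p, q} := by
  symm
  apply eq_of_subset_of_card_le
  · intro w hw
    simp only [mem_insert, mem_singleton] at hw
    rcases hw with rfl | rfl <;> assumption
  · rw [card_pair h]
    exact hc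

theorem crit_pair {X : Finset ℕ} {p q : ℕ} (hX : Crit G X) (hp : p ∈ X) (hq : q ∈ X) (h : p ≠ q)
    (hc : X.card ≤ 2) : s(p, q) ∈ G.edges := by
  have h1 := eq_pair hp hq h hc
  obtain ⟨a1, a2, a3, a4⟩ := hX
  have : (G.edges ∩ X.sym2).Nonempty := by
    rw [← card_pos]
    unfold ii at a4
    omega
  obtain ⟨e, he⟩ := this
  induction e using Sym2.ind with
  | _ u v =>
    simp only [mem_inter, Finset.mk_mem_sym2_iff, h1, mem_insert, mem_singleton] at he
    obtain ⟨he, hu, hv⟩ := he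
    rcases hu with rfl | rfl <;> rcases hv with rfl | rfl
    · exact absurd rfl (edge_ne he)
    · exact he
    · exact edge_symm he
    · exact absurd rfl (edge_ne he)

theorem inter_eq_single {A B : Finset ℕ} {c : ℕ} (hA : c ∈ A) (hB : c ∈ B)
    (h : ¬ 2 ≤ (A ∩ B).card) : A ∩ B = {c} := by
  symm
  apply eq_of_subset_of_card_le
  · simp [hA, hB]
  · rw [card_singleton]
    omega

/-- One of the three critical sets is large, and its two attachments separate. -/
theorem triple_aux (h3 : ThreeConnected G) {t a b c : ℕ}
    (hN : Nd G t a b c) {A B C : Finset ℕ} (hA : Crit G A)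
    (hAa : a ∉ A) (hAt : t ∉ A)
    (hAB : A ∩ B = {c}) (hAC : A ∩ C = {b})
    (hE : ∀ p q, s(p, q) ∈ G.edges → p ≠ t → q ≠ t →
      (p ∈ A ∧ q ∈ A) ∨ (p ∈ B ∧ q ∈ B) ∨ (p ∈ C ∧ q ∈ C)) (h : 3 ≤ A.card) : False := by
  have : ∃ x ∈ A, x ∉ ({b, c} : Finset ℕ) := by
    by_contra hcon
    push Not at hcon
    have := card_le_card (show A ⊆ {b, c} from hcon)
    have := card_le_two (a := b) (b := c)
    omega
  obtain ⟨x, hx, hxS⟩ := this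
  refine sep h3 {b, c} A (lt_of_le_of_lt card_le_two (by norm_num)) (hA.1 hx) hxS hx
    hN.mem.2.1 ?_ hAa ?_
  · simp only [mem_insert, mem_singleton, not_or]
    exact ⟨hN.1, hN.2.1⟩
  · intro p hp hpS q hqS he
    simp only [mem_insert, mem_singleton, not_or] at hpS hqS
    have hpt : p ≠ t := fun h => hAt (h ▸ hp)
    have hqt : q ≠ t := by
      rintro rfl
      rcases hN.2.2.2.2.2.2 p (edge_symm he) with rfl | rfl | rfl
      · exact hAa hp
      · exact hpS.1 rfl
      · exact hpS.2 rfl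
    rcases hE p q he hpt hqt with h | h | h
    · exact h.2
    · have : p ∈ A ∩ B := mem_inter.2 ⟨hp, h.1⟩
      rw [hAB, mem_singleton] at this
      exact absurd this hpS.2
    · have : p ∈ A ∩ C := mem_inter.2 ⟨hp, h.1⟩
      rw [hAC, mem_singleton] at this
      exact absurd this hpS.1

theorem triple (h3 : ThreeConnected G) (hG : Circuit23 G) (hV : 5 ≤ G.verts.card) {t a b c : ℕ}
    (hN : Nd G t a b c) {A B C : Finset ℕ} (hA : Crit G A) (hB : Crit G B) (hC : Crit G C)
    (hAa : a ∉ A) (hAb : b ∈ A) (hAc : c ∈ A) (hAt : t ∉ A)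
    (hBa : a ∈ B) (hBb : b ∉ B) (hBc : c ∈ B) (hBt : t ∉ B)
    (hCa : a ∈ C) (hCb : b ∈ C) (hCc : c ∉ C) (hCt : t ∉ C) :
    2 ≤ (A ∩ B).card ∨ 2 ≤ (A ∩ C).card ∨ 2 ≤ (B ∩ C).card := by
  by_contra hcon
  push Not at hcon
  obtain ⟨n1, n2, n3⟩ := hcon
  have e1 := inter_eq_single hAc hBc (by omega)
  have e2 := inter_eq_single hAb hCb (by omega)
  have e3 := inter_eq_single hBa hCa (by omega)
  obtain ⟨t1, ta, tb, tc⟩ := hN.mem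
  have cAB := card_union_add_card_inter A B
  have hABC : (A ∪ B) ∩ C = {a, b} := by
    rw [union_inter_distrib_right, e2, e3]
    ext w
    simp only [mem_union, mem_singleton, mem_insert]
    tauto
  have cABC := card_union_add_card_inter (A ∪ B) C
  rw [hABC, card_pair hN.1] at cABC
  rw [e1, card_singleton] at cAB
  have hsub : (G.edges ∩ A.sym2) ∪ (G.edges ∩ B.sym2) ∪ (G.edges ∩ C.sym2) ⊆
      G.edges ∩ (A ∪ B ∪ C).sym2 := by
    refine union_subset (union_subset ?_ ?_) ?_
    · exact inter_subset_inter_left (Finset.sym2_mono (subset_union_left.trans subset_union_left))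
    · exact inter_subset_inter_left (Finset.sym2_mono (subset_union_right.trans subset_union_left))
    · exact inter_subset_inter_left (Finset.sym2_mono subset_union_right)
  have dj : ∀ (P Q : Finset ℕ) (w : ℕ), P ∩ Q = {w} →
      Disjoint (G.edges ∩ P.sym2) (G.edges ∩ Q.sym2) := by
    intro P Q w h
    rw [Finset.disjoint_left]
    intro e h1 h2
    induction e using Sym2.ind with
    | _ u v =>
      simp only [mem_inter, Finset.mk_mem_sym2_iff] at h1 h2
      have hu : u ∈ P ∩ Q := mem_inter.2 ⟨h1.2.1, h2.2.1⟩
      have hv : v ∈ P ∩ Q := mem_inter.2 ⟨h1.2.2, h2.2.2⟩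
      rw [h, mem_singleton] at hu hv
      exact edge_ne h1.1 (hu.trans hv.symm)
  have hcard : ((G.edges ∩ A.sym2) ∪ (G.edges ∩ B.sym2) ∪ (G.edges ∩ C.sym2)).card =
      ii G A + ii G B + ii G C := by
    rw [card_union_of_disjoint, card_union_of_disjoint (dj A B c e1)]
    · rfl
    · rw [disjoint_union_left]
      exact ⟨dj A C b e2, dj B C a e3⟩
  have hU : A ∪ B ∪ C ⊆ G.verts := union_subset (union_subset hA.1 hB.1) hC.1
  have htU : t ∉ A ∪ B ∪ C := by simp [hAt, hBt, hCt]
  have hne : A ∪ B ∪ C ≠ G.verts := fun h => htU (h ▸ t1)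
  have hU2 : 2 ≤ (A ∪ B ∪ C).card := two_le_of_mem (p := a) (q := b) (by simp [hBa]) (by simp [hAb]) hN.1
  have hle := ii_le hG hU hne hU2
  have hge := card_le_card hsub
  rw [hcard] at hge
  have a4 := hA.2.2.2
  have b4 := hB.2.2.2
  have c4 := hC.2.2.2
  have hUc : Crit G (A ∪ B ∪ C) := ⟨hU, hne, hU2, by unfold ii at *; omega⟩
  have heq := eq_of_subset_of_card_le hsub (by
    rw [hcard]
    unfold ii at *
    omega)
  have hall := absorb3 hG hUc t1 htU (by
    rw [hN.dd_three (by simp [hBa]) (by simp [hAb]) (by simp [hAc])])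
  have hE : ∀ p q, s(p, q) ∈ G.edges → p ≠ t → q ≠ t →
      (p ∈ A ∧ q ∈ A) ∨ (p ∈ B ∧ q ∈ B) ∨ (p ∈ C ∧ q ∈ C) := by
    intro p q he hp hq
    have hp1 : p ∈ A ∪ B ∪ C := by
      have := edge_left he
      rw [← hall, mem_insert] at this
      tauto
    have hq1 : q ∈ A ∪ B ∪ C := by
      have := edge_right he
      rw [← hall, mem_insert] at this
      tauto
    have : s(p, q) ∈ G.edges ∩ (A ∪ B ∪ C).sym2 := by
      rw [mem_inter, Finset.mk_mem_sym2_iff]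
      exact ⟨he, hp1, hq1⟩
    rw [← heq] at this
    simp only [mem_union, mem_inter, Finset.mk_mem_sym2_iff] at this
    tauto
  have hnc : G.verts.card = (A ∪ B ∪ C).card + 1 := by
    rw [← hall, card_insert_of_notMem htU]
  have big : 3 ≤ A.card ∨ 3 ≤ B.card ∨ 3 ≤ C.card := by omega
  rcases big with h | h | h
  · exact triple_aux h3 hN hA hAa hAt e1 e2 hE h
  · refine triple_aux h3 hN.swap12 (B := A) (C := C) hB hBb hBt (by rw [inter_comm]; exact e1) e3 ?_ h
    intro p q he hp hq
    have := hE p q he hp hq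
    tauto
  · refine triple_aux h3 hN.swap23.swap12 (B := A) (C := B) hC hCc hCt (by rw [inter_comm]; exact e2)
      (by rw [inter_comm]; exact e3) ?_ h
    intro p q he hp hq
    have := hE p q he hp hq
    tauto

/-- A pair of critical sets at `t`, both third neighbours having degree at least four. -/
def GoodPair (G : FinGraph) (t a b c : ℕ) (A B : Finset ℕ) : Prop :=
  Nd G t a b c ∧ 4 ≤ dd G a G.verts ∧ 4 ≤ dd G b G.verts ∧ Crit G A ∧ Crit G B ∧
    a ∉ A ∧ b ∈ A ∧ c ∈ A ∧ t ∉ A ∧ a ∈ B ∧ b ∉ B ∧ c ∈ B ∧ t ∉ B ∧ 2 ≤ (A ∩ B).card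

theorem GoodPair.symm {t a b c : ℕ} {A B : Finset ℕ} (h : GoodPair G t a b c A B) :
    GoodPair G t b a c B A := by
  obtain ⟨h1, h2, h3, h4, h5, h6, h7, h8, h9, h10, h11, h12, h13, h14⟩ := h
  exact ⟨h1.swap12, h3, h2, h5, h4, h11, h10, h12, h13, h7, h6, h8, h9, by rwa [inter_comm]⟩

/-- If `t` and `c` are adjacent nodes with common neighbours `a`, `b`, then `{a, b}` separates. -/
theorem no_diamond (h3 : ThreeConnected G) (hV : 5 ≤ G.verts.card) {t a b c : ℕ}
    (hN : Nd G t a b c) (hM : Nd G c t a b) : False := by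
  have : ∃ y ∈ G.verts, y ∉ ({t, a, b, c} : Finset ℕ) := by
    by_contra hcon
    push Not at hcon
    have h1 := card_le_card (show G.verts ⊆ {t, a, b, c} from hcon)
    have := card_le_four (a := t) (b := a) (c := b) (d := c)
    omega
  obtain ⟨y, hy, hyS⟩ := this
  simp only [mem_insert, mem_singleton, not_or] at hyS
  have e1 := edge_ne hN.2.2.2.1
  have e2 := edge_ne hN.2.2.2.2.1
  refine sep h3 {a, b} {t, c} (lt_of_le_of_lt card_le_two (by norm_num)) (x := t) (y := y)
    hN.mem.1 (by simp [e1, e2]) (by simp) hy (by simp; tauto) (by simp; tauto) ?_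
  intro p hp hpS q hqS he
  simp only [mem_insert, mem_singleton, not_or] at *
  rcases hp with rfl | rfl
  · have := hN.2.2.2.2.2.2 q he
    tauto
  · have := hM.2.2.2.2.2.2 q he
    tauto

theorem exists_Nd_of_nbr {t c : ℕ} (hc : dd G c G.verts = 3) (h : s(c, t) ∈ G.edges) :
    ∃ p q, Nd G c t p q := by
  obtain ⟨x, y, z, hN⟩ := exists_Nd hc
  rcases hN.2.2.2.2.2.2 t h with rfl | rfl | rfl
  · exact ⟨_, _, hN⟩
  · exact ⟨_, _, hN.swap12⟩
  · exact ⟨_, _, hN.swap23.swap12⟩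

theorem pair_exists (h3 : ThreeConnected G) (hG : Circuit23 G) (hV : 5 ≤ G.verts.card)
    (H : NoAdm G) {t a b c : ℕ} (hN : Nd G t a b c) (ha : 4 ≤ dd G a G.verts)
    (hb : 4 ≤ dd G b G.verts) : ∃ a b c A B, GoodPair G t a b c A B := by
  obtain ⟨A, hA, hAb, hAc, hAa, hAt⟩ := H t b c a hN.swap12.swap23
  obtain ⟨B, hB, hBa, hBc, hBb, hBt⟩ := H t a c b hN.swap23
  by_cases hc : dd G c G.verts = 3
  · obtain ⟨p, q, hM⟩ := exists_Nd_of_nbr hc (edge_symm hN.2.2.2.2.2.1)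
    refine ⟨a, b, c, A, B, hN, ha, hb, hA, hB, hAa, hAb, hAc, hAt, hBa, hBb, hBc, hBt, ?_⟩
    by_cases cA : 3 ≤ A.card
    · obtain ⟨pA, qA⟩ := crit_nbr hG hA cA hAc hM hAt
      by_cases cB : 3 ≤ B.card
      · obtain ⟨pB, qB⟩ := crit_nbr hG hB cB hBc hM hBt
        exact two_le_of_mem (mem_inter.2 ⟨pA, pB⟩) (mem_inter.2 ⟨qA, qB⟩) hM.2.2.1
      · exfalso
        have he := crit_pair hB hBc hBa hN.2.1.symm (by omega)
        rcases hM.2.2.2.2.2.2 a he with rfl | rfl | rfl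
        · exact edge_ne hN.2.2.2.1 rfl
        · exact hAa pA
        · exact hAa qA
    · exfalso
      have he := crit_pair hA hAc hAb hN.2.2.1.symm (by omega)
      have hb' : b = p ∨ b = q := by
        rcases hM.2.2.2.2.2.2 b he with rfl | h | h
        · exact absurd rfl (edge_ne hN.2.2.2.2.1)
        · exact Or.inl h
        · exact Or.inr h
      by_cases cB : 3 ≤ B.card
      · obtain ⟨pB, qB⟩ := crit_nbr hG hB cB hBc hM hBt
        rcases hb' with rfl | rfl <;> contradiction
      · have he' := crit_pair hB hBc hBa hN.2.1.symm (by omega)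
        have ha' : a = p ∨ a = q := by
          rcases hM.2.2.2.2.2.2 a he' with rfl | h | h
          · exact absurd rfl (edge_ne hN.2.2.2.1)
          · exact Or.inl h
          · exact Or.inr h
        have hab := hN.1
        rcases ha' with rfl | rfl <;> rcases hb' with rfl | rfl
        · exact hab rfl
        · exact no_diamond h3 hV hN hM
        · exact no_diamond h3 hV hN hM.swap23
        · exact hab rfl
  · have hc4 : 4 ≤ dd G c G.verts := by
      have := deg_ge hG hV hN.mem.2.2.2
      omega
    obtain ⟨C, hC, hCa, hCb, hCc, hCt⟩ := H t a b c hN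
    rcases triple h3 hG hV hN hA hB hC hAa hAb hAc hAt hBa hBb hBc hBt hCa hCb hCc hCt with h | h | h
    · exact ⟨a, b, c, A, B, hN, ha, hb, hA, hB, hAa, hAb, hAc, hAt, hBa, hBb, hBc, hBt, h⟩
    · exact ⟨a, c, b, A, C, hN.swap23, ha, hc4, hA, hC, hAa, hAc, hAb, hAt, hCa, hCc, hCb, hCt, h⟩
    · exact ⟨b, c, a, B, C, hN.swap12.swap23, hb, hc4, hB, hC, hBb, hBc, hBa, hBt, hCb, hCc, hCa,
        hCt, h⟩

/-- The sets among which we maximise. -/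
def Cand (G : FinGraph) (W : Finset ℕ) : Prop :=
  Crit G W ∧ 3 ≤ W.card ∧ ∃ z ∈ G.verts, z ∉ W ∧ 4 ≤ dd G z G.verts

theorem step_aux (hG : Circuit23 G) {t a b c : ℕ} {A B W : Finset ℕ}
    (h : GoodPair G t a b c A B) (hW : Cand G W)
    (hmax : ∀ W', Cand G W' → W ⊆ W' → W' = W) (ht : t ∉ W)
    (hd : dd G t W ≤ 1) (h2 : 2 ≤ (A ∩ W).card) : a ∈ W := by
  obtain ⟨hN, ha, hb, hA, hB, hAa, hAb, hAc, hAt, -⟩ := h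
  by_contra haW
  have hU := (crit_union hG hA hW.1 h2 hN.mem.1 hAt ht).1
  have := hmax _ ⟨hU, hW.2.1.trans (card_le_card subset_union_right), a, hN.mem.2.1,
    by simp [hAa, haW], ha⟩ subset_union_right
  have hbW : b ∈ W := by rw [← this]; simp [hAb]
  have hcW : c ∈ W := by rw [← this]; simp [hAc]
  have : 2 ≤ dd G t W := two_le_of_mem (p := b) (q := c)
    (mem_filter.2 ⟨hbW, hN.2.2.2.2.1⟩) (mem_filter.2 ⟨hcW, hN.2.2.2.2.2.1⟩) hN.2.2.1
  omega

theorem step_aux2 (hG : Circuit23 G) {t a b c : ℕ} {A B W : Finset ℕ}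
    (h : GoodPair G t a b c A B) (hW : Cand G W)
    (hmax : ∀ W', Cand G W' → W ⊆ W' → W' = W) (ht : t ∉ W)
    (hd : dd G t W ≤ 1) (h2 : 2 ≤ (A ∩ W).card) : False := by
  have haW := step_aux hG h hW hmax ht hd h2
  have hB2 : ¬ 2 ≤ (B ∩ W).card := by
    intro h2'
    have hbW := step_aux hG h.symm hW hmax ht hd h2'
    have : 2 ≤ dd G t W := two_le_of_mem (p := a) (q := b)
      (mem_filter.2 ⟨haW, h.1.2.2.2.1⟩) (mem_filter.2 ⟨hbW, h.1.2.2.2.2.1⟩) h.1.1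
    omega
  obtain ⟨hN, ha, hb, hA, hB, hAa, hAb, hAc, hAt, hBa, hBb, hBc, hBt, hAB⟩ := h
  have hBW := inter_eq_single hBa haW hB2
  obtain ⟨hU, hcross⟩ := crit_union hG hA hB hAB hN.mem.1 hAt hBt
  have hall := absorb3 hG hU hN.mem.1 (by simp [hAt, hBt]) (by
    rw [hN.dd_three (by simp [hBa]) (by simp [hAb]) (by simp [hAc])])
  have hdeg := crit_deg hG hW.1 hW.2.1 haW
  have : (W.filter (fun u => s(a, u) ∈ G.edges)).Nonempty := by
    rw [← card_pos]
    unfold dd at hdeg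
    omega
  obtain ⟨u, hu⟩ := this
  rw [mem_filter] at hu
  have huB : u ∉ B := by
    intro huB
    have : u ∈ B ∩ W := mem_inter.2 ⟨huB, hu.1⟩
    rw [hBW, mem_singleton] at this
    exact edge_ne hu.2 this.symm
  have huA : u ∈ A := by
    have := hW.1.1 hu.1
    rw [← hall, mem_insert, mem_union] at this
    rcases this with rfl | h | h
    · exact absurd hu.1 ht
    · exact h
    · exact absurd h huB
  exact hcross u huA huB a hBa hAa (edge_symm hu.2)

theorem step (hG : Circuit23 G) {t a b c : ℕ} {A B W : Finset ℕ}
    (h : GoodPair G t a b c A B) (hW : Cand G W)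
    (hmax : ∀ W', Cand G W' → W ⊆ W' → W' = W) (ht : t ∉ W)
    (hd : dd G t W ≤ 1) : False := by
  by_cases h1 : 2 ≤ (A ∩ W).card
  · exact step_aux2 hG h hW hmax ht hd h1
  by_cases h2 : 2 ≤ (B ∩ W).card
  · exact step_aux2 hG h.symm hW hmax ht hd h2
  obtain ⟨hN, ha, hb, hA, hB, hAa, hAb, hAc, hAt, hBa, hBb, hBc, hBt, hAB⟩ := h
  obtain ⟨hU, hcross⟩ := crit_union hG hA hB hAB hN.mem.1 hAt hBt
  have hall := absorb3 hG hU hN.mem.1 (by simp [hAt, hBt]) (by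
    rw [hN.dd_three (by simp [hBa]) (by simp [hAb]) (by simp [hAc])])
  have hsub : W ⊆ (A ∩ W) ∪ (B ∩ W) := by
    intro u hu
    have := hW.1.1 hu
    rw [← hall, mem_insert, mem_union] at this
    rcases this with rfl | h | h
    · exact absurd hu ht
    · simp [h, hu]
    · simp [h, hu]
  have := card_le_card hsub
  have := card_union_le (A ∩ W) (B ∩ W)
  have := hW.2.1
  omega

theorem pair_cand {t a b c : ℕ} {A B : Finset ℕ} (h : GoodPair G t a b c A B) : Cand G A := by
  obtain ⟨hN, ha, hb, hA, hB, hAa, hAb, hAc, hAt, hBa, hBb, hBc, hBt, hAB⟩ := h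
  refine ⟨hA, ?_, a, hN.mem.2.1, hAa, ha⟩
  have : (A ∩ B).card < A.card := by
    apply card_lt_card
    refine ⟨inter_subset_left, fun h => ?_⟩
    exact hBb (mem_inter.1 (h hAb)).2
  omega

/-- No triangle of nodes. -/
theorem no_triangle (hG : Circuit23 G) (hV : 5 ≤ G.verts.card) {t c w : ℕ}
    (ht : dd G t G.verts = 3) (hc : dd G c G.verts = 3) (hw : dd G w G.verts = 3)
    (h1 : s(t, c) ∈ G.edges) (h2 : s(t, w) ∈ G.edges) (h3 : s(c, w) ∈ G.edges) : False := by
  have n1 := edge_ne h1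
  have n2 := edge_ne h2
  have n3 := edge_ne h3
  set T : Finset ℕ := {t, c, w} with hT
  have hTV : T ⊆ G.verts := by
    intro u hu
    simp only [hT, mem_insert, mem_singleton] at hu
    rcases hu with rfl | rfl | rfl
    · exact edge_left h1
    · exact edge_right h1
    · exact edge_right h2
  have hTc : T.card = 3 := by
    rw [hT, card_eq_three]
    exact ⟨t, c, w, n1, n2, n3, rfl⟩
  have hd := degsum (G := G) (W := G.verts \ T) sdiff_subset
  rw [Finset.sdiff_sdiff_eq_self hTV] at hd
  have hs : ∑ y ∈ T, dd G y G.verts = 9 := by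
    rw [hT, sum_insert (by simp [n1, n2]), sum_insert (by simp [n3]), sum_singleton]
    omega
  have hi : 3 ≤ ii G T := by
    have : ({s(t, c), s(t, w), s(c, w)} : Finset (Sym2 ℕ)) ⊆ G.edges ∩ T.sym2 := by
      intro e he
      simp only [mem_insert, mem_singleton] at he
      rcases he with rfl | rfl | rfl <;> simp [h1, h2, h3, hT]
    have hcd := card_le_card this
    have : ({s(t, c), s(t, w), s(c, w)} : Finset (Sym2 ℕ)).card = 3 := by
      rw [card_eq_three]
      refine ⟨_, _, _, ?_, ?_, ?_, rfl⟩
      · simp only [ne_eq, Sym2.eq_iff]; tauto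
      · simp only [ne_eq, Sym2.eq_iff]; tauto
      · simp only [ne_eq, Sym2.eq_iff]; tauto
    unfold ii
    omega
  have hcard := card_sdiff_of_subset hTV
  have hne : G.verts \ T ≠ G.verts := by
    intro h
    rw [h] at hcard
    omega
  have := ii_le hG sdiff_subset hne (by omega)
  have := card_E hG
  omega

theorem base (h3 : ThreeConnected G) (hG : Circuit23 G) (hV : 5 ≤ G.verts.card)
    (H : NoAdm G) : ∃ W, Cand G W := by
  have hhs := handshake (G := G) G.verts
  have hE := card_E hG
  rw [ii_verts] at hhs
  obtain ⟨n, hnV, hn⟩ : ∃ n ∈ G.verts, dd G n G.verts = 3 := by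
    by_contra hcon
    push Not at hcon
    have : ∑ x ∈ G.verts, 4 ≤ ∑ x ∈ G.verts, dd G x G.verts := by
      refine sum_le_sum fun x hx => ?_
      have := deg_ge hG hV hx
      have := hcon x hx
      omega
    simp only [sum_const, smul_eq_mul] at this
    omega
  obtain ⟨z, hzV, hz⟩ : ∃ z ∈ G.verts, dd G z G.verts ≠ 3 := by
    by_contra hcon
    push Not at hcon
    have : ∑ x ∈ G.verts, dd G x G.verts = ∑ x ∈ G.verts, 3 := sum_congr rfl hcon
    simp only [sum_const, smul_eq_mul] at this
    omega
  obtain ⟨t, b, ht, hb, he⟩ : ∃ t b, dd G t G.verts = 3 ∧ dd G b G.verts ≠ 3 ∧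
      s(t, b) ∈ G.edges := by
    by_contra hcon
    push Not at hcon
    refine sep h3 ∅ (G.verts.filter (fun u => dd G u G.verts = 3)) (by simp) hnV (by simp)
      (by simp [hnV, hn]) hzV (by simp) (by simp [hz]) ?_
    intro p hp _ q _ hpq
    rw [mem_filter] at hp ⊢
    refine ⟨edge_right hpq, ?_⟩
    by_contra hq
    exact hcon p q hp.2 hq hpq
  obtain ⟨c, w, hN⟩ := exists_Nd_of_nbr ht he
  have d4 : ∀ x ∈ G.verts, dd G x G.verts ≠ 3 → 4 ≤ dd G x G.verts := by
    intro x hx h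
    have := deg_ge hG hV hx
    omega
  obtain ⟨mt, mb, mc, mw⟩ := hN.mem
  by_cases hc : dd G c G.verts = 3
  · by_cases hw : dd G w G.verts = 3
    · obtain ⟨X, hX, h1, h2, h3', h4⟩ := H t c w b hN.swap12.swap23
      refine ⟨X, hX, ?_, b, mb, h3', d4 b mb hb⟩
      by_contra hX3
      exact no_triangle hG hV ht hc hw hN.2.2.2.2.1 hN.2.2.2.2.2.1
        (crit_pair hX h1 h2 hN.2.2.1 (by omega))
    · obtain ⟨_, _, _, A, _, h⟩ := pair_exists h3 hG hV H hN.swap23 (d4 b mb hb) (d4 w mw hw)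
      exact ⟨A, pair_cand h⟩
  · obtain ⟨_, _, _, A, _, h⟩ := pair_exists h3 hG hV H hN (d4 b mb hb) (d4 c mc hc)
    exact ⟨A, pair_cand h⟩

/-- nodes outside a maximal candidate have at most one neighbour inside -/
theorem node_out (hG : Circuit23 G) {W : Finset ℕ} (hW : Cand G W)
    (hmax : ∀ W', Cand G W' → W ⊆ W' → W' = W) {r : ℕ} (hr : r ∈ G.verts) (hrW : r ∉ W)
    (hr3 : dd G r G.verts = 3) : dd G r W ≤ 1 := by
  obtain ⟨hC, h3, z, hz, hzW, hz4⟩ := hW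
  have hzr : z ≠ r := by
    rintro rfl
    omega
  have hne : insert r W ≠ G.verts := by
    intro h
    rw [← h, mem_insert] at hz
    tauto
  by_contra hcon
  by_cases h2 : dd G r W = 2
  · have := hmax (insert r W) ⟨absorb2 hC hr hrW h2 hne, ?_, z, hz, by simp [hzr, hzW], hz4⟩
      (subset_insert _ _)
    · apply hrW
      rw [← this]
      simp
    · rw [card_insert_of_notMem hrW]
      omega
  · exact hne (absorb3 hG hC hr hrW (by omega))

/-- There is a node outside. -/
theorem exists_node (h3 : ThreeConnected G) (hG : Circuit23 G) (hV : 5 ≤ G.verts.card)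
    {W : Finset ℕ} (hW : Cand G W) : ∃ r ∈ G.verts, r ∉ W ∧ dd G r G.verts = 3 := by
  obtain ⟨⟨c1, c2, c3, c4⟩, hW3, z, hz, hzW, hz4⟩ := hW
  by_contra hcon
  push Not at hcon
  have h1 := degsum c1
  have h2 : ∑ x ∈ G.verts \ W, 4 ≤ ∑ x ∈ G.verts \ W, dd G x G.verts := by
    refine sum_le_sum fun x hx => ?_
    rw [mem_sdiff] at hx
    have := deg_ge hG hV hx.1
    have := hcon x hx.1 hx.2
    omega
  simp only [sum_const, smul_eq_mul] at h2
  have h4 := ii_union (G := G) W (G.verts \ W) disjoint_sdiff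
  rw [union_sdiff_of_subset c1, ii_verts] at h4
  have hE := card_E hG
  have hcd := card_sdiff_add_card_eq_card c1
  set S := (G.verts \ W).biUnion (fun y => W.filter (fun u => s(y, u) ∈ G.edges)) with hS
  have hSc : S.card ≤ ∑ b ∈ G.verts \ W, dd G b W := card_biUnion_le
  have hS2 : S.card < 3 := by omega
  obtain ⟨x, hxW, hxS⟩ : ∃ x ∈ W, x ∉ S := by
    by_contra hcon
    push Not at hcon
    have := card_le_card (show W ⊆ S from hcon)
    omega
  have hSW : S ⊆ W := by
    intro u hu
    rw [hS, mem_biUnion] at hu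
    obtain ⟨y, _, hu⟩ := hu
    exact (mem_filter.1 hu).1
  refine sep h3 S W hS2 (c1 hxW) hxS hxW hz (fun h => hzW (hSW h)) hzW ?_
  intro p hp hpS q hqS he
  by_contra hqW
  apply hpS
  rw [hS, mem_biUnion]
  exact ⟨q, mem_sdiff.2 ⟨edge_right he, hqW⟩, mem_filter.2 ⟨hp, edge_symm he⟩⟩

theorem exists_leaf (hG : Circuit23 G) {F : Finset ℕ} (hF : F ⊆ G.verts) (hne : F.Nonempty)
    (h3 : ∀ r ∈ F, dd G r G.verts = 3) (hc : F.card + 2 ≤ G.verts.card) :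
    ∃ t ∈ F, dd G t F ≤ 1 := by
  by_contra hcon
  push Not at hcon
  have hd := degsum (G := G) (W := G.verts \ F) sdiff_subset
  rw [Finset.sdiff_sdiff_eq_self hF] at hd
  have h1 : ∑ y ∈ F, dd G y G.verts = ∑ y ∈ F, 3 := sum_congr rfl h3
  have h2 : ∑ y ∈ F, 2 ≤ ∑ y ∈ F, dd G y F := sum_le_sum fun y hy => hcon y hy
  rw [handshake] at h2
  simp only [sum_const, smul_eq_mul] at h1 h2
  have hpos := card_pos.2 hne
  have hcard := card_sdiff_of_subset hF
  have hne' : G.verts \ F ≠ G.verts := by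
    intro h
    rw [h] at hcard
    omega
  have := ii_le hG sdiff_subset hne' (by omega)
  have := card_E hG
  omega

/-- The case of a series node. -/
theorem series (hG : Circuit23 G) (H : NoAdm G) {W : Finset ℕ} (hW : Cand G W)
    (hmax : ∀ W', Cand G W' → W ⊆ W' → W' = W) {t b c w : ℕ} (hN : Nd G t b c w)
    (ht : t ∉ W) (hb : 4 ≤ dd G b G.verts) (hbW : b ∉ W) (hcW : c ∉ W) (hwW : w ∈ W)
    (hw3 : dd G w G.verts = 3) : False := by
  obtain ⟨X, hX, hcX, hwX, hbX, htX⟩ := H t c w b hN.swap12.swap23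
  obtain ⟨p, q, hM⟩ := exists_Nd_of_nbr hw3 (edge_symm hN.2.2.2.2.2.1)
  obtain ⟨pW, qW⟩ := crit_nbr hG hW.1 hW.2.1 hwW hM ht
  by_cases hX3 : 3 ≤ X.card
  · obtain ⟨pX, qX⟩ := crit_nbr hG hX hX3 hwX hM htX
    have hU := (crit_union hG hX hW.1 (two_le_of_mem (mem_inter.2 ⟨pX, pW⟩) (mem_inter.2 ⟨qX, qW⟩)
      hM.2.2.1) hN.mem.1 htX ht).1
    have := hmax _ ⟨hU, hW.2.1.trans (card_le_card subset_union_right), b, hN.mem.2.1,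
      by simp [hbX, hbW], hb⟩ subset_union_right
    apply hcW
    rw [← this]
    simp [hcX]
  · have he := crit_pair hX hwX hcX hN.2.2.1.symm (by omega)
    rcases hM.2.2.2.2.2.2 c he with rfl | rfl | rfl
    · exact edge_ne hN.2.2.2.2.1 rfl
    · exact hcW pW
    · exact hcW qW

theorem contra (h3 : ThreeConnected G) (hG : Circuit23 G) (hV : 5 ≤ G.verts.card)
    (H : NoAdm G) : False := by
  classical
  obtain ⟨W0, hW0⟩ := base h3 hG hV H
  obtain ⟨W, hWm, hWmax⟩ := exists_max_image (G.verts.powerset.filter (fun W => Cand G W)) card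
    ⟨W0, mem_filter.2 ⟨mem_powerset.2 hW0.1.1, hW0⟩⟩
  have hW : Cand G W := (mem_filter.1 hWm).2
  have hmax : ∀ W', Cand G W' → W ⊆ W' → W' = W := by
    intro W' hW' hsub
    exact (eq_of_subset_of_card_le hsub
      (hWmax W' (mem_filter.2 ⟨mem_powerset.2 hW'.1.1, hW'⟩))).symm
  set F := (G.verts \ W).filter (fun r => dd G r G.verts = 3) with hF
  have memF : ∀ r, r ∈ F ↔ (r ∈ G.verts ∧ r ∉ W) ∧ dd G r G.verts = 3 := by
    intro r
    rw [hF, mem_filter, mem_sdiff]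
  obtain ⟨r, hr, hrW, hr3⟩ := exists_node h3 hG hV hW
  have hFc : F.card + 2 ≤ G.verts.card := by
    have h1 : F.card ≤ (G.verts \ W).card := card_le_card (filter_subset _ _)
    have h2 := card_sdiff_add_card_eq_card hW.1.1
    have := hW.2.1
    omega
  obtain ⟨t, htF, htd⟩ := exists_leaf hG (F := F) (fun u hu => ((memF u).1 hu).1.1)
    ⟨r, (memF r).2 ⟨⟨hr, hrW⟩, hr3⟩⟩ (fun u hu => ((memF u).1 hu).2) hFc
  obtain ⟨⟨htV, htW⟩, ht3⟩ := (memF t).1 htF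
  have hdW := node_out hG hW hmax htV htW ht3
  have d4 : ∀ x ∈ G.verts, dd G x G.verts ≠ 3 → 4 ≤ dd G x G.verts := by
    intro x hx h
    have := deg_ge hG hV hx
    omega
  have notF : ∀ p q, p ≠ q → s(t, p) ∈ G.edges → s(t, q) ∈ G.edges → p ∈ F → q ∈ F → False := by
    intro p q hpq hp hq hpF hqF
    have : 2 ≤ dd G t F := two_le_of_mem (mem_filter.2 ⟨hpF, hp⟩) (mem_filter.2 ⟨hqF, hq⟩) hpq
    omega
  have notW : ∀ p q, p ≠ q → s(t, p) ∈ G.edges → s(t, q) ∈ G.edges → p ∈ W → q ∈ W → False := by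
    intro p q hpq hp hq hpF hqF
    have : 2 ≤ dd G t W := two_le_of_mem (mem_filter.2 ⟨hpF, hp⟩) (mem_filter.2 ⟨hqF, hq⟩) hpq
    omega
  have FW : ∀ p, s(t, p) ∈ G.edges → dd G p G.verts = 3 → p ∈ F ∨ p ∈ W := by
    intro p hp hp3
    by_cases hpW : p ∈ W
    · exact Or.inr hpW
    · exact Or.inl ((memF p).2 ⟨⟨edge_right hp, hpW⟩, hp3⟩)
  obtain ⟨b, c, w, hN, hb⟩ : ∃ b c w, Nd G t b c w ∧ dd G b G.verts ≠ 3 := by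
    obtain ⟨x, y, z, hN⟩ := exists_Nd ht3
    by_cases hx : dd G x G.verts = 3
    · by_cases hy : dd G y G.verts = 3
      · by_cases hz : dd G z G.verts = 3
        · exfalso
          obtain ⟨n1, n2, n3, e1, e2, e3, -⟩ := hN
          have f1 := notF x y n1 e1 e2
          have f2 := notF x z n2 e1 e3
          have f3 := notF y z n3 e2 e3
          have g1 := notW x y n1 e1 e2
          have g2 := notW x z n2 e1 e3
          have g3 := notW y z n3 e2 e3
          have k1 := FW x e1 hx
          have k2 := FW y e2 hy
          rcases FW z e3 hz with k3 | k3 <;> rcases k1 with k1 | k1 <;> rcases k2 with k2 | k2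
          · exact f1 k1 k2
          · exact f2 k1 k3
          · exact f3 k2 k3
          · exact g1 k1 k2
          · exact f1 k1 k2
          · exact g3 k2 k3
          · exact g2 k1 k3
          · exact g1 k1 k2
        · exact ⟨z, x, y, hN.swap23.swap12, hz⟩
      · exact ⟨y, x, z, hN.swap12, hy⟩
    · exact ⟨x, y, z, hN, hx⟩
  obtain ⟨mt, mb, mc, mw⟩ := hN.mem
  by_cases hc : dd G c G.verts = 3
  · by_cases hw : dd G w G.verts = 3
    · obtain ⟨n1, n2, n3, e1, e2, e3, -⟩ := id hN
      have k1 := FW c e2 hc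
      have k2 := FW w e3 hw
      have f1 := notF c w n3 e2 e3
      have g1 := notW c w n3 e2 e3
      have g2 := notW b c n1 e1 e2
      have g3 := notW b w n2 e1 e3
      by_cases hwW : w ∈ W
      · exact series hG H hW hmax hN htW (d4 b mb hb) (fun h => g3 h hwW) (fun h => g1 h hwW) hwW hw
      · have hcW : c ∈ W := k1.resolve_left fun h => f1 h (k2.resolve_right hwW)
        exact series hG H hW hmax hN.swap23 htW (d4 b mb hb) (fun h => g2 h hcW) hwW hcW hc
    · obtain ⟨_, _, _, A, B, h⟩ := pair_exists h3 hG hV H hN.swap23 (d4 b mb hb) (d4 w mw hw)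
      exact step hG h hW hmax htW hdW
  · obtain ⟨_, _, _, A, B, h⟩ := pair_exists h3 hG hV H hN (d4 b mb hb) (d4 c mc hc)
    exact step hG h hW hmax htW hdW

/-- The graph after splitting off. -/
def split (G : FinGraph) (t a b : ℕ) (hab : a ≠ b) (ha : a ∈ G.verts.erase t)
    (hb : b ∈ G.verts.erase t) : FinGraph where
  verts := G.verts.erase t
  edges := insert s(a, b) (G.edges.filter (fun e => t ∉ e))
  not_isDiag := by
    intro e he
    rw [mem_insert, mem_filter] at he
    rcases he with rfl | he
    · simpa using hab
    · exact G.not_isDiag e he.1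
  mem_verts := by
    intro e he v hv
    rw [mem_insert, mem_filter] at he
    rcases he with rfl | he
    · rw [Sym2.mem_iff] at hv
      rcases hv with rfl | rfl <;> assumption
    · rw [mem_erase]
      exact ⟨fun h => he.2 (h ▸ hv), G.mem_verts e he.1 v hv⟩

theorem not_edge (hV : 5 ≤ G.verts.card) {t a b c : ℕ} (hN : Nd G t a b c)
    (hno : ¬ ∃ X, Crit G X ∧ a ∈ X ∧ b ∈ X ∧ c ∉ X ∧ t ∉ X) : s(a, b) ∉ G.edges := by
  intro he
  obtain ⟨mt, ma, mb, mc⟩ := hN.mem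
  have e1 := edge_ne hN.2.2.2.1
  have e2 := edge_ne hN.2.2.2.2.1
  refine hno ⟨{a, b}, ⟨?_, ?_, ?_, ?_⟩, by simp, by simp, ?_, ?_⟩
  · intro u hu
    simp only [mem_insert, mem_singleton] at hu
    rcases hu with rfl | rfl <;> assumption
  · intro h
    rw [← h, card_pair hN.1] at hV
    omega
  · rw [card_pair hN.1]
  · rw [card_pair hN.1]
    have h0 : ii G {b} = 0 := by
      have := ii_insert (G := G) (t := b) (X := ∅) (by simp)
      simpa [ii_empty, dd] using this
    have := ii_insert (G := G) (t := a) (X := {b}) (by simp [hN.1])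
    have h1 : dd G a {b} = 1 := by
      unfold dd
      rw [filter_singleton, if_pos he, card_singleton]
    omega
  · simp [hN.2.1.symm, hN.2.2.1.symm]
  · simp [e1, e2]

theorem split_circuit (hG : Circuit23 G) (hV : 5 ≤ G.verts.card) {t a b c : ℕ}
    (hN : Nd G t a b c)
    (hno : ¬ ∃ X, Crit G X ∧ a ∈ X ∧ b ∈ X ∧ c ∉ X ∧ t ∉ X) (hab : a ≠ b)
    (ha : a ∈ G.verts.erase t) (hb : b ∈ G.verts.erase t) :
    Circuit23 (split G t a b hab ha hb) := by
  have hne := not_edge hV hN hno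
  have mt := hN.mem.1
  have hE := card_E hG
  have hcv := card_erase_of_mem mt
  have hsplit : (split G t a b hab ha hb).edges.card + 2 = 2 * (G.verts.erase t).card := by
    have h1 : (split G t a b hab ha hb).edges = insert s(a, b) (G.edges.filter (fun e => t ∉ e)) := rfl
    rw [h1, card_insert_of_notMem (by simp [hne])]
    have h2 : G.edges.filter (fun e => t ∉ e) = G.edges ∩ (G.verts.erase t).sym2 := by
      ext e
      simp only [mem_filter, mem_inter, Finset.mem_sym2_iff, mem_erase]
      constructor
      · rintro ⟨h1, h2⟩
        exact ⟨h1, fun u hu => ⟨fun h => h2 (h ▸ hu), G.mem_verts e h1 u hu⟩⟩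
      · rintro ⟨h1, h2⟩
        exact ⟨h1, fun h => (h2 t h).1 rfl⟩
    have h3 := ii_insert (G := G) (t := t) (X := G.verts.erase t) (by simp)
    have h4 := dd_self (G := G) (t := t) (X := G.verts.erase t) (by simp)
    rw [insert_erase mt] at h3 h4
    rw [ii_verts] at h3
    have := hN.deg
    rw [h2]
    unfold ii at h3
    omega
  refine ⟨?_, ?_⟩
  · change ((split G t a b hab ha hb).edges.card : ℤ) = 2 * ((G.verts.erase t).card : ℤ) - 2
    omega
  · rintro V' E' ⟨hV', hE', hend⟩ hprop hnon
    change V' ⊆ G.verts.erase t at hV'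
    have htV' : t ∉ V' := fun h => by simpa using hV' h
    have hV'G : V' ⊆ G.verts := hV'.trans (erase_subset _ _)
    have hV'ne : V' ≠ G.verts := fun h => htV' (h ▸ mt)
    have hE'G : ∀ e ∈ E', e ≠ s(a, b) → e ∈ G.edges := by
      intro e he hne
      have : e ∈ insert s(a, b) (G.edges.filter (fun e => t ∉ e)) := hE' he
      rw [mem_insert, mem_filter] at this
      tauto
    by_cases habE : s(a, b) ∈ E'
    · have haV : a ∈ V' := hend _ habE a (by simp)
      have hbV : b ∈ V' := hend _ habE b (by simp)
      have hle : E'.card ≤ ii G V' + 1 := by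
        rw [← card_erase_add_one habE]
        apply Nat.add_le_add_right
        apply card_le_card
        intro e he
        rw [mem_erase] at he
        rw [mem_inter, Finset.mem_sym2_iff]
        exact ⟨hE'G e he.2 he.1, hend e he.2⟩
      have h2 := two_le_of_mem haV hbV hab
      have hii := ii_le hG hV'G hV'ne h2
      by_cases hfull : V' = G.verts.erase t
      · have hEne : E' ≠ (split G t a b hab ha hb).edges := by
          rcases hprop with h | h
          · exact absurd hfull h
          · exact h
        have : E'.card < (split G t a b hab ha hb).edges.card :=
          card_lt_card (hE'.ssubset_of_ne hEne)
        rw [hfull]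
        omega
      · by_cases hcrit : ii G V' + 3 = 2 * V'.card
        · exfalso
          have hCr : Crit G V' := ⟨hV'G, hV'ne, h2, hcrit⟩
          by_cases hcV : c ∈ V'
          · have := absorb3 hG hCr mt htV' (by rw [hN.dd_three haV hbV hcV])
            apply hfull
            rw [← this, erase_insert htV']
          · exact hno ⟨V', hCr, haV, hbV, hcV, htV'⟩
        · omega
    · refine hG.2 V' E' ⟨hV'G, ?_, hend⟩ (Or.inl hV'ne) hnon
      intro e he
      exact hE'G e he (fun h => habE (h ▸ he))

end BJ

/-- **Berg–Jordán reduction lemma.** Let `G` be a 3-vertex-connected (2,3)-circuit with at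
least five vertices. Then `G` has a vertex `v` of degree 3 with neighbours `x`, `y`, `z` such
that deleting `v` (with its three incident edges) and adding one new edge between two of
`x`, `y`, `z` yields a (2,3)-circuit. -/
theorem statement_5 (G : FinGraph) (h3 : ThreeConnected G) (hG : Circuit23 G)
    (hV : 5 ≤ G.verts.card) :
    ∃ (v x y z a b : ℕ) (G' : FinGraph),
      x ≠ y ∧ x ≠ z ∧ y ≠ z ∧
      G.Adj v x ∧ G.Adj v y ∧ G.Adj v z ∧
      (∀ w : ℕ, G.Adj v w → w = x ∨ w = y ∨ w = z) ∧
      a ≠ b ∧ a ∈ ({x, y, z} : Finset ℕ) ∧ b ∈ ({x, y, z} : Finset ℕ) ∧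
      s(a, b) ∉ G.edges ∧
      G'.verts = G.verts.erase v ∧
      G'.edges = insert s(a, b) (G.edges.filter (fun e => v ∉ e)) ∧
      Circuit23 G' := by
  by_contra hcon
  refine BJ.contra h3 hG hV ?_
  intro t a b c hN
  by_contra hno
  obtain ⟨mt, ma, mb, mc⟩ := hN.mem
  have ha : a ∈ G.verts.erase t := mem_erase.2 ⟨(BJ.edge_ne hN.2.2.2.1).symm, ma⟩
  have hb : b ∈ G.verts.erase t := mem_erase.2 ⟨(BJ.edge_ne hN.2.2.2.2.1).symm, mb⟩
  exact hcon ⟨t, a, b, c, a, b, BJ.split G t a b hN.1 ha hb, hN.1, hN.2.1, hN.2.2.1, hN.2.2.2.1,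
    hN.2.2.2.2.1, hN.2.2.2.2.2.1, hN.2.2.2.2.2.2, hN.1, by simp, by simp,
    BJ.not_edge hV hN hno, rfl, rfl, BJ.split_circuit hG hV hN hno hN.1 ha hb⟩
end

section
/- K_{6,6} is dependent in the 4-dimensional rigidity matroid: for every map p from the vertex set of the complete bipartite graph K_{6,6} to ℝ⁴, there exists a nonzero function ω from the edge set of K_{6,6} to ℝ such that for every vertex i, the sum over all edges ij incident to i of ω(ij)·(p(i)−p(j)) is the zero vector in ℝ⁴ (i.e., the rows of the rigidity matrix of (K_{6,6},p) in ℝ⁴ are linearly dependent). -/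
open Finset

/-- Six points of `ℝ⁴` have a nontrivial affine dependency. -/
theorem affine_dep_six (q : Fin 6 → Fin 4 → ℝ) :
    ∃ c : Fin 6 → ℝ, (∃ i, c i ≠ 0) ∧ ∑ i, c i = 0 ∧ ∑ i, c i • q i = 0 := by
  have h : ¬ LinearIndependent ℝ (fun i : Fin 6 => ((q i, (1 : ℝ)) : (Fin 4 → ℝ) × ℝ)) := by
    intro h
    have := h.fintype_card_le_finrank
    simp at this
  obtain ⟨c, hc, hi⟩ := Fintype.not_linearIndependent_iff.1 h
  refine ⟨c, hi, ?_, ?_⟩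
  · simpa [Prod.snd_sum] using congrArg Prod.snd hc
  · simpa [Prod.fst_sum] using congrArg Prod.fst hc

/-- **`K_{6,6}` is dependent in the 4-dimensional rigidity matroid.** For every placement `p`
of the vertices of the complete bipartite graph `K_{6,6}` (vertex set `Fin 6 ⊕ Fin 6`, edges
all pairs `(i,j)` of a left and a right vertex) in `ℝ⁴`, there is a nonzero assignment `ω` of
reals to the edges such that at every vertex the signed sum of the edge vectors vanishes;
i.e. the rows of the rigidity matrix of `(K_{6,6}, p)` in `ℝ⁴` are linearly dependent. -/
theorem statement_13 (p : Fin 6 ⊕ Fin 6 → Fin 4 → ℝ) :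
    ∃ ω : Fin 6 × Fin 6 → ℝ, ω ≠ 0 ∧
      (∀ i : Fin 6, ∑ j : Fin 6, ω (i, j) • (p (Sum.inl i) - p (Sum.inr j)) = 0) ∧
      (∀ j : Fin 6, ∑ i : Fin 6, ω (i, j) • (p (Sum.inr j) - p (Sum.inl i)) = 0) := by
  obtain ⟨a, ⟨i₀, ha⟩, ha1, ha2⟩ := affine_dep_six (fun i => p (Sum.inl i))
  obtain ⟨b, ⟨j₀, hb⟩, hb1, hb2⟩ := affine_dep_six (fun j => p (Sum.inr j))
  refine ⟨fun e => a e.1 * b e.2, ?_, ?_, ?_⟩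
  · intro h
    exact mul_ne_zero ha hb (congrFun h (i₀, j₀))
  · intro i
    simp only [mul_smul, ← Finset.smul_sum, smul_sub, Finset.sum_sub_distrib,
      ← Finset.sum_smul, hb1, hb2]
    simp
  · intro j
    simp only [mul_comm (a _) (b _), mul_smul, ← Finset.smul_sum, smul_sub,
      Finset.sum_sub_distrib, ← Finset.sum_smul, ha1, ha2]
    simp
end

section
/- Nash-Williams' forest decomposition theorem: let k be a positive integer. A finite simple graph G=(V,E) can be written as the union of k edge-disjoint forests (i.e., E can be partitioned into k sets, each of which induces an acyclic subgraph) if and only if every subgraph G'=(V',E') of G with V' nonempty satisfies |E'| ≤ k|V'| − k. -/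
open Finset

/-- The colour class `i` of the edge set `S`. -/
def NWclass {V : Type} {k : ℕ} (S : Set (Sym2 V)) (c : Sym2 V → Fin k) (i : Fin k) :
    SimpleGraph V :=
  SimpleGraph.fromEdgeSet {e | e ∈ S ∧ c e = i}

lemma NWclass_adj {V : Type} {k : ℕ} (S : Set (Sym2 V)) (c : Sym2 V → Fin k) (i : Fin k)
    (a b : V) : (NWclass S c i).Adj a b ↔ (s(a, b) ∈ S ∧ c s(a, b) = i) ∧ a ≠ b := by
  simp [NWclass]

open Classical in
/-- States (colouring, missing edge) reachable from `(c₀, e₀)` by edge exchanges. -/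
inductive NWreach {V : Type} {k : ℕ} (S : Set (Sym2 V)) (c₀ : Sym2 V → Fin k) (e₀ : Sym2 V) :
    (Sym2 V → Fin k) → Sym2 V → Prop
  | base : NWreach S c₀ e₀ c₀ e₀
  | step (c : Sym2 V → Fin k) (e f : Sym2 V) (h : NWreach S c₀ e₀ c e) (hf : f ∈ S) (hne : f ≠ e)
      (hv : ∀ i, (NWclass (S \ {f}) (Function.update c e (c f)) i).IsAcyclic) :
      NWreach S c₀ e₀ (Function.update c e (c f)) f

/-- The graph of edges that are missing in some reachable state. -/
def NWH {V : Type} {k : ℕ} (S : Set (Sym2 V)) (c₀ : Sym2 V → Fin k) (e₀ : Sym2 V) :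
    SimpleGraph V :=
  SimpleGraph.fromEdgeSet {e | ∃ c, NWreach S c₀ e₀ c e}

section
variable {V : Type} {k : ℕ} {S : Set (Sym2 V)} {c₀ : Sym2 V → Fin k} {e₀ : Sym2 V}

lemma NWreach.valid (hv : ∀ i, (NWclass (S \ {e₀}) c₀ i).IsAcyclic) (he : e₀ ∈ S)
    {c : Sym2 V → Fin k} {e : Sym2 V} (h : NWreach S c₀ e₀ c e) :
    e ∈ S ∧ ∀ i, (NWclass (S \ {e}) c i).IsAcyclic := by
  cases h with
  | base => exact ⟨he, hv⟩
  | step c e f h hf hne hv => exact ⟨hf, hv⟩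

lemma reach_mono {K L : SimpleGraph V} (h : ∀ a b, K.Adj a b → L.Reachable a b)
    {a b : V} (hr : K.Reachable a b) : L.Reachable a b := by
  obtain ⟨p⟩ := hr
  induction p with
  | nil => exact SimpleGraph.Reachable.refl _
  | cons hadj p ih => exact (h _ _ hadj).trans ih

lemma NW_claim1 (hv : ∀ i, (NWclass (S \ {e₀}) c₀ i).IsAcyclic) (he : e₀ ∈ S)
    (hno : ¬ ∃ c : Sym2 V → Fin k, ∀ i, (NWclass S c i).IsAcyclic)
    {c : Sym2 V → Fin k} {x y : V} (h : NWreach S c₀ e₀ c s(x, y)) (i : Fin k) :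
    (NWclass (S \ {s(x, y)}) c i ⊓ NWH S c₀ e₀).Reachable x y := by
  classical
  obtain ⟨heS, hval⟩ := h.valid hv he
  have hreach : (NWclass (S \ {s(x, y)}) c i).Reachable x y := by
    by_contra hnr
    apply hno
    refine ⟨Function.update c s(x, y) i, fun j => ?_⟩
    by_cases hj : j = i
    · subst hj
      refine (SimpleGraph.IsAcyclic.sup_edge_of_not_reachable hnr (hval j)).anti ?_
      intro a b hab
      rw [NWclass_adj] at hab
      rw [SimpleGraph.sup_adj, SimpleGraph.edge_adj, NWclass_adj]
      by_cases heq : s(a, b) = s(x, y)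
      · right
        exact ⟨by simpa using heq, hab.2⟩
      · left
        rw [Function.update_of_ne heq] at hab
        exact ⟨⟨⟨hab.1.1, heq⟩, hab.1.2⟩, hab.2⟩
    · refine (hval j).anti ?_
      intro a b hab
      rw [NWclass_adj] at hab ⊢
      by_cases heq : s(a, b) = s(x, y)
      · rw [heq, Function.update_self] at hab
        exact absurd hab.1.2.symm hj
      · rw [Function.update_of_ne heq] at hab
        exact ⟨⟨⟨hab.1.1, heq⟩, hab.1.2⟩, hab.2⟩
  obtain ⟨p, hp⟩ := hreach.exists_isPath
  refine ⟨p.transfer _ ?_⟩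
  intro f hfp
  have hfF := p.edges_subset_edgeSet hfp
  have hfF' : (f ∈ S ∧ f ≠ s(x, y)) ∧ c f = i := by
    have := hfF
    simp only [NWclass, SimpleGraph.edgeSet_fromEdgeSet] at this
    exact this.1
  have hnd : ¬ f.IsDiag := SimpleGraph.not_isDiag_of_mem_edgeSet _ hfF
  rw [SimpleGraph.edgeSet_inf]
  refine ⟨hfF, ?_⟩
  simp only [NWH, SimpleGraph.edgeSet_fromEdgeSet]
  refine ⟨⟨_, NWreach.step c _ f h hfF'.1.1 hfF'.1.2 fun j => ?_⟩, hnd⟩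
  rw [hfF'.2]
  by_cases hj : j = i
  · subst hj
    have hnr : ¬ ((NWclass (S \ {s(x, y)}) c j).deleteEdges {f}).Reachable x y := by
      intro hr
      obtain ⟨q, hq⟩ := hr.exists_isPath
      have hle := SimpleGraph.deleteEdges_le (G := NWclass (S \ {s(x, y)}) c j) {f}
      have huniq := (hval j).path_unique ⟨p, hp⟩ ⟨q.mapLe hle, hq.mapLe hle⟩
      have hpq : p = q.mapLe hle := congrArg Subtype.val huniq
      rw [hpq] at hfp
      have : f ∈ q.edges := by simpa using hfp
      have := q.edges_subset_edgeSet this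
      simp at this
    refine (SimpleGraph.IsAcyclic.sup_edge_of_not_reachable hnr
      ((hval j).anti (SimpleGraph.deleteEdges_le _))).anti ?_
    intro a b hab
    rw [NWclass_adj] at hab
    rw [SimpleGraph.sup_adj, SimpleGraph.edge_adj, SimpleGraph.deleteEdges_adj, NWclass_adj]
    by_cases heq : s(a, b) = s(x, y)
    · right
      exact ⟨by simpa using heq, hab.2⟩
    · left
      rw [Function.update_of_ne heq] at hab
      exact ⟨⟨⟨⟨hab.1.1.1, heq⟩, hab.1.2⟩, hab.2⟩, hab.1.1.2⟩
  · refine (hval j).anti ?_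
    intro a b hab
    rw [NWclass_adj] at hab ⊢
    by_cases heq : s(a, b) = s(x, y)
    · rw [heq, Function.update_self] at hab
      exact absurd hab.1.2.symm hj
    · rw [Function.update_of_ne heq] at hab
      exact ⟨⟨⟨hab.1.1.1, heq⟩, hab.1.2⟩, hab.2⟩

lemma NW_claim2 (hv : ∀ i, (NWclass (S \ {e₀}) c₀ i).IsAcyclic) (he : e₀ ∈ S)
    (hno : ¬ ∃ c : Sym2 V → Fin k, ∀ i, (NWclass S c i).IsAcyclic)
    {c : Sym2 V → Fin k} {e : Sym2 V} (h : NWreach S c₀ e₀ c e) (i : Fin k) :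
    ∀ {a b : V}, (NWclass (S \ {e}) c i ⊓ NWH S c₀ e₀).Reachable a b →
      (NWclass (S \ {e₀}) c₀ i ⊓ NWH S c₀ e₀).Reachable a b := by
  classical
  induction h with
  | base => exact id
  | step c e f h hf hne hval ih =>
    intro a b hab
    apply ih
    refine reach_mono ?_ hab
    intro a b hab
    by_cases heq : s(a, b) = e
    · subst heq
      exact NW_claim1 hv he hno h i
    · apply SimpleGraph.Adj.reachable
      rw [SimpleGraph.inf_adj, NWclass_adj] at hab ⊢
      rw [Function.update_of_ne heq] at hab
      exact ⟨⟨⟨⟨hab.1.1.1.1, heq⟩, hab.1.1.2⟩, hab.1.2⟩, hab.2⟩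

lemma NW_claim3 (hv : ∀ i, (NWclass (S \ {e₀}) c₀ i).IsAcyclic) (he : e₀ ∈ S)
    (hno : ¬ ∃ c : Sym2 V → Fin k, ∀ i, (NWclass S c i).IsAcyclic) (i : Fin k)
    {a b : V} : (NWH S c₀ e₀).Reachable a b →
      (NWclass (S \ {e₀}) c₀ i ⊓ NWH S c₀ e₀).Reachable a b := by
  refine reach_mono fun a b hab => ?_
  have : ∃ c, NWreach S c₀ e₀ c s(a, b) := by
    simp only [NWH, SimpleGraph.fromEdgeSet_adj] at hab
    exact hab.1
  obtain ⟨c, hc⟩ := this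
  exact NW_claim2 hv he hno hc i (NW_claim1 hv he hno hc i)

end

open Classical in
/-- A connected component of `K` with vertex set `U` has at least `|U| - 1` edges. -/
lemma NW_comp_count {V : Type} [Fintype V] (K : SimpleGraph V) (x : V) (U : Finset V)
    (hU : ∀ v, v ∈ U ↔ K.Reachable v x) (A : Finset (Sym2 V))
    (hA : ∀ e, e ∈ K.edgeSet → (∀ w ∈ e, w ∈ U) → e ∈ A) :
    U.card ≤ A.card + 1 := by
  have h := (K.connectedComponentMk x).connected_toSimpleGraph.card_vert_le_card_edgeSet_add_one
  have hmem : ∀ v, v ∈ (K.connectedComponentMk x).supp ↔ v ∈ U := by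
    intro v
    rw [hU, SimpleGraph.ConnectedComponent.mem_supp_iff, SimpleGraph.ConnectedComponent.eq]
  have hcard : Nat.card (K.connectedComponentMk x) = U.card := by
    have : (K.connectedComponentMk x).supp = (U : Set V) := by
      ext v
      simp [← hmem]
    change Nat.card ((K.connectedComponentMk x).supp) = _
    rw [this]
    simp
  rw [hcard] at h
  refine h.trans (Nat.add_le_add_right ?_ 1)
  have hAc : Nat.card A = A.card := by simp
  rw [← hAc]
  refine Nat.card_le_card_of_injective
    (fun e => ⟨Sym2.map Subtype.val e.1, ?_⟩) ?_
  · obtain ⟨e, he⟩ := e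
    induction e with
    | _ a b =>
      refine hA _ he ?_
      intro w hw
      rcases Sym2.mem_iff.1 hw with rfl | rfl
      · exact (hmem _).1 a.2
      · exact (hmem _).1 b.2
  · intro e f hef
    apply Subtype.ext
    exact Sym2.map.injective Subtype.val_injective (congrArg Subtype.val hef)

open Classical in
/-- An acyclic graph spans at most `|U| - 1` edges on a nonempty `U`. -/
lemma NW_acyc_count {V : Type} [Fintype V] (K : SimpleGraph V) (hK : K.IsAcyclic) (U : Finset V)
    (hU : U.Nonempty) (A : Finset (Sym2 V)) (hA : ∀ e ∈ A, e ∈ K.edgeSet)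
    (hAU : ∀ e ∈ A, ∀ w ∈ e, w ∈ U) : A.card + 1 ≤ U.card := by
  have hne : Nonempty (U : Set V) := ⟨⟨hU.choose, hU.choose_spec⟩⟩
  obtain ⟨T, hle, -, hT⟩ := SimpleGraph.connected_top.exists_isTree_le_of_le_of_isAcyclic
    (le_top : K.induce (U : Set V) ≤ ⊤) (hK.induce _)
  have h1 := hT.card_edgeFinset
  have h2 : Fintype.card (U : Set V) = U.card := by simp
  rw [h2] at h1
  rw [← h1]
  refine Nat.add_le_add_right ?_ 1
  refine (Finset.card_le_card (t := T.edgeFinset.image (Sym2.map Subtype.val)) ?_).trans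
    Finset.card_image_le
  intro e he
  have h3 := hA e he
  have h4 := hAU e he
  induction e with
  | _ a b =>
    rw [Finset.mem_image]
    refine ⟨s(⟨a, h4 a (by simp)⟩, ⟨b, h4 b (by simp)⟩), ?_, rfl⟩
    rw [SimpleGraph.mem_edgeFinset]
    exact hle h3

open Classical in
lemma NW_main {V : Type} [Fintype V] (k : ℕ) (hk : 0 < k) (G : SimpleGraph V)
    (H : ∀ (V' : Finset V) (E' : Finset (Sym2 V)), ↑E' ⊆ G.edgeSet →
        (∀ e ∈ E', ∀ w ∈ e, w ∈ V') → V'.Nonempty → (E'.card : ℤ) ≤ k * V'.card - k)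
    (T : Finset (Sym2 V)) : (T : Set (Sym2 V)) ⊆ G.edgeSet →
    ∃ c : Sym2 V → Fin k, ∀ i, (NWclass (T : Set (Sym2 V)) c i).IsAcyclic := by
  induction T using Finset.induction_on with
  | empty =>
    intro _
    refine ⟨fun _ => ⟨0, hk⟩, fun i => ?_⟩
    have : NWclass ((∅ : Finset (Sym2 V)) : Set (Sym2 V)) (fun _ => ⟨0, hk⟩) i = ⊥ := by
      simp [NWclass]
    rw [this]
    exact SimpleGraph.isAcyclic_bot
  | insert e₀ T hnot ih =>
    intro hsub
    by_contra hno
    obtain ⟨c₀, hc₀⟩ := ih (fun e he => hsub (by simp [Finset.mem_coe.1 he]))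
    set S : Set (Sym2 V) := ((insert e₀ T : Finset (Sym2 V)) : Set (Sym2 V)) with hS
    have he : e₀ ∈ S := by simp [hS]
    have hST : S \ {e₀} = (T : Set (Sym2 V)) := by
      ext e
      simp only [hS, coe_insert, Set.mem_sdiff, Set.mem_insert_iff, mem_coe, Set.mem_singleton_iff]
      constructor
      · rintro ⟨h | h, h'⟩
        · exact absurd h h'
        · exact h
      · intro h
        exact ⟨Or.inr h, fun h' => hnot (h' ▸ h)⟩
    have hv : ∀ i, (NWclass (S \ {e₀}) c₀ i).IsAcyclic := by
      rw [hST]; exact hc₀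
    obtain ⟨x, y, hxy⟩ : ∃ x y, e₀ = s(x, y) := by
      induction e₀ with
      | _ a b => exact ⟨a, b, rfl⟩
    set U : Finset V := univ.filter fun v => (NWH S c₀ e₀).Reachable v x with hU
    have hxU : x ∈ U := by simp [hU]
    have hxyne : x ≠ y := by
      have := hsub he
      rw [hxy] at this
      exact G.ne_of_adj this
    have hadj : (NWH S c₀ e₀).Adj x y := by
      simp only [NWH, SimpleGraph.fromEdgeSet_adj]
      refine ⟨⟨c₀, ?_⟩, hxyne⟩
      rw [← hxy]
      exact NWreach.base
    have hyU : y ∈ U := by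
      simp only [hU, mem_filter, mem_univ, true_and]
      exact hadj.symm.reachable
    let A : Fin k → Finset (Sym2 V) := fun i => univ.filter fun e : Sym2 V =>
      e ∈ (NWclass (S \ {e₀}) c₀ i ⊓ NWH S c₀ e₀).edgeSet ∧ ∀ w ∈ e, w ∈ U
    have hA : ∀ i, U.card ≤ (A i).card + 1 := by
      intro i
      refine NW_comp_count (NWclass (S \ {e₀}) c₀ i ⊓ NWH S c₀ e₀) x U ?_ (A i) ?_
      · intro v
        simp only [hU, mem_filter, mem_univ, true_and]
        exact ⟨NW_claim3 hv he hno i, fun h => h.mono inf_le_right⟩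
      · intro e h1 h2
        exact mem_filter.2 ⟨mem_univ _, h1, h2⟩
    have hAmem : ∀ i, ∀ e ∈ A i, (e ∈ S ∧ e ≠ e₀) ∧ c₀ e = i := by
      intro i e h
      have h1 := (mem_filter.1 h).2.1
      rw [SimpleGraph.edgeSet_inf] at h1
      have h2 := h1.1
      simp only [NWclass, SimpleGraph.edgeSet_fromEdgeSet] at h2
      exact h2.1
    have hdisj : ∀ i ∈ (univ : Finset (Fin k)), ∀ j ∈ (univ : Finset (Fin k)), i ≠ j →
        Disjoint (A i) (A j) := by
      intro i _ j _ hij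
      rw [Finset.disjoint_left]
      intro e h1 h2
      exact hij ((hAmem i e h1).2.symm.trans (hAmem j e h2).2)
    have he₀ : e₀ ∉ univ.biUnion A := by
      intro h
      obtain ⟨i, _, hi⟩ := mem_biUnion.1 h
      exact (hAmem i _ hi).1.2 rfl
    have hcard : (insert e₀ (univ.biUnion A)).card = ∑ i, (A i).card + 1 := by
      rw [Finset.card_insert_of_notMem he₀, Finset.card_biUnion hdisj]
    have hle := H U (insert e₀ (univ.biUnion A)) ?_ ?_ ⟨x, hxU⟩
    · rw [hcard] at hle
      have hsum : ∑ _i : Fin k, U.card ≤ ∑ i, ((A i).card + 1) :=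
        Finset.sum_le_sum fun i _ => hA i
      rw [Finset.sum_add_distrib] at hsum
      simp only [sum_const, card_univ, Fintype.card_fin, smul_eq_mul, mul_one] at hsum
      zify at hsum
      push_cast at hle
      linarith
    · intro e h
      apply hsub
      rcases Finset.mem_insert.1 (Finset.mem_coe.1 h) with rfl | h
      · exact he
      · obtain ⟨i, _, hi⟩ := mem_biUnion.1 h
        exact (hAmem i _ hi).1.1
    · intro e h
      rcases Finset.mem_insert.1 h with rfl | h
      · rw [hxy]
        intro w hw
        rcases Sym2.mem_iff.1 hw with rfl | rfl
        · exact hxU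
        · exact hyU
      · obtain ⟨i, _, hi⟩ := mem_biUnion.1 h
        exact (mem_filter.1 hi).2.2

/-- **Nash-Williams' forest decomposition theorem.** Let `k` be a positive integer. A finite
simple graph `G` is the union of `k` edge-disjoint forests — its edge set can be partitioned
into `k` classes each of which induces an acyclic subgraph — if and only if every subgraph
`(V', E')` with `V'` nonempty satisfies `|E'| ≤ k|V'| − k`. -/
theorem statement_16 {V : Type} [Fintype V] (k : ℕ) (hk : 0 < k) (G : SimpleGraph V) :
    (∃ f : Sym2 V → Fin k, ∀ c : Fin k,
        SimpleGraph.IsAcyclic (SimpleGraph.fromEdgeSet {e | e ∈ G.edgeSet ∧ f e = c})) ↔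
      (∀ (V' : Finset V) (E' : Finset (Sym2 V)), ↑E' ⊆ G.edgeSet →
        (∀ e ∈ E', ∀ w ∈ e, w ∈ V') → V'.Nonempty →
          (E'.card : ℤ) ≤ k * V'.card - k) := by
  classical
  constructor
  · rintro ⟨f, hf⟩ V' E' hE hEV hne
    have h1 : ∀ c : Fin k, (E'.filter fun e => f e = c).card + 1 ≤ V'.card := by
      intro c
      refine NW_acyc_count _ (hf c) V' hne _ ?_ ?_
      · intro e he
        obtain ⟨h1, h2⟩ := mem_filter.1 he
        rw [SimpleGraph.edgeSet_fromEdgeSet]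
        exact ⟨⟨hE h1, h2⟩, SimpleGraph.not_isDiag_of_mem_edgeSet _ (hE h1)⟩
      · intro e he
        exact hEV e (mem_filter.1 he).1
    have h2 : E'.card = ∑ c : Fin k, (E'.filter fun e => f e = c).card :=
      Finset.card_eq_sum_card_fiberwise (fun _ _ => by simp)
    have hsum := Finset.sum_le_sum fun (c : Fin k) (_ : c ∈ (univ : Finset (Fin k))) => h1 c
    rw [Finset.sum_add_distrib, ← h2] at hsum
    simp only [sum_const, card_univ, Fintype.card_fin, smul_eq_mul, mul_one] at hsum
    zify at hsum
    linarith
  · intro H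
    obtain ⟨c, hc⟩ := NW_main k hk G H G.edgeFinset (by simp)
    refine ⟨c, fun i => ?_⟩
    have := hc i
    rw [SimpleGraph.coe_edgeFinset] at this
    exact this
end

section
/- Laman's theorem for the cylinder (Nixon–Owen–Power): let G=(V,E) be a graph with |V| ≥ 4 and let (G,p) be a generic framework on the cylinder Y = {(x,y,z) ∈ ℝ³ : x²+y²=1}. Then (G,p) is minimally infinitesimally rigid on Y (infinitesimally rigid on Y, and (G−e,p) not infinitesimally rigid on Y for every edge e) if and only if G is simple and (2,2)-tight. -/
open Finset

/-- Dot product of two vectors in `ℝ^d`. -/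
def dotv {d : ℕ} (x y : Fin d → ℝ) : ℝ := ∑ k, x k * y k

/-- The configuration `p` lies on the cylinder `x² + y² = 1` in `ℝ³`. -/
def OnCylinder {V : Type} (p : V → Fin 3 → ℝ) : Prop :=
  ∀ v : V, (p v 0) ^ 2 + (p v 1) ^ 2 = 1

/-- A framework on the cylinder is generic if the transcendence degree over `ℚ` of the field
generated by the `3|V|` coordinates equals `2|V|`: equivalently, some `2|V|` of the
coordinates are algebraically independent over `ℚ`, and no family of more than `2|V|`
coordinates is. -/
def CylGeneric {V : Type} [Fintype V] (p : V → Fin 3 → ℝ) : Prop :=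
  (∃ S : Finset (V × Fin 3), S.card = 2 * Fintype.card V ∧
      AlgebraicIndependent ℚ (fun i : {x // x ∈ S} => p i.1.1 i.1.2)) ∧
    ∀ T : Finset (V × Fin 3),
      AlgebraicIndependent ℚ (fun i : {x // x ∈ T} => p i.1.1 i.1.2) →
        T.card ≤ 2 * Fintype.card V

/-- An infinitesimal flex of `(G,p)` on the cylinder: each velocity vector is tangent to the
cylinder at the corresponding point, and the usual first-order edge-length equations hold. -/
def CylInfFlex {V : Type} (G : SimpleGraph V) (p u : V → Fin 3 → ℝ) : Prop :=
  (∀ v : V, u v 0 * p v 0 + u v 1 * p v 1 = 0) ∧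
    ∀ ⦃i j : V⦄, G.Adj i j → dotv (p i - p j) (u i - u j) = 0

/-- A trivial infinitesimal flex on the cylinder: a linear combination of the rotation about
the `z`-axis and the translation along the `z`-axis. -/
def CylTrivialFlex {V : Type} (p u : V → Fin 3 → ℝ) : Prop :=
  ∃ c₁ c₂ : ℝ, ∀ v : V, u v = c₁ • ![-(p v 1), p v 0, 0] + c₂ • ![0, 0, 1]

/-- `(G,p)` is infinitesimally rigid on the cylinder if every infinitesimal flex on the
cylinder is trivial. -/
def CylInfRigid {V : Type} (G : SimpleGraph V) (p : V → Fin 3 → ℝ) : Prop :=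
  ∀ u : V → Fin 3 → ℝ, CylInfFlex G p u → CylTrivialFlex p u

/-- A simple graph is (2,2)-tight: `|E| = 2|V| − 2` and every subgraph `(V',E')` with `V'`
nonempty satisfies `|E'| ≤ 2|V'| − 2`. -/
def Tight22 {V : Type} [Fintype V] (G : SimpleGraph V) : Prop :=
  (G.edgeSet.ncard : ℤ) = 2 * Fintype.card V - 2 ∧
    ∀ (V' : Finset V) (E' : Finset (Sym2 V)), ↑E' ⊆ G.edgeSet →
      (∀ e ∈ E', ∀ w ∈ e, w ∈ V') → V'.Nonempty → (E'.card : ℤ) ≤ 2 * V'.card - 2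


noncomputable def cylX (t : ℝ) : ℝ := (1 - t ^ 2) / (1 + t ^ 2)
noncomputable def cylY (t : ℝ) : ℝ := 2 * t / (1 + t ^ 2)
noncomputable def cylS (t t' : ℝ) : ℝ := cylX t * cylY t' - cylX t' * cylY t

lemma cyl_unit (t : ℝ) : cylX t ^ 2 + cylY t ^ 2 = 1 := by
  unfold cylX cylY
  have : (1 + t ^ 2) ≠ 0 := by positivity
  field_simp
  ring

lemma cylS_eq (t t' : ℝ) :
    cylS t t' = 2 * (t' - t) * (1 + t * t') / ((1 + t ^ 2) * (1 + t' ^ 2)) := by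
  unfold cylS cylX cylY
  have : (1 + t ^ 2) ≠ 0 := by positivity
  have : (1 + t' ^ 2) ≠ 0 := by positivity
  field_simp
  ring

lemma cylS_ne {t t' : ℝ} (h : t' ≠ t) (h' : 1 + t * t' ≠ 0) : cylS t t' ≠ 0 := by
  rw [cylS_eq]
  have : (1 + t ^ 2) ≠ 0 := by positivity
  have : (1 + t' ^ 2) ≠ 0 := by positivity
  have := sub_ne_zero.2 h
  positivity

lemma cylS_anti (t t' : ℝ) : cylS t t' = - cylS t' t := by unfold cylS; ring

/-- the determinant of the three rows at a new point -/
def cylDet (s1 s2 s3 w1 w2 w3 a1 a2 a3 b1 b2 b3 : ℝ) : ℝ :=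
  (s1 * a1 + w1 * b1) * (s2 * w3 - s3 * w2) + (s2 * a2 + w2 * b2) * (s3 * w1 - s1 * w3)
    + (s3 * a3 + w3 * b3) * (s1 * w2 - s2 * w1)

lemma lin_zero {X Y x y x' y' : ℝ} (h : x * Y - y * X = 0) (h' : x' * Y - y' * X = 0)
    (hc : x * y' - x' * y ≠ 0) : X = 0 ∧ Y = 0 := by
  constructor
  · apply mul_left_cancel₀ hc; linear_combination x' * h - x * h'
  · apply mul_left_cancel₀ hc; linear_combination y' * h - y * h'

lemma quad_zero {A B C x y x' y' x'' y'' : ℝ}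
    (h : A * x ^ 2 + B * x * y + C * y ^ 2 = 0)
    (h' : A * x' ^ 2 + B * x' * y' + C * y' ^ 2 = 0)
    (h'' : A * x'' ^ 2 + B * x'' * y'' + C * y'' ^ 2 = 0)
    (c1 : x * y' - x' * y ≠ 0) (c2 : x * y'' - x'' * y ≠ 0) (c3 : x' * y'' - x'' * y' ≠ 0) :
    A = 0 ∧ B = 0 ∧ C = 0 := by
  have hc : (x * y' - x' * y) * (x * y'' - x'' * y) * (x' * y'' - x'' * y') ≠ 0 := by positivity
  -- cofactors of the 3x3 matrix with rows (x^2, xy, y^2)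
  refine ⟨?_, ?_, ?_⟩ <;> apply mul_left_cancel₀ hc
  · linear_combination (x'*y'*y''^2 - x''*y''*y'^2) * h - (x*y*y''^2 - x''*y''*y^2) * h' +
      (x*y*y'^2 - x'*y'*y^2) * h''
  · linear_combination -(x'^2*y''^2 - x''^2*y'^2) * h + (x^2*y''^2 - x''^2*y^2) * h' -
      (x^2*y'^2 - x'^2*y^2) * h''
  · linear_combination (x'^2*x''*y'' - x''^2*x'*y') * h - (x^2*x''*y'' - x''^2*x*y) * h' +
      (x^2*x'*y' - x'^2*x*y) * h''

lemma noncollinear {x1 y1 x2 y2 x3 y3 : ℝ} (h1 : x1 ^ 2 + y1 ^ 2 = 1) (h2 : x2 ^ 2 + y2 ^ 2 = 1)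
    (h3 : x3 ^ 2 + y3 ^ 2 = 1) (c12 : x1 * y2 - x2 * y1 ≠ 0) (c13 : x1 * y3 - x3 * y1 ≠ 0)
    (c23 : x2 * y3 - x3 * y2 ≠ 0) :
    (x2 - x3) * (y3 - y1) - (x3 - x1) * (y2 - y3) ≠ 0 := by
  intro h
  -- point 2 - 3 and 1 - 3 parallel
  have hne : ¬ (x1 = x3 ∧ y1 = y3) := by
    rintro ⟨rfl, rfl⟩; apply c13; ring
  -- (2-3) = l (1-3)
  have hd : (x1 - x3) ^ 2 + (y1 - y3) ^ 2 ≠ 0 := by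
    intro h0
    apply hne
    constructor <;> nlinarith [sq_nonneg (x1 - x3), sq_nonneg (y1 - y3)]
  set l := ((x2 - x3) * (x1 - x3) + (y2 - y3) * (y1 - y3)) / ((x1 - x3) ^ 2 + (y1 - y3) ^ 2)
    with hl
  have hx : x2 = x3 + l * (x1 - x3) := by
    rw [hl]; field_simp; linear_combination -(y1 - y3) * h
  have hy : y2 = y3 + l * (y1 - y3) := by
    rw [hl]; field_simp; linear_combination (x1 - x3) * h
  have hq : l * (l - 1) * ((x1 - x3) ^ 2 + (y1 - y3) ^ 2) = 0 := by
    rw [hx, hy] at h2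
    linear_combination h2 - (1 - l) * h3 - l * h1
  rcases mul_eq_zero.1 hq with hq | hq
  · rcases mul_eq_zero.1 hq with hq | hq
    · apply c23; rw [hx, hy, hq]; ring
    · have : l = 1 := by linarith
      apply c12; rw [hx, hy, this]; ring
  · exact hd hq

lemma core_unit {x1 y1 x2 y2 x3 y3 z1 z2 z3 a1 a2 a3 b1 b2 b3 : ℝ}
    (h1 : x1 ^ 2 + y1 ^ 2 = 1) (h2 : x2 ^ 2 + y2 ^ 2 = 1)
    (h3 : x3 ^ 2 + y3 ^ 2 = 1) (c12 : x1 * y2 - x2 * y1 ≠ 0) (c13 : x1 * y3 - x3 * y1 ≠ 0)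
    (c23 : x2 * y3 - x3 * y2 ≠ 0)
    {x y x' y' x'' y'' : ℝ}
    (d1 : x * y' - x' * y ≠ 0) (d2 : x * y'' - x'' * y ≠ 0) (d3 : x' * y'' - x'' * y' ≠ 0)
    (H : ∀ z, cylDet (x * y1 - x1 * y) (x * y2 - x2 * y) (x * y3 - x3 * y)
      (z - z1) (z - z2) (z - z3) a1 a2 a3 b1 b2 b3 = 0)
    (H' : ∀ z, cylDet (x' * y1 - x1 * y') (x' * y2 - x2 * y') (x' * y3 - x3 * y')
      (z - z1) (z - z2) (z - z3) a1 a2 a3 b1 b2 b3 = 0)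
    (H'' : ∀ z, cylDet (x'' * y1 - x1 * y'') (x'' * y2 - x2 * y'') (x'' * y3 - x3 * y'')
      (z - z1) (z - z2) (z - z3) a1 a2 a3 b1 b2 b3 = 0) :
    (a1 = a3 ∧ b1 = b3) ∧ (a2 = a3 ∧ b2 = b3) := by
  have Q2 : ∀ x y : ℝ, (∀ z, cylDet (x * y1 - x1 * y) (x * y2 - x2 * y) (x * y3 - x3 * y)
      (z - z1) (z - z2) (z - z3) a1 a2 a3 b1 b2 b3 = 0) →
      x * (b1 * (y2 - y3) + b2 * (y3 - y1) + b3 * (y1 - y2))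
        - y * (b1 * (x2 - x3) + b2 * (x3 - x1) + b3 * (x1 - x2)) = 0 := by
    intro x y h
    have e0 := h 0
    have e1 := h 1
    have e2 := h (-1)
    unfold cylDet at e0 e1 e2
    linear_combination (e1 + e2 - 2 * e0) / 2
  obtain ⟨hX, hY⟩ := lin_zero (Q2 _ _ H) (Q2 _ _ H') d1
  have hnc := noncollinear h1 h2 h3 c12 c13 c23
  have hb1 : b1 = b3 := by
    have : ((x2 - x3) * (y3 - y1) - (x3 - x1) * (y2 - y3)) * (b1 - b3) = 0 := by
      linear_combination (y3 - y1) * hX - (x3 - x1) * hY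
    rcases mul_eq_zero.1 this with h | h
    · exact absurd h hnc
    · linarith
  have hb2 : b2 = b3 := by
    have : ((x2 - x3) * (y3 - y1) - (x3 - x1) * (y2 - y3)) * (b2 - b3) = 0 := by
      linear_combination -(y2 - y3) * hX + (x2 - x3) * hY
    rcases mul_eq_zero.1 this with h | h
    · exact absurd h hnc
    · linarith
  subst hb1
  subst hb2
  have Q1 : ∀ x y : ℝ, (∀ z, cylDet (x * y1 - x1 * y) (x * y2 - x2 * y) (x * y3 - x3 * y)
      (z - z1) (z - z2) (z - z3) a1 a2 a3 b2 b2 b2 = 0) →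
      a1 * (x * y1 - x1 * y) * ((x * y2 - x2 * y) - (x * y3 - x3 * y)) +
      a2 * (x * y2 - x2 * y) * ((x * y3 - x3 * y) - (x * y1 - x1 * y)) +
      a3 * (x * y3 - x3 * y) * ((x * y1 - x1 * y) - (x * y2 - x2 * y)) = 0 := by
    intro x y h
    have e1 := h 1
    have e2 := h (-1)
    unfold cylDet at e1 e2
    linear_combination (e1 - e2) / 2
  obtain ⟨hA, hB, hC⟩ := quad_zero
    (A := a1 * y1 * (y2 - y3) + a2 * y2 * (y3 - y1) + a3 * y3 * (y1 - y2))
    (B := -(a1 * (x1 * (y2 - y3) + y1 * (x2 - x3)) + a2 * (x2 * (y3 - y1) + y2 * (x3 - x1))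
      + a3 * (x3 * (y1 - y2) + y3 * (x1 - x2))))
    (C := a1 * x1 * (x2 - x3) + a2 * x2 * (x3 - x1) + a3 * x3 * (x1 - x2))
    (x := x) (y := y) (x' := x') (y' := y') (x'' := x'') (y'' := y'')
    (by linear_combination Q1 _ _ H) (by linear_combination Q1 _ _ H')
    (by linear_combination Q1 _ _ H'') d1 d2 d3
  have g1 : (x1 * y2 - x2 * y1) * (x1 * y3 - x3 * y1) * (a2 - a3) = 0 := by
    linear_combination x1 ^ 2 * hA + x1 * y1 * hB + y1 ^ 2 * hC
  have g2 : (x1 * y2 - x2 * y1) * (x2 * y3 - x3 * y2) * (a1 - a3) = 0 := by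
    linear_combination x2 ^ 2 * hA + x2 * y2 * hB + y2 ^ 2 * hC
  refine ⟨⟨?_, rfl⟩, ?_, rfl⟩
  · have := (mul_eq_zero.1 g2).resolve_left (by positivity); linarith
  · have := (mul_eq_zero.1 g1).resolve_left (by positivity); linarith

/-- choosing the new point -/
lemma core_choice (t1 t2 t3 z1 z2 z3 a1 a2 a3 b1 b2 b3 : ℝ)
    (c12 : cylS t1 t2 ≠ 0) (c13 : cylS t1 t3 ≠ 0) (c23 : cylS t2 t3 ≠ 0)
    (hne : ¬ ((a1 = a3 ∧ b1 = b3) ∧ (a2 = a3 ∧ b2 = b3))) (bad : Set ℝ) (hbad : bad.Finite) :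
    ∃ t z : ℝ, t ∉ bad ∧ cylDet (cylS t t1) (cylS t t2) (cylS t t3)
      (z - z1) (z - z2) (z - z3) a1 a2 a3 b1 b2 b3 ≠ 0 := by
  by_contra hcon
  push Not at hcon
  have pick : ∀ B : Set ℝ, B.Finite → ∃ t : ℝ, 0 < t ∧ t ∉ B := by
    intro B hB
    obtain ⟨t, ht, ht'⟩ := (Set.Ioi_infinite (0:ℝ)).exists_notMem_finite hB
    exact ⟨t, ht, ht'⟩
  obtain ⟨t, ht, hb⟩ := pick bad hbad
  obtain ⟨t', ht', hb'⟩ := pick (bad ∪ {t}) (hbad.union (Set.finite_singleton _))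
  obtain ⟨t'', ht'', hb''⟩ := pick (bad ∪ {t, t'}) (hbad.union (by simp))
  simp only [Set.mem_union, Set.mem_singleton_iff, Set.mem_insert_iff, not_or] at hb' hb''
  apply hne
  refine core_unit (cyl_unit t1) (cyl_unit t2) (cyl_unit t3) c12 c13 c23
    (cylS_ne (t := t) (t' := t') hb'.2 (by positivity))
    (cylS_ne (t := t) (t' := t'') hb''.2.1 (by positivity))
    (cylS_ne (t := t') (t' := t'') hb''.2.2 (by positivity))
    (fun z => hcon t z hb) (fun z => hcon t' z hb'.1) (fun z => hcon t'' z hb''.1)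

def cylCnt {V ι : Type} [DecidableEq V] (E : Finset ι) (s t : ι → V) (X : Finset V) : ℕ :=
  (E.filter (fun e => s e ∈ X ∧ t e ∈ X)).card

lemma cylCnt_super {V ι : Type} [DecidableEq V] [DecidableEq ι] (E : Finset ι) (s t : ι → V)
    (X Y : Finset V) :
    cylCnt E s t X + cylCnt E s t Y ≤ cylCnt E s t (X ∪ Y) + cylCnt E s t (X ∩ Y) := by
  unfold cylCnt
  rw [← Finset.card_union_add_card_inter]
  apply Nat.add_le_add
  · apply Finset.card_le_card
    intro e
    simp only [Finset.mem_union, Finset.mem_filter]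
    tauto
  · apply Finset.card_le_card
    intro e
    simp only [Finset.mem_inter, Finset.mem_filter]
    tauto

/-- flexes of the weighted edges -/
def CylFl {V ι : Type} (E : Finset ι) (s t : ι → V) (D : ι → ℝ × ℝ) (a b : V → ℝ) : Prop :=
  ∀ e ∈ E, (D e).1 * (a (s e) - a (t e)) + (D e).2 * (b (s e) - b (t e)) = 0

def CylConst {V : Type} (W : Finset V) (a : V → ℝ) : Prop := ∀ v ∈ W, ∀ w ∈ W, a v = a w

/-- the direction `d` is (up to sign) the one given by two points -/
def CylDir (t z t' z' : ℝ) (d : ℝ × ℝ) : Prop :=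
  d = (cylS t t', z - z') ∨ d = (cylS t' t, z' - z)

def cylBad (T : Set ℝ) : Set ℝ := T ∪ (fun x => -x⁻¹) '' T

lemma cylBad_finite {T : Set ℝ} (h : T.Finite) : (cylBad T).Finite := h.union (h.image _)

lemma cylBad_ne {T : Set ℝ} {x t : ℝ} (hx : x ∈ T) (ht : t ∉ cylBad T) : cylS x t ≠ 0 := by
  unfold cylBad at ht
  simp only [Set.mem_union, Set.mem_image, not_or, not_exists, not_and] at ht
  apply cylS_ne
  · rintro rfl; exact ht.1 hx
  · intro h
    apply ht.2 x hx
    have : x ≠ 0 := by rintro rfl; simp at h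
    field_simp
    linarith

lemma exists_virtual {ι : Type} [DecidableEq ι] (N : Finset ι) (T : Set ℝ) (hT : T.Finite) :
    ∃ r : ι → ℝ, (∀ e ∈ N, ∀ x ∈ T, cylS x (r e) ≠ 0) ∧
      ∀ e ∈ N, ∀ e' ∈ N, e ≠ e' → cylS (r e) (r e') ≠ 0 := by
  induction N using Finset.induction_on with
  | empty => exact ⟨fun _ => 0, by simp, by simp⟩
  | insert i N hi ih =>
    obtain ⟨r, h1, h2⟩ := ih
    have hfin : (cylBad (T ∪ r '' (N : Set ι))).Finite :=
      cylBad_finite (hT.union ((Finset.finite_toSet N).image _))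
    obtain ⟨x, -, hx⟩ := (Set.Ioi_infinite (0:ℝ)).exists_notMem_finite hfin
    have hne : ∀ e ∈ N, e ≠ i := by rintro e he rfl; exact hi he
    have hrx : ∀ e ∈ N, cylS (r e) x ≠ 0 := fun e he =>
      cylBad_ne (Or.inr ⟨e, he, rfl⟩) hx
    refine ⟨Function.update r i x, ?_, ?_⟩
    · intro e he y hy
      rcases Finset.mem_insert.1 he with rfl | he
      · rw [Function.update_self]; exact cylBad_ne (Or.inl hy) hx
      · rw [Function.update_of_ne (hne e he)]; exact h1 e he y hy
    · intro e he e' he' hee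
      rcases Finset.mem_insert.1 he with rfl | he
      · rcases Finset.mem_insert.1 he' with rfl | he'
        · exact absurd rfl hee
        · rw [Function.update_self, Function.update_of_ne (hne e' he'), cylS_anti]
          exact neg_ne_zero.2 (hrx e' he')
      · rcases Finset.mem_insert.1 he' with hh | he'
        · rw [hh, Function.update_self, Function.update_of_ne (hne e he)]
          exact hrx e he
        · rw [Function.update_of_ne (hne e he), Function.update_of_ne (hne e' he')]
          exact h2 e he e' he' hee

/-- the end of `e` other than `v` -/
def cylOther {V ι : Type} [DecidableEq V] (s t : ι → V) (v : V) (e : ι) : V :=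
  if s e = v then t e else s e

/-- conclusion of the existence lemma -/
def CylGood {V ι : Type} (W : Finset V) (E : Finset ι) (s t : ι → V) (real : ι → Prop)
    (τ z : V → ℝ) (D : ι → ℝ × ℝ) : Prop :=
  (∀ v ∈ W, ∀ w ∈ W, v ≠ w → cylS (τ v) (τ w) ≠ 0) ∧
  (∀ e ∈ E, real e → CylDir (τ (s e)) (z (s e)) (τ (t e)) (z (t e)) (D e)) ∧
  ∀ a b : V → ℝ, CylFl E s t D a b → CylConst W a ∧ CylConst W b

/-- virtual neighbours of `v` -/
lemma exists_q {V ι : Type} [DecidableEq V] [DecidableEq ι] (W' : Finset V) (N : Finset ι)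
    (s t : ι → V) (real : ι → Prop) (v : V)
    (hinc : ∀ e ∈ N, s e = v ∨ t e = v) (hN : ∀ e ∈ N, cylOther s t v e ∈ W')
    (hsimp : ∀ e ∈ N, ∀ e' ∈ N, real e → real e' → s(s e, t e) = s(s e', t e') → e = e')
    (τ z : V → ℝ) (hτ : ∀ v ∈ W', ∀ w ∈ W', v ≠ w → cylS (τ v) (τ w) ≠ 0) :
    ∃ q : ι → ℝ × ℝ, (∀ e ∈ N, real e → q e = (τ (cylOther s t v e), z (cylOther s t v e))) ∧
      ∀ e ∈ N, ∀ e' ∈ N, e ≠ e' → cylS (q e).1 (q e').1 ≠ 0 := by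
  classical
  obtain ⟨r, h1, h2⟩ := exists_virtual N (τ '' (W' : Set V)) ((Finset.finite_toSet W').image _)
  refine ⟨fun e => if real e then (τ (cylOther s t v e), z (cylOther s t v e)) else (r e, 0),
    fun e _ hr => by simp [hr], ?_⟩
  intro e he e' he' hee
  by_cases hr : real e <;> by_cases hr' : real e' <;> simp only [hr, hr', if_true, if_false]
  · apply hτ _ (hN e he) _ (hN e' he')
    intro heq
    apply hee
    apply hsimp e he e' he' hr hr'
    unfold cylOther at heq
    have i1 := hinc e he
    have i2 := hinc e' he'
    rw [Sym2.eq_iff]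
    grind
  · exact h1 e' he' _ ⟨_, hN e he, rfl⟩
  · rw [cylS_anti]; exact neg_ne_zero.2 (h1 e he _ ⟨_, hN e' he', rfl⟩)
  · exact h2 e he e' he' hee

lemma cylGood_attach {V ι : Type} [DecidableEq V] [DecidableEq ι] (W : Finset V) (E : Finset ι)
    (s t : ι → V) (real : ι → Prop) (v : V) (hv : v ∈ W)
    (hloop : ∀ e ∈ E, s e ≠ t e)
    (τ z : V → ℝ) (D : ι → ℝ × ℝ) (tv zv : ℝ) (q : ι → ℝ × ℝ)
    (hτ : ∀ v' ∈ W.erase v, ∀ w ∈ W.erase v, v' ≠ w → cylS (τ v') (τ w) ≠ 0)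
    (htv : tv ∉ cylBad (τ '' (W.erase v : Finset V)))
    (hreal : ∀ e ∈ E, ¬ (s e = v ∨ t e = v) → real e →
      CylDir (τ (s e)) (z (s e)) (τ (t e)) (z (t e)) (D e))
    (hq : ∀ e ∈ E, (s e = v ∨ t e = v) → real e →
      q e = (τ (cylOther s t v e), z (cylOther s t v e)))
    (hrig : ∀ a b : V → ℝ, CylFl (E.filter (fun e => ¬ (s e = v ∨ t e = v))) s t D a b →
      (∀ e ∈ E, (s e = v ∨ t e = v) → cylS tv (q e).1 * (a v - a (cylOther s t v e)) +
        (zv - (q e).2) * (b v - b (cylOther s t v e)) = 0) → CylConst W a ∧ CylConst W b) :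
    ∃ τ z D, CylGood W E s t real τ z D := by
  refine ⟨Function.update τ v tv, Function.update z v zv,
    fun e => if s e = v ∨ t e = v then (cylS tv (q e).1, zv - (q e).2) else D e, ?_, ?_, ?_⟩
  · intro x hx y hy hxy
    by_cases hxv : x = v
    · subst hxv
      rw [Function.update_self, Function.update_of_ne (Ne.symm hxy), cylS_anti]
      exact neg_ne_zero.2 (cylBad_ne (Set.mem_image_of_mem τ (by simp [hy, Ne.symm hxy])) htv)
    · by_cases hyv : y = v
      · subst hyv
        rw [Function.update_self, Function.update_of_ne hxy]
        exact cylBad_ne (Set.mem_image_of_mem τ (by simp [hx, hxy])) htv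
      · rw [Function.update_of_ne hxv, Function.update_of_ne hyv]
        exact hτ x (by simp [hx, hxv]) y (by simp [hy, hyv]) hxy
  · intro e he hr
    by_cases hinc : s e = v ∨ t e = v
    · simp only [if_pos hinc]
      rw [hq e he hinc hr]
      have hl := hloop e he
      unfold cylOther
      by_cases hs : s e = v
      · have ht : t e ≠ v := by rw [← hs]; exact hl.symm
        left
        simp [hs, ht]
      · have ht : t e = v := by tauto
        right
        simp [hs, ht]
    · simp only [if_neg hinc]
      rw [not_or] at hinc
      rw [Function.update_of_ne hinc.1, Function.update_of_ne hinc.2,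
        Function.update_of_ne hinc.1, Function.update_of_ne hinc.2]
      exact hreal e he (by tauto) hr
  · intro a b hab
    apply hrig
    · intro e he
      rw [Finset.mem_filter] at he
      have := hab e he.1
      simpa only [if_neg he.2] using this
    · intro e he hinc
      have := hab e he
      simp only [if_pos hinc] at this
      unfold cylOther
      by_cases hs : s e = v
      · simpa [hs] using this
      · have ht : t e = v := by tauto
        simp only [hs, if_false]
        rw [ht] at this
        linear_combination -this

/-- combinatorial choice of the replacing edge -/
lemma exists_pair {V ι : Type} [DecidableEq V] [DecidableEq ι] (W : Finset V) (E : Finset ι)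
    (s t : ι → V) (v : V) (hv : v ∈ W)
    (hsparse : ∀ X ⊆ W, X.Nonempty → cylCnt E s t X + 2 ≤ 2 * X.card)
    (e1 e2 e3 : ι) (h12 : e1 ≠ e2) (h13 : e1 ≠ e3) (h23 : e2 ≠ e3)
    (hN : E.filter (fun e => s e = v ∨ t e = v) = {e1, e2, e3}) :
    ∃ f1 f2 f3 : ι, f1 ≠ f2 ∧ f1 ≠ f3 ∧ f2 ≠ f3 ∧
      E.filter (fun e => s e = v ∨ t e = v) = {f1, f2, f3} ∧
      ∀ X ⊆ W.erase v, cylOther s t v f1 ∈ X → cylOther s t v f2 ∈ X →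
        cylCnt (E.filter (fun e => ¬ (s e = v ∨ t e = v))) s t X + 2 < 2 * X.card := by
  by_contra hcon
  set E0 := E.filter (fun e => ¬ (s e = v ∨ t e = v)) with hE0
  push Not at hcon
  obtain ⟨X, hXW, hX1, hX2, hXt⟩ := hcon e1 e2 e3 h12 h13 h23 hN
  obtain ⟨Y, hYW, hY1, hY2, hYt⟩ := hcon e1 e3 e2 h13 h12 h23.symm (by
    rw [hN]; ext; simp; tauto)
  have hle : ∀ Z, cylCnt E0 s t Z ≤ cylCnt E s t Z := by
    intro Z
    apply Finset.card_le_card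
    exact Finset.filter_subset_filter _ (Finset.filter_subset _ _)
  have hsup := cylCnt_super E0 s t X Y
  have hi := hsparse (X ∩ Y) (fun x hx => Finset.mem_of_mem_erase (hXW (Finset.mem_inter.1 hx).1))
    ⟨_, Finset.mem_inter.2 ⟨hX1, hY1⟩⟩
  have hi' := hle (X ∩ Y)
  have hcard := Finset.card_union_add_card_inter X Y
  have hvn : v ∉ X ∪ Y := by
    intro h
    rcases Finset.mem_union.1 h with h | h
    · exact Finset.notMem_erase _ _ (hXW h)
    · exact Finset.notMem_erase _ _ (hYW h)
  have hbig := hsparse (insert v (X ∪ Y)) (by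
    intro x hx
    rcases Finset.mem_insert.1 hx with rfl | hx
    · exact hv
    · rcases Finset.mem_union.1 hx with h | h
      · exact Finset.mem_of_mem_erase (hXW h)
      · exact Finset.mem_of_mem_erase (hYW h)) ⟨v, by simp⟩
  rw [Finset.card_insert_of_notMem hvn] at hbig
  have hcount : cylCnt E0 s t (X ∪ Y) + 3 ≤ cylCnt E s t (insert v (X ∪ Y)) := by
    have h3 : (E.filter (fun e => s e = v ∨ t e = v)).card = 3 := by
      rw [hN]; exact Finset.card_eq_three.2 ⟨_, _, _, h12, h13, h23, rfl⟩
    rw [← h3]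
    unfold cylCnt
    rw [← Finset.card_union_of_disjoint]
    · apply Finset.card_le_card
      intro e he
      rcases Finset.mem_union.1 he with he | he
      · simp only [hE0, Finset.mem_filter] at he ⊢
        refine ⟨he.1.1, ?_, ?_⟩
        · exact Finset.mem_insert_of_mem he.2.1
        · exact Finset.mem_insert_of_mem he.2.2
      · have hot : cylOther s t v e ∈ X ∪ Y := by
          have := he
          rw [hN] at this
          simp only [Finset.mem_insert, Finset.mem_singleton] at this
          rcases this with rfl | rfl | rfl
          · exact Finset.mem_union_left _ hX1
          · exact Finset.mem_union_left _ hX2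
          · exact Finset.mem_union_right _ hY2
        rw [Finset.mem_filter] at he ⊢
        refine ⟨he.1, ?_⟩
        unfold cylOther at hot
        by_cases hs : s e = v
        · rw [if_pos hs] at hot
          exact ⟨by simp [hs], Finset.mem_insert_of_mem hot⟩
        · rw [if_neg hs] at hot
          have ht : t e = v := by tauto
          exact ⟨Finset.mem_insert_of_mem hot, by simp [ht]⟩
    · rw [Finset.disjoint_left]
      intro e he he'
      simp only [hE0, Finset.mem_filter] at he he'
      tauto
  omega

lemma exists_deg {V ι : Type} [DecidableEq V] [DecidableEq ι] (W : Finset V) (E : Finset ι)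
    (s t : ι → V) (hW : W.Nonempty) (hcard : E.card + 2 = 2 * W.card) :
    ∃ v ∈ W, (E.filter (fun e => s e = v ∨ t e = v)).card ≤ 3 := by
  by_contra hcon
  push Not at hcon
  have h1 : W.card * 4 ≤ ∑ v ∈ W, (E.filter (fun e => s e = v ∨ t e = v)).card := by
    rw [← smul_eq_mul]
    apply Finset.card_nsmul_le_sum
    intro v hv
    exact hcon v hv
  have h2 : ∑ v ∈ W, (E.filter (fun e => s e = v ∨ t e = v)).card
      = ∑ e ∈ E, (W.filter (fun v => s e = v ∨ t e = v)).card := by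
    simp only [Finset.card_filter]
    exact Finset.sum_comm
  have h3 : ∑ e ∈ E, (W.filter (fun v => s e = v ∨ t e = v)).card ≤ E.card * 2 := by
    rw [← smul_eq_mul]
    apply Finset.sum_le_card_nsmul
    intro e _
    calc _ ≤ ({s e, t e} : Finset V).card := by
          apply Finset.card_le_card
          intro v hv
          simp only [Finset.mem_filter] at hv
          simp only [Finset.mem_insert, Finset.mem_singleton]
          rcases hv.2 with h | h
          · left; exact h.symm
          · right; exact h.symm
      _ ≤ 2 := Finset.card_le_two
  omega

lemma solve3 {s1 s2 s3 w1 w2 w3 a1 a2 a3 b1 b2 b3 A B c : ℝ}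
    (hd : cylDet s1 s2 s3 w1 w2 w3 a1 a2 a3 b1 b2 b3 ≠ 0)
    (h1 : s1 * (A - c * a1) + w1 * (B - c * b1) = 0)
    (h2 : s2 * (A - c * a2) + w2 * (B - c * b2) = 0)
    (h3 : s3 * (A - c * a3) + w3 * (B - c * b3) = 0) : c = 0 ∧ A = 0 ∧ B = 0 := by
  have hc : c = 0 := by
    apply mul_left_cancel₀ hd
    unfold cylDet
    linear_combination (-(s2 * w3 - s3 * w2)) * h1 - (s3 * w1 - s1 * w3) * h2
      - (s1 * w2 - s2 * w1) * h3
  subst hc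
  have e1 : s1 * A + w1 * B = 0 := by linear_combination h1
  have e2 : s2 * A + w2 * B = 0 := by linear_combination h2
  have e3 : s3 * A + w3 * B = 0 := by linear_combination h3
  refine ⟨rfl, ?_, ?_⟩
  · apply mul_left_cancel₀ hd
    unfold cylDet
    linear_combination (s1 * a1 + w1 * b1) * (w3 * e2 - w2 * e3) +
      (s2 * a2 + w2 * b2) * (w1 * e3 - w3 * e1) + (s3 * a3 + w3 * b3) * (w2 * e1 - w1 * e2)
  · apply mul_left_cancel₀ hd
    unfold cylDet
    linear_combination (s1 * a1 + w1 * b1) * (s2 * e3 - s3 * e2) +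
      (s2 * a2 + w2 * b2) * (s3 * e1 - s1 * e3) + (s3 * a3 + w3 * b3) * (s1 * e2 - s2 * e1)

lemma const_insert {V : Type} [DecidableEq V] {W : Finset V} {v : V} {a : V → ℝ} {k : ℝ}
    (hv : a v - k = 0) (h : ∀ w ∈ W.erase v, a w = k) : CylConst W a := by
  have : ∀ w ∈ W, a w = k := by
    intro w hw
    by_cases hwv : w = v
    · subst hwv; linarith
    · exact h w (Finset.mem_erase.2 ⟨hwv, hw⟩)
  intro x hx y hy
  rw [this x hx, this y hy]

theorem exists_good {V ι : Type} [DecidableEq V] [DecidableEq ι] (n : ℕ) :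
    ∀ (W : Finset V) (E : Finset ι) (s t : ι → V) (real : ι → Prop), W.card = n + 1 →
      (∀ e ∈ E, s e ∈ W ∧ t e ∈ W) →
      (∀ X ⊆ W, X.Nonempty → cylCnt E s t X + 2 ≤ 2 * X.card) →
      E.card + 2 = 2 * W.card →
      (∀ e ∈ E, ∀ e' ∈ E, real e → real e' → s(s e, t e) = s(s e', t e') → e = e') →
      ∃ τ z D, CylGood W E s t real τ z D := by
  induction n with
  | zero =>
    intro W E s t real hW hE hsparse hcard hsimp
    have hE0 : E = ∅ := by rw [← Finset.card_eq_zero]; omega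
    obtain ⟨v, rfl⟩ := Finset.card_eq_one.1 hW
    subst hE0
    refine ⟨fun _ => 0, fun _ => 0, fun _ => 0, ?_, by simp, ?_⟩
    · intro x hx y hy hxy
      rw [Finset.mem_singleton] at hx hy
      exact absurd (hx.trans hy.symm) hxy
    · intro a b _
      constructor <;>
      · intro x hx y hy
        rw [Finset.mem_singleton] at hx hy
        rw [hx, hy]
  | succ n ih =>
    intro W E s t real hW hE hsparse hcard hsimp
    have hWne : W.Nonempty := Finset.card_pos.1 (by omega)
    obtain ⟨v, hv, hdeg⟩ := exists_deg W E s t hWne hcard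
    have hloop : ∀ e ∈ E, s e ≠ t e := by
      intro e he hst
      have := hsparse {s e} (by simpa using (hE e he).1) (by simp)
      have h1 : 0 < cylCnt E s t {s e} := by
        apply Finset.card_pos.2
        exact ⟨e, by simp [he, hst]⟩
      simp at this
      omega
    set N := E.filter (fun e => s e = v ∨ t e = v) with hN
    set E0 := E.filter (fun e => ¬ (s e = v ∨ t e = v)) with hE0
    have hcardW : (W.erase v).card = n + 1 := by rw [Finset.card_erase_of_mem hv]; omega
    have hsplit : N.card + E0.card = E.card := Finset.card_filter_add_card_filter_not _
    have hE0W : ∀ e ∈ E0, s e ∈ W.erase v ∧ t e ∈ W.erase v := by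
      intro e he
      rw [hE0, Finset.mem_filter] at he
      simp only [Finset.mem_erase]
      have := hE e he.1
      tauto
    have hmemE0 : ∀ e ∈ E0, e ∈ E := fun e he => (Finset.mem_filter.1 he).1
    have hcntle : ∀ Z, cylCnt E0 s t Z ≤ cylCnt E s t Z := by
      intro Z
      apply Finset.card_le_card
      exact Finset.filter_subset_filter _ (Finset.filter_subset _ _)
    have hE0card : E0.card + 2 ≤ 2 * (W.erase v).card := by
      refine le_trans ?_ (hsparse (W.erase v) (Finset.erase_subset _ _)
        (Finset.card_pos.1 (by omega)))
      refine Nat.add_le_add_right (le_trans ?_ (hcntle _)) 2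
      apply Finset.card_le_card
      intro e he
      exact Finset.mem_filter.2 ⟨he, hE0W e he⟩
    have hNinc : ∀ e ∈ N, s e = v ∨ t e = v := fun e he => (Finset.mem_filter.1 he).2
    have hNE : ∀ e ∈ N, e ∈ E := fun e he => (Finset.mem_filter.1 he).1
    have hNo : ∀ e ∈ N, cylOther s t v e ∈ W.erase v := by
      intro e he
      have h1 := hNinc e he
      have h2 := hE e (hNE e he)
      have h3 := hloop e (hNE e he)
      unfold cylOther
      rw [Finset.mem_erase]
      grind
    have hNmem : ∀ e ∈ E, (s e = v ∨ t e = v) → e ∈ N := fun e he h =>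
      Finset.mem_filter.2 ⟨he, h⟩
    have hEmem : ∀ e ∈ E, ¬ (s e = v ∨ t e = v) → e ∈ E0 := fun e he h =>
      Finset.mem_filter.2 ⟨he, h⟩
    have hNsimp : ∀ e ∈ N, ∀ e' ∈ N, real e → real e' → s(s e, t e) = s(s e', t e') → e = e' :=
      fun e he e' he' => hsimp e (hNE e he) e' (hNE e' he')
    have hor : N.card = 2 ∨ N.card = 3 := by omega
    rcases hor with h2 | h3
    · -- degree two
      obtain ⟨e1, e2, h12, hNeq⟩ := Finset.card_eq_two.1 h2
      obtain ⟨τ, z, D, g1, g2, g3⟩ := ih (W.erase v) E0 s t real hcardW hE0W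
        (fun X hX hXn => le_trans (Nat.add_le_add_right (hcntle X) 2)
          (hsparse X (hX.trans (Finset.erase_subset _ _)) hXn)) (by omega)
        (fun e he e' he' => hsimp e (hmemE0 e he) e' (hmemE0 e' he'))
      obtain ⟨q, q1, q2⟩ := exists_q (W.erase v) N s t real v hNinc hNo hNsimp τ z g1
      have m1 : e1 ∈ N := by simp [hNeq]
      have m2 : e2 ∈ N := by simp [hNeq]
      obtain ⟨r, r1, -⟩ := exists_virtual ({0} : Finset ℕ) {(q e1).1, (q e2).1} (by simp)
      obtain ⟨tv, zv, htv, hdet⟩ := core_choice (q e1).1 (q e2).1 (r 0) (q e1).2 (q e2).2 0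
        0 0 1 0 0 0 (q2 e1 m1 e2 m2 h12) (r1 0 (by simp) _ (by simp)) (r1 0 (by simp) _ (by simp))
        (by simp) (cylBad (τ '' (W.erase v : Finset V)))
        (cylBad_finite ((Finset.finite_toSet _).image _))
      refine cylGood_attach W E s t real v hv hloop τ z D tv zv q g1 htv
        (fun e he hi => g2 e (hEmem e he hi)) (fun e he hi => q1 e (hNmem e he hi)) ?_
      intro a b hfl hrow
      obtain ⟨ca, cb⟩ := g3 a b hfl
      have hw := hNo e1 m1
      have i1 := hrow e1 (hNE _ m1) (hNinc _ m1)
      have i2 := hrow e2 (hNE _ m2) (hNinc _ m2)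
      rw [ca _ (hNo e2 m2) _ hw, cb _ (hNo e2 m2) _ hw] at i2
      set k := a (cylOther s t v e1) with hk
      set l := b (cylOther s t v e1) with hl
      have hd2 : cylS tv (q e1).1 * (zv - (q e2).2) - cylS tv (q e2).1 * (zv - (q e1).2) ≠ 0 := by
        intro h0
        apply hdet
        unfold cylDet
        linear_combination cylS tv (r 0) * h0
      refine ⟨const_insert (v := v) (k := k) ?_ (fun w hw' => ca _ hw' _ hw),
        const_insert (v := v) (k := l) ?_ (fun w hw' => cb _ hw' _ hw)⟩
      · apply mul_left_cancel₀ hd2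
        linear_combination (zv - (q e2).2) * i1 - (zv - (q e1).2) * i2
      · apply mul_left_cancel₀ hd2
        linear_combination cylS tv (q e1).1 * i2 - cylS tv (q e2).1 * i1
    · -- degree three
      obtain ⟨e1', e2', e3', h12', h13', h23', hNeq'⟩ := Finset.card_eq_three.1 h3
      obtain ⟨e1, e2, e3, h12, h13, h23, hNeq, hfree⟩ :=
        exists_pair W E s t v hv hsparse e1' e2' e3' h12' h13' h23' hNeq'
      change N = _ at hNeq
      have m1 : e1 ∈ N := by simp [hNeq]
      have m2 : e2 ∈ N := by simp [hNeq]
      have m3 : e3 ∈ N := by simp [hNeq]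
      have he1 : e1 ∉ E0 := by
        intro h
        exact (Finset.mem_filter.1 h).2 (hNinc _ m1)
      have hne : ∀ e ∈ E0, e ≠ e1 := by rintro e he rfl; exact he1 he
      set w1 := cylOther s t v e1 with hw1
      set w2 := cylOther s t v e2 with hw2
      set w3 := cylOther s t v e3 with hw3
      have hw12 : w1 ≠ w2 := by
        intro h
        have := hfree {w1} (by simpa using hNo e1 m1) (by simp) (by simp [h])
        simp at this
      obtain ⟨τ, z, D, g1, g2, g3⟩ := ih (W.erase v) (insert e1 E0) (Function.update s e1 w1)
        (Function.update t e1 w2) (fun e => real e ∧ e ≠ e1) hcardW (by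
          intro e he
          rcases Finset.mem_insert.1 he with rfl | he
          · simp only [Function.update_self]
            exact ⟨hNo _ m1, hNo _ m2⟩
          · rw [Function.update_of_ne (hne e he), Function.update_of_ne (hne e he)]
            exact hE0W e he) (by
          intro X hX hXn
          have hle : cylCnt (insert e1 E0) (Function.update s e1 w1) (Function.update t e1 w2) X
              ≤ cylCnt E0 s t X + (if w1 ∈ X ∧ w2 ∈ X then 1 else 0) := by
            unfold cylCnt
            rw [Finset.filter_insert]
            have hfe : E0.filter (fun e => Function.update s e1 w1 e ∈ X ∧
                Function.update t e1 w2 e ∈ X) = E0.filter (fun e => s e ∈ X ∧ t e ∈ X) := by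
              apply Finset.filter_congr
              intro e he
              rw [Function.update_of_ne (hne e he), Function.update_of_ne (hne e he)]
            rw [hfe]
            simp only [Function.update_self]
            split_ifs
            · exact Finset.card_insert_le _ _
            · simp
          have hs := hsparse X (hX.trans (Finset.erase_subset _ _)) hXn
          have hc := hcntle X
          split_ifs at hle with hif
          · have := hfree X hX hif.1 hif.2
            have h' : cylCnt E0 s t X + 2 < 2 * X.card := this
            omega
          · omega) (by
          rw [Finset.card_insert_of_notMem he1]
          omega) (by
          intro e he e' he' hr hr'
          have k1 := Finset.mem_of_mem_insert_of_ne he hr.2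
          have k2 := Finset.mem_of_mem_insert_of_ne he' hr'.2
          rw [Function.update_of_ne hr.2, Function.update_of_ne hr.2,
            Function.update_of_ne hr'.2, Function.update_of_ne hr'.2]
          exact hsimp e (hmemE0 _ k1) e' (hmemE0 _ k2) hr.1 hr'.1)
      have hfl1 : ∀ a b, CylFl E0 s t D a b →
          (D e1).1 * (a w1 - a w2) + (D e1).2 * (b w1 - b w2) = 0 →
          CylConst (W.erase v) a ∧ CylConst (W.erase v) b := by
        intro a b h h'
        apply g3
        intro e he
        rcases Finset.mem_insert.1 he with rfl | he
        · simpa only [Function.update_self] using h'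
        · rw [Function.update_of_ne (hne e he), Function.update_of_ne (hne e he)]
          exact h e he
      have hflex : ∃ a0 b0 : V → ℝ, ¬ (a0 w1 = a0 w2 ∧ b0 w1 = b0 w2) ∧
          ∀ a b, CylFl E0 s t D a b → ∃ c k l : ℝ, ∀ w ∈ W.erase v,
            a w = k + c * a0 w ∧ b w = l + c * b0 w := by
        by_cases hex : ∃ a0 b0, CylFl E0 s t D a0 b0 ∧
            (D e1).1 * (a0 w1 - a0 w2) + (D e1).2 * (b0 w1 - b0 w2) ≠ 0
        · obtain ⟨a0, b0, h0, h1⟩ := hex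
          refine ⟨a0, b0, ?_, ?_⟩
          · rintro ⟨x1, x2⟩
            apply h1
            rw [x1, x2]; ring
          · intro a b hab
            set c := ((D e1).1 * (a w1 - a w2) + (D e1).2 * (b w1 - b w2)) /
              ((D e1).1 * (a0 w1 - a0 w2) + (D e1).2 * (b0 w1 - b0 w2)) with hc
            have hc' : (D e1).1 * (a w1 - a w2) + (D e1).2 * (b w1 - b w2) =
              c * ((D e1).1 * (a0 w1 - a0 w2) + (D e1).2 * (b0 w1 - b0 w2)) := by
              rw [hc, div_mul_cancel₀ _ h1]
            obtain ⟨x1, x2⟩ := hfl1 (fun w => a w - c * a0 w) (fun w => b w - c * b0 w) (by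
              intro e he
              linear_combination hab e he - c * h0 e he) (by linear_combination hc')
            refine ⟨c, a w1 - c * a0 w1, b w1 - c * b0 w1, ?_⟩
            intro w hw
            have y1 := x1 w hw w1 (hNo _ m1)
            have y2 := x2 w hw w1 (hNo _ m1)
            exact ⟨by linear_combination y1, by linear_combination y2⟩
        · push Not at hex
          refine ⟨fun w => if w = w1 then 1 else 0, fun _ => 0, ?_, ?_⟩
          · rintro ⟨x1, -⟩
            simp [hw12.symm] at x1
          · intro a b hab
            obtain ⟨x1, x2⟩ := hfl1 a b hab (hex a b hab)
            exact ⟨0, a w1, b w1, fun w hw => ⟨by simpa using x1 w hw w1 (hNo _ m1),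
              by simpa using x2 w hw w1 (hNo _ m1)⟩⟩
      obtain ⟨a0, b0, hne0, hrep⟩ := hflex
      obtain ⟨q, q1, q2⟩ := exists_q (W.erase v) N s t real v hNinc hNo hNsimp τ z g1
      obtain ⟨tv, zv, htv, hdet⟩ := core_choice (q e1).1 (q e2).1 (q e3).1
        (q e1).2 (q e2).2 (q e3).2 (a0 w1) (a0 w2) (a0 w3) (b0 w1) (b0 w2) (b0 w3)
        (q2 e1 m1 e2 m2 h12) (q2 e1 m1 e3 m3 h13) (q2 e2 m2 e3 m3 h23)
        (by
          rintro ⟨⟨x1, x2⟩, x3, x4⟩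
          exact hne0 ⟨x1.trans x3.symm, x2.trans x4.symm⟩)
        (cylBad (τ '' (W.erase v : Finset V)))
        (cylBad_finite ((Finset.finite_toSet _).image _))
      refine cylGood_attach W E s t real v hv hloop τ z D tv zv q g1 htv
        ?_ (fun e he hi => q1 e (hNmem e he hi)) ?_
      · intro e he hi hr
        have hm := hEmem e he hi
        have := g2 e (Finset.mem_insert_of_mem hm) ⟨hr, hne e hm⟩
        rwa [Function.update_of_ne (hne e hm), Function.update_of_ne (hne e hm)] at this
      intro a b hfl hrow
      obtain ⟨c, k, l, hckl⟩ := hrep a b hfl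
      have i1 := hrow e1 (hNE _ m1) (hNinc _ m1)
      have i2 := hrow e2 (hNE _ m2) (hNinc _ m2)
      have i3 := hrow e3 (hNE _ m3) (hNinc _ m3)
      rw [(hckl _ (hNo _ m1)).1, (hckl _ (hNo _ m1)).2] at i1
      rw [(hckl _ (hNo _ m2)).1, (hckl _ (hNo _ m2)).2] at i2
      rw [(hckl _ (hNo _ m3)).1, (hckl _ (hNo _ m3)).2] at i3
      obtain ⟨rfl, hA, hB⟩ := solve3 (A := a v - k) (B := b v - l) (c := c) hdet
        (by linear_combination i1) (by linear_combination i2) (by linear_combination i3)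
      refine ⟨const_insert (v := v) (k := k) hA (fun w hw' => ?_),
        const_insert (v := v) (k := l) hB (fun w hw' => ?_)⟩
      · rw [(hckl _ hw').1]; ring
      · rw [(hckl _ hw').2]; ring

/-! ### reduction to two scalar functions -/

def CylPFl {V : Type} (G : SimpleGraph V) (p : V → Fin 3 → ℝ) (a b : V → ℝ) : Prop :=
  ∀ ⦃i j : V⦄, G.Adj i j → (p i 0 * p j 1 - p j 0 * p i 1) * (a i - a j) +
    (p i 2 - p j 2) * (b i - b j) = 0

lemma cylFlex_iff {V : Type} (G : SimpleGraph V) (p : V → Fin 3 → ℝ) (a b : V → ℝ) :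
    CylInfFlex G p (fun v => (-a v) • ![-(p v 1), p v 0, 0] + b v • ![0, 0, 1]) ↔
      CylPFl G p a b := by
  constructor
  · rintro ⟨-, h⟩ i j hij
    have := h hij
    simp only [dotv, Fin.sum_univ_three, Pi.sub_apply, Pi.add_apply, Pi.smul_apply,
      smul_eq_mul, Matrix.cons_val_zero, Matrix.cons_val_one, Matrix.cons_val] at this
    linear_combination this
  · intro h
    refine ⟨fun v => ?_, fun i j hij => ?_⟩
    · simp only [Pi.add_apply, Pi.smul_apply,
        smul_eq_mul, Matrix.cons_val_zero, Matrix.cons_val_one, Matrix.cons_val]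
      ring
    · have := h hij
      simp only [dotv, Fin.sum_univ_three, Pi.sub_apply, Pi.add_apply, Pi.smul_apply,
        smul_eq_mul, Matrix.cons_val_zero, Matrix.cons_val_one, Matrix.cons_val]
      linear_combination this

lemma cylRigid_iff {V : Type} [Nonempty V] (G : SimpleGraph V) (p : V → Fin 3 → ℝ)
    (hcyl : OnCylinder p) :
    CylInfRigid G p ↔ ∀ a b : V → ℝ, CylPFl G p a b → ∀ v w, a v = a w ∧ b v = b w := by
  constructor
  · intro h a b hab
    obtain ⟨c1, c2, hc⟩ := h _ ((cylFlex_iff G p a b).2 hab)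
    have key : ∀ v, a v = -c1 ∧ b v = c2 := by
      intro v
      have h0 := congrFun (hc v) 0
      have h1 := congrFun (hc v) 1
      have h2 := congrFun (hc v) 2
      simp only [Pi.add_apply, Pi.smul_apply,
        smul_eq_mul, Matrix.cons_val_zero, Matrix.cons_val_one, Matrix.cons_val] at h0 h1 h2
      have hv := hcyl v
      refine ⟨?_, by linear_combination h2⟩
      linear_combination (p v 1) * h0 - (p v 0) * h1 - (a v + c1) * hv
    intro v w
    rw [(key v).1, (key v).2, (key w).1, (key w).2]
    exact ⟨rfl, rfl⟩
  · intro h u hu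
    have hrep : u = (fun v => (-(p v 1 * u v 0 - p v 0 * u v 1)) • ![-(p v 1), p v 0, 0] +
        (u v 2) • ![0, 0, 1]) := by
      funext v i
      have hv := hcyl v
      have ht := hu.1 v
      fin_cases i
      · simp
        linear_combination (-(u v 0)) * hv + (p v 0) * ht
      · simp
        linear_combination (-(u v 1)) * hv + (p v 1) * ht
      · simp
    obtain ⟨v0⟩ := ‹Nonempty V›
    rw [hrep, cylFlex_iff G p (fun v => p v 1 * u v 0 - p v 0 * u v 1) (fun v => u v 2)] at hu
    have hc := h _ _ hu
    refine ⟨-(p v0 1 * u v0 0 - p v0 0 * u v0 1), u v0 2, fun v => ?_⟩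
    have h1 := (hc v v0).1
    have h2 := (hc v v0).2
    conv_lhs => rw [hrep]
    simp only at h1 h2 ⊢
    rw [h1, h2]

/-! ### counting -/

def cylRow {V : Type} (p : V → Fin 3 → ℝ) (e : Sym2 V) : ((V → ℝ) × (V → ℝ)) →ₗ[ℝ] ℝ where
  toFun u := Sym2.lift ⟨fun i j => (p i 0 * p j 1 - p j 0 * p i 1) * (u.1 i - u.1 j) +
    (p i 2 - p j 2) * (u.2 i - u.2 j), fun i j => by ring⟩ e
  map_add' u w := by
    induction e using Sym2.ind
    simp only [Sym2.lift_mk, Prod.fst_add, Prod.snd_add, Pi.add_apply]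
    ring
  map_smul' c u := by
    induction e using Sym2.ind
    simp only [Sym2.lift_mk, Prod.smul_fst, Prod.smul_snd, Pi.smul_apply, smul_eq_mul,
      RingHom.id_apply]
    ring

lemma cylRow_mk {V : Type} (p : V → Fin 3 → ℝ) (i j : V) (u : (V → ℝ) × (V → ℝ)) :
    cylRow p s(i, j) u = (p i 0 * p j 1 - p j 0 * p i 1) * (u.1 i - u.1 j) +
    (p i 2 - p j 2) * (u.2 i - u.2 j) := rfl

lemma cylPFl_iff {V : Type} (G : SimpleGraph V) (p : V → Fin 3 → ℝ) (a b : V → ℝ) :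
    CylPFl G p a b ↔ ∀ e ∈ G.edgeSet, cylRow p e (a, b) = 0 := by
  constructor
  · intro h e he
    induction e using Sym2.ind with
    | _ i j => exact h ((SimpleGraph.mem_edgeSet G).1 he)
  · intro h i j hij
    exact h s(i, j) ((SimpleGraph.mem_edgeSet G).2 hij)

lemma cylRow_const {V : Type} (p : V → Fin 3 → ℝ) (e : Sym2 V) (k l : ℝ) :
    cylRow p e (fun _ => k, fun _ => l) = 0 := by
  induction e using Sym2.ind
  rw [cylRow_mk]
  ring

lemma cylRow_zero {V : Type} (p : V → Fin 3 → ℝ) (e : Sym2 V) (u : (V → ℝ) × (V → ℝ))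
    (h : ∀ v ∈ e, u.1 v = 0 ∧ u.2 v = 0) : cylRow p e u = 0 := by
  induction e using Sym2.ind with
  | _ i j =>
    rw [cylRow_mk, (h i (by simp)).1, (h i (by simp)).2, (h j (by simp)).1, (h j (by simp)).2]
    ring

lemma cyl_count_upper {V : Type} [Fintype V] (p : V → Fin 3 → ℝ) (V' : Finset V)
    (hne : V'.Nonempty) (E' : Finset (Sym2 V)) (hE : ∀ e ∈ E', ∀ w ∈ e, w ∈ V')
    (hdual : ∀ e ∈ E', ∃ u, cylRow p e u ≠ 0 ∧ ∀ e' ∈ E', e' ≠ e → cylRow p e' u = 0) :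
    E'.card + 2 ≤ 2 * V'.card := by
  classical
  obtain ⟨v0, hv0⟩ := hne
  have hdual' : ∀ e : E', ∃ u, cylRow p e u ≠ 0 ∧ (∀ e' : E', e' ≠ e → cylRow p e' u = 0) ∧
      u.1 v0 = 0 ∧ u.2 v0 = 0 := by
    rintro ⟨e, he⟩
    obtain ⟨u, h1, h2⟩ := hdual e he
    refine ⟨u - (fun _ => u.1 v0, fun _ => u.2 v0), ?_, ?_, by simp, by simp⟩
    · rw [map_sub, cylRow_const, sub_zero]; exact h1
    · rintro ⟨e', he'⟩ hee
      rw [map_sub, cylRow_const, sub_zero]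
      exact h2 e' he' (fun h => hee (Subtype.ext h))
  choose U hU1 hU2 hU3 hU4 using hdual'
  let Ψ0 : ((E' → ℝ) × (ℝ × ℝ)) →ₗ[ℝ] ((V → ℝ) × (V → ℝ)) :=
    (Fintype.linearCombination ℝ U).coprod
      ((LinearMap.toSpanSingleton ℝ ((V → ℝ) × (V → ℝ)) (fun _ => 1, fun _ => 0)).coprod
        (LinearMap.toSpanSingleton ℝ ((V → ℝ) × (V → ℝ)) (fun _ => 0, fun _ => 1)))
  let R : ((V → ℝ) × (V → ℝ)) →ₗ[ℝ] ((V' → ℝ) × (V' → ℝ)) :=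
    (LinearMap.funLeft ℝ ℝ (Subtype.val : V' → V)).prodMap
      (LinearMap.funLeft ℝ ℝ (Subtype.val : V' → V))
  have hΨ0 : ∀ c k l, Ψ0 (c, k, l) = ∑ e : E', c e • U e + (fun _ => k, fun _ => l) := by
    intro c k l
    simp only [Ψ0, LinearMap.coprod_apply, Fintype.linearCombination_apply,
      LinearMap.toSpanSingleton_apply]
    congr 1
    ext <;> simp
  have hinj : Function.Injective (R ∘ₗ Ψ0) := by
    rw [← LinearMap.ker_eq_bot, LinearMap.ker_eq_bot']
    rintro ⟨c, k, l⟩ h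
    rw [LinearMap.comp_apply] at h
    have hz : ∀ v ∈ V', (Ψ0 (c, k, l)).1 v = 0 ∧ (Ψ0 (c, k, l)).2 v = 0 := by
      intro v hv
      exact ⟨congrFun (congrArg Prod.fst h) ⟨v, hv⟩, congrFun (congrArg Prod.snd h) ⟨v, hv⟩⟩
    have hc : ∀ e : E', c e = 0 := by
      intro e
      have := cylRow_zero p e (Ψ0 (c, k, l)) (fun w hw => hz w (hE e e.2 w hw))
      rw [hΨ0, map_add, cylRow_const, add_zero, map_sum, Finset.sum_eq_single e] at this
      · rw [map_smul, smul_eq_mul] at this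
        exact (mul_eq_zero.1 this).resolve_right (hU1 e)
      · intro e' _ hee
        rw [map_smul, hU2 e' e (Ne.symm hee), smul_zero]
      · simp
    have hc' : c = 0 := funext hc
    have := hz v0 hv0
    rw [hΨ0, hc'] at this
    simp at this
    rw [hc', this.1, this.2]
    rfl
  have := LinearMap.finrank_le_finrank_of_injective hinj
  simp at this
  omega

lemma cyl_count_lower {V : Type} [Fintype V] [Nonempty V] (G : SimpleGraph V)
    (p : V → Fin 3 → ℝ)
    (h : ∀ a b : V → ℝ, CylPFl G p a b → ∀ v w, a v = a w ∧ b v = b w) :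
    2 * Fintype.card V ≤ G.edgeSet.ncard + 2 := by
  classical
  obtain ⟨v0⟩ := ‹Nonempty V›
  let Φ : ((V → ℝ) × (V → ℝ)) →ₗ[ℝ] ((G.edgeSet → ℝ) × (ℝ × ℝ)) :=
    (LinearMap.pi (fun e : G.edgeSet => cylRow p e.1)).prod
      (((LinearMap.proj v0).comp (LinearMap.fst ℝ _ _)).prod
        ((LinearMap.proj v0).comp (LinearMap.snd ℝ _ _)))
  have hinj : Function.Injective Φ := by
    rw [← LinearMap.ker_eq_bot, LinearMap.ker_eq_bot']
    rintro ⟨a, b⟩ hab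
    have h1 : ∀ e : G.edgeSet, cylRow p e.1 (a, b) = 0 :=
      fun e => congrFun (congrArg Prod.fst hab) e
    have h2 : a v0 = 0 := congrArg (fun x => x.2.1) hab
    have h3 : b v0 = 0 := congrArg (fun x => x.2.2) hab
    have hc := h a b ((cylPFl_iff G p a b).2 (fun e he => h1 ⟨e, he⟩))
    ext v
    · simp [(hc v v0).1, h2]
    · simp [(hc v v0).2, h3]
  have := LinearMap.finrank_le_finrank_of_injective hinj
  simp at this
  rw [Set.ncard_eq_toFinset_card', Set.toFinset_card]
  simp
  omega

/-! ### genericity -/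

lemma generic_param {V : Type} [Fintype V] (p : V → Fin 3 → ℝ) (hcyl : OnCylinder p)
    (hgen : CylGeneric p) : ∃ τ z : V → ℝ, AlgebraicIndependent ℚ (Sum.elim τ z) ∧
      ∀ v, p v 0 = cylX (τ v) ∧ p v 1 = cylY (τ v) ∧ p v 2 = z v := by
  classical
  obtain ⟨⟨S, hS, hind⟩, -⟩ := hgen
  set τ : V → ℝ := fun v => p v 1 / (1 + p v 0) with hτ
  set z : V → ℝ := fun v => p v 2 with hz
  have hpar : ∀ v, p v 0 ≠ -1 → p v 0 = cylX (τ v) ∧ p v 1 = cylY (τ v) := by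
    intro v hv
    have h1 : 1 + p v 0 ≠ 0 := by
      intro h; apply hv; linarith
    have h2 := hcyl v
    have hq : (1 + p v 0) ^ 2 + p v 1 ^ 2 ≠ 0 := by positivity
    unfold cylX cylY
    simp only [hτ]
    constructor
    · field_simp
      linear_combination (p v 0 + 1) * h2
    · field_simp
      linear_combination (p v 1) * h2
  set K := IntermediateField.adjoin ℚ (Set.range (Sum.elim τ z)) with hK
  have hτK : ∀ v, τ v ∈ K := fun v => IntermediateField.subset_adjoin _ _ ⟨Sum.inl v, rfl⟩
  have hzK : ∀ v, z v ∈ K := fun v => IntermediateField.subset_adjoin _ _ ⟨Sum.inr v, rfl⟩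
  have h1K : (1 : ℝ) ∈ K := K.one_mem
  have hxyK : ∀ v, p v 0 ∈ K ∧ p v 1 ∈ K := by
    intro v
    by_cases hv : p v 0 = -1
    · have h1 : p v 1 = 0 := by
        have := hcyl v
        rw [hv] at this
        nlinarith
      rw [hv, h1]
      exact ⟨K.neg_mem h1K, K.zero_mem⟩
    · rw [(hpar v hv).1, (hpar v hv).2]
      unfold cylX cylY
      have ht2 := pow_mem (hτK v) 2
      refine ⟨K.div_mem (K.sub_mem h1K ht2) (K.add_mem h1K ht2),
        K.div_mem (K.mul_mem ?_ (hτK v)) (K.add_mem h1K ht2)⟩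
      have : (2:ℝ) = 1 + 1 := by norm_num
      rw [this]
      exact K.add_mem h1K h1K
  have hpK : ∀ (v : V) (k : Fin 3), p v k ∈ K := by
    intro v k
    fin_cases k
    · exact (hxyK v).1
    · exact (hxyK v).2
    · exact hzK v
  let y : {x // x ∈ S} → K := fun i => ⟨p i.1.1 i.1.2, hpK _ _⟩
  have hy : AlgebraicIndependent ℚ y := AlgebraicIndependent.of_comp K.val hind
  have hle := hy.cardinalMk_le_trdeg
  let x : V ⊕ V → K := fun i => ⟨Sum.elim τ z i, IntermediateField.subset_adjoin _ _ ⟨i, rfl⟩⟩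
  have halg : Algebra.IsAlgebraic (Algebra.adjoin ℚ (Set.range x)) K := by
    have hmem : ∀ r ∈ Algebra.adjoin ℚ (Set.range (Sum.elim τ z)),
        ∃ r' : Algebra.adjoin ℚ (Set.range x), ((r' : K) : ℝ) = r := by
      intro r hr
      induction hr using Algebra.adjoin_induction with
      | mem r h =>
        obtain ⟨i, rfl⟩ := h
        exact ⟨⟨x i, Algebra.subset_adjoin ⟨i, rfl⟩⟩, rfl⟩
      | algebraMap q => exact ⟨algebraMap ℚ _ q, by simp⟩
      | add r s _ _ h1 h2 =>
        obtain ⟨r', h1⟩ := h1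
        obtain ⟨s', h2⟩ := h2
        exact ⟨r' + s', by rw [← h1, ← h2]; rfl⟩
      | mul r s _ _ h1 h2 =>
        obtain ⟨r', h1⟩ := h1
        obtain ⟨s', h2⟩ := h2
        exact ⟨r' * s', by rw [← h1, ← h2]; rfl⟩
    constructor
    rintro ⟨k, hk⟩
    obtain ⟨r, hr, d, hd, hrd⟩ := IntermediateField.mem_adjoin_iff_div.1 hk
    obtain ⟨r', hr'⟩ := hmem r hr
    obtain ⟨d', hd'⟩ := hmem d hd
    have hkk : (⟨k, hk⟩ : K) = (algebraMap _ K r') * (algebraMap _ K d')⁻¹ := by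
      apply Subtype.ext
      change k = ((r' : K) : ℝ) * ((d' : K) : ℝ)⁻¹
      rw [hr', hd', hrd, div_eq_mul_inv]
    rw [hkk]
    exact (isAlgebraic_algebraMap r').mul (isAlgebraic_algebraMap d').inv
  have hb := Algebra.IsAlgebraic.isTranscendenceBasis_of_le_trdeg_of_finite ℚ x (by
    refine le_trans (le_of_eq ?_) hle
    simp [hS]
    norm_cast
    omega)
  have hindx : AlgebraicIndependent ℚ (Sum.elim τ z) := hb.1.map' (f := K.val) K.val.injective
  refine ⟨τ, z, hindx, fun v => ?_⟩
  have hne : p v 0 ≠ -1 := by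
    intro h
    have := hindx.ne_zero (Sum.inl v)
    simp [hτ, h] at this
  exact ⟨(hpar v hne).1, (hpar v hne).2, rfl⟩

/-! ### transfer from a special position to a generic one -/

def CylRFl {V : Type} (G : SimpleGraph V) (τ z a b : V → ℝ) : Prop :=
  ∀ ⦃i j : V⦄, G.Adj i j → cylS (τ i) (τ j) * (a i - a j) + (z i - z j) * (b i - b j) = 0

open Classical in
/-- polynomial rigidity matrix, pinned at `v0` -/
noncomputable def cylMat {V : Type} (G : SimpleGraph V) (v0 : V) (R : Type) [CommRing R]
    (f : V ⊕ V → R) : Matrix ((V × V) ⊕ Fin 2) (V ⊕ V) R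
  | Sum.inl (i, j), Sum.inl v => if G.Adj i j then
      2 * (f (Sum.inl j) - f (Sum.inl i)) * (1 + f (Sum.inl i) * f (Sum.inl j)) *
        ((if v = i then 1 else 0) - (if v = j then 1 else 0)) else 0
  | Sum.inl (i, j), Sum.inr v => if G.Adj i j then
      (f (Sum.inr i) - f (Sum.inr j)) * ((1 + f (Sum.inl i) ^ 2) * (1 + f (Sum.inl j) ^ 2)) *
        ((if v = i then 1 else 0) - (if v = j then 1 else 0)) else 0
  | Sum.inr k, Sum.inl v => if k = 0 ∧ v = v0 then 1 else 0
  | Sum.inr k, Sum.inr v => if k = 1 ∧ v = v0 then 1 else 0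

lemma cylMat_map {V : Type} (G : SimpleGraph V) (v0 : V) (R R' : Type) [CommRing R]
    [CommRing R'] (φ : R →+* R') (f : V ⊕ V → R) :
    (cylMat G v0 R f).map φ = cylMat G v0 R' (fun i => φ (f i)) := by
  have h2 : φ 2 = 2 := map_ofNat φ 2
  ext r c
  rcases r with ⟨i, j⟩ | k <;> rcases c with v | v <;>
    simp only [cylMat, Matrix.map_apply] <;> split_ifs <;> simp [h2]

lemma cylMat_mulVec {V : Type} [Fintype V] (G : SimpleGraph V) (v0 : V) (τ z a b : V → ℝ) :
    (cylMat G v0 ℝ (Sum.elim τ z)).mulVec (Sum.elim a b) = 0 ↔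
      CylRFl G τ z a b ∧ a v0 = 0 ∧ b v0 = 0 := by
  classical
  have hrow : ∀ i j, G.Adj i j →
      (cylMat G v0 ℝ (Sum.elim τ z)).mulVec (Sum.elim a b) (Sum.inl (i, j)) =
      ((1 + τ i ^ 2) * (1 + τ j ^ 2)) *
        (cylS (τ i) (τ j) * (a i - a j) + (z i - z j) * (b i - b j)) := by
    intro i j hij
    have hp : (1 + τ i ^ 2) ≠ 0 := by positivity
    have hq : (1 + τ j ^ 2) ≠ 0 := by positivity
    have e1 : ∀ g : V → ℝ, ∀ P : ℝ, ∑ v, P * ((if v = i then 1 else 0) - (if v = j then 1 else 0))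
        * g v = P * (g i - g j) := by
      intro g P
      simp only [mul_assoc, ← Finset.mul_sum, sub_mul, ite_mul, one_mul, zero_mul,
        Finset.sum_sub_distrib, Finset.sum_ite_eq', Finset.mem_univ, if_true]
    simp only [Matrix.mulVec, dotProduct, Fintype.sum_sum_type, cylMat, Sum.elim_inl,
      Sum.elim_inr, if_pos hij, e1]
    rw [cylS_eq]
    field_simp
  have hrow0 : ∀ i j, ¬ G.Adj i j →
      (cylMat G v0 ℝ (Sum.elim τ z)).mulVec (Sum.elim a b) (Sum.inl (i, j)) = 0 := by
    intro i j hij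
    simp [Matrix.mulVec, dotProduct, Fintype.sum_sum_type, cylMat, if_neg hij]
  have hp0 : (cylMat G v0 ℝ (Sum.elim τ z)).mulVec (Sum.elim a b) (Sum.inr 0) = a v0 := by
    simp [Matrix.mulVec, dotProduct, Fintype.sum_sum_type, cylMat]
  have hp1 : (cylMat G v0 ℝ (Sum.elim τ z)).mulVec (Sum.elim a b) (Sum.inr 1) = b v0 := by
    simp [Matrix.mulVec, dotProduct, Fintype.sum_sum_type, cylMat]
  constructor
  · intro h
    refine ⟨fun i j hij => ?_, ?_, ?_⟩
    · have := hrow i j hij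
      rw [h, Pi.zero_apply] at this
      exact (mul_eq_zero.1 this.symm).resolve_left (by positivity)
    · rw [← hp0, h]; rfl
    · rw [← hp1, h]; rfl
  · rintro ⟨h1, h2, h3⟩
    funext r
    rcases r with ⟨i, j⟩ | k
    · by_cases hij : G.Adj i j
      · rw [hrow i j hij, h1 hij]; simp
      · rw [hrow0 i j hij]; rfl
    · fin_cases k
      · exact hp0.trans h2
      · exact hp1.trans h3

/-- Gram determinant criterion -/
lemma gram_det {m n : Type} [Fintype m] [Fintype n] [DecidableEq n] (M : Matrix m n ℝ) :
    (M.transpose * M).det ≠ 0 ↔ ∀ w, M.mulVec w = 0 → w = 0 := by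
  rw [Ne, ← Matrix.exists_mulVec_eq_zero_iff]
  push Not
  constructor
  · intro h w hw
    by_contra hne
    apply h w hne
    rw [← Matrix.mulVec_mulVec, hw, Matrix.mulVec_zero]
  · intro h w hne h0
    apply hne
    apply h
    rw [← dotProduct_self_eq_zero, Matrix.dotProduct_mulVec, ← Matrix.mulVec_transpose,
      Matrix.mulVec_mulVec, h0, zero_dotProduct]

lemma cyl_pinned {V : Type} [Fintype V] [DecidableEq V] (G : SimpleGraph V) (v0 : V)
    (τ z : V → ℝ) :
    ((cylMat G v0 ℝ (Sum.elim τ z)).transpose * cylMat G v0 ℝ (Sum.elim τ z)).det ≠ 0 ↔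
      ∀ a b, CylRFl G τ z a b → ∀ v w, a v = a w ∧ b v = b w := by
  rw [gram_det]
  constructor
  · intro h a b hab
    have h0 := h (Sum.elim (fun v => a v - a v0) (fun v => b v - b v0))
      ((cylMat_mulVec G v0 τ z _ _).2 ⟨fun i j hij => by linear_combination hab hij,
        by simp, by simp⟩)
    have h1 : ∀ v, a v = a v0 := fun v => by
      have := congrFun h0 (Sum.inl v)
      simp at this; linarith
    have h2 : ∀ v, b v = b v0 := fun v => by
      have := congrFun h0 (Sum.inr v)
      simp at this; linarith
    intro v w
    rw [h1 v, h1 w, h2 v, h2 w]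
    exact ⟨rfl, rfl⟩
  · intro h w hw
    have hsplit : w = Sum.elim (fun v => w (Sum.inl v)) (fun v => w (Sum.inr v)) := by
      funext i; rcases i with i | i <;> rfl
    rw [hsplit] at hw
    obtain ⟨h1, h2, h3⟩ := (cylMat_mulVec G v0 τ z _ _).1 hw
    have hc := h _ _ h1
    funext i
    rcases i with i | i
    · exact ((hc i v0).1).trans h2
    · exact ((hc i v0).2).trans h3

lemma cyl_transfer {V : Type} [Fintype V] [Nonempty V] (G : SimpleGraph V)
    (τ0 z0 τ z : V → ℝ) (hind : AlgebraicIndependent ℚ (Sum.elim τ z))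
    (h : ∀ a b, CylRFl G τ0 z0 a b → ∀ v w, a v = a w ∧ b v = b w) :
    ∀ a b, CylRFl G τ z a b → ∀ v w, a v = a w ∧ b v = b w := by
  classical
  obtain ⟨v0⟩ := ‹Nonempty V›
  rw [← cyl_pinned G v0] at h ⊢
  set P := cylMat G v0 (MvPolynomial (V ⊕ V) ℚ) MvPolynomial.X with hP
  have hdet : ∀ g : V ⊕ V → ℝ, MvPolynomial.aeval g (P.transpose * P).det =
      ((cylMat G v0 ℝ g).transpose * cylMat G v0 ℝ g).det := by
    intro g
    have := RingHom.map_det (MvPolynomial.aeval g : MvPolynomial (V ⊕ V) ℚ →ₐ[ℚ] ℝ).toRingHom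
      (P.transpose * P)
    refine this.trans ?_
    rw [RingHom.mapMatrix_apply, Matrix.map_mul, Matrix.transpose_map, hP, cylMat_map]
    congr 1
    simp
  rw [← hdet] at h ⊢
  intro h0
  apply h
  rw [hind.eq_zero_of_aeval_eq_zero _ h0, map_zero]

lemma tight_special {V : Type} [Fintype V] [Nonempty V] (G : SimpleGraph V) (hT : Tight22 G) :
    ∃ τ z : V → ℝ, ∀ a b, CylRFl G τ z a b → ∀ v w, a v = a w ∧ b v = b w := by
  classical
  have hmk : ∀ e : Sym2 V, s((Quot.out e).1, (Quot.out e).2) = e := fun e => Quot.out_eq e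
  have hcardV : 0 < Fintype.card V := Fintype.card_pos
  obtain ⟨τ, z, D, -, h2, h3⟩ := exists_good (V := V) (ι := Sym2 V) (Fintype.card V - 1)
    Finset.univ G.edgeFinset (fun e => (Quot.out e).1) (fun e => (Quot.out e).2) (fun _ => True)
    (by rw [Finset.card_univ]; omega) (by simp)
    (by
      intro X _ hX
      have := hT.2 X (G.edgeFinset.filter (fun e => (Quot.out e).1 ∈ X ∧ (Quot.out e).2 ∈ X))
        (by intro e he; exact SimpleGraph.mem_edgeFinset.1 (Finset.mem_filter.1 (Finset.mem_coe.1 he)).1) (by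
          intro e he w hw
          rw [Finset.mem_filter] at he
          rw [← hmk e, Sym2.mem_iff] at hw
          rcases hw with rfl | rfl
          · exact he.2.1
          · exact he.2.2) hX
      unfold cylCnt
      beta_reduce
      omega)
    (by
      have := hT.1
      rw [Set.ncard_eq_toFinset_card'] at this
      rw [Finset.card_univ]
      change (G.edgeFinset.card : ℤ) = _ at this
      omega)
    (by
      intro e _ e' _ _ _ h
      rwa [hmk, hmk] at h)
  refine ⟨τ, z, fun a b hab => ?_⟩
  obtain ⟨ha, hb⟩ := h3 a b (by
    intro e he
    have hadj : G.Adj (Quot.out e).1 (Quot.out e).2 := by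
      rw [← SimpleGraph.mem_edgeSet, hmk]
      exact SimpleGraph.mem_edgeFinset.1 he
    have := hab hadj
    rcases h2 e he trivial with hD | hD
    · rw [hD]; exact this
    · rw [hD, cylS_anti]; simp only; linear_combination -this)
  intro v w
  exact ⟨ha v (by simp) w (by simp), hb v (by simp) w (by simp)⟩

/-- **Laman's theorem for the cylinder (Nixon–Owen–Power).** Let `G` be a (simple) graph with
at least 4 vertices and let `(G,p)` be a generic framework on the cylinder. Then `(G,p)` is
minimally infinitesimally rigid on the cylinder if and only if `G` is (2,2)-tight. -/
theorem statement_19 {V : Type} [Fintype V] (G : SimpleGraph V)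
    (hV : 4 ≤ Fintype.card V) (p : V → Fin 3 → ℝ) (hinj : Function.Injective p)
    (hcyl : OnCylinder p) (hgen : CylGeneric p) :
    (CylInfRigid G p ∧ ∀ e ∈ G.edgeSet, ¬ CylInfRigid (G.deleteEdges {e}) p) ↔
      Tight22 G := by
  classical
  haveI : Nonempty V := Fintype.card_pos_iff.1 (by omega)
  have hncard : G.edgeSet.ncard = G.edgeFinset.card := by
    rw [Set.ncard_eq_toFinset_card']; rfl
  constructor
  · rintro ⟨hr, hmin⟩
    rw [cylRigid_iff G p hcyl] at hr
    have hdual : ∀ e ∈ G.edgeSet, ∃ u, cylRow p e u ≠ 0 ∧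
        ∀ e' ∈ G.edgeSet, e' ≠ e → cylRow p e' u = 0 := by
      intro e he
      have h1 := hmin e he
      rw [cylRigid_iff _ p hcyl] at h1
      push Not at h1
      obtain ⟨a, b, hab, v, w, hvw⟩ := h1
      rw [cylPFl_iff] at hab
      have hother : ∀ e' ∈ G.edgeSet, e' ≠ e → cylRow p e' (a, b) = 0 := by
        intro e' he' hee
        apply hab
        rw [SimpleGraph.edgeSet_deleteEdges]
        exact ⟨he', hee⟩
      refine ⟨(a, b), ?_, hother⟩
      intro h0
      have := hr a b ((cylPFl_iff G p a b).2 (fun e' he' => by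
        by_cases hee : e' = e
        · rw [hee]; exact h0
        · exact hother e' he' hee)) v w
      exact hvw this.1 this.2
    have hupper : ∀ (V' : Finset V) (E' : Finset (Sym2 V)), ↑E' ⊆ G.edgeSet →
        (∀ e ∈ E', ∀ w ∈ e, w ∈ V') → V'.Nonempty → E'.card + 2 ≤ 2 * V'.card := by
      intro V' E' hE hEV hne
      apply cyl_count_upper p V' hne E' hEV
      intro e he
      obtain ⟨u, h1, h2⟩ := hdual e (hE he)
      exact ⟨u, h1, fun e' he' => h2 e' (hE he')⟩
    refine ⟨?_, ?_⟩
    · have h1 := cyl_count_lower G p hr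
      have h2 := hupper Finset.univ G.edgeFinset (by simp) (by simp) Finset.univ_nonempty
      rw [Finset.card_univ] at h2
      omega
    · intro V' E' hE hEV hne
      have := hupper V' E' hE hEV hne
      omega
  · intro hT
    obtain ⟨τ0, z0, h0⟩ := tight_special G hT
    obtain ⟨τ, z, hind, hp⟩ := generic_param p hcyl hgen
    have h1 := cyl_transfer G τ0 z0 τ z hind h0
    refine ⟨?_, ?_⟩
    · rw [cylRigid_iff G p hcyl]
      intro a b hab
      apply h1
      intro i j hij
      have := hab hij
      rw [(hp i).1, (hp i).2.1, (hp i).2.2, (hp j).1, (hp j).2.1, (hp j).2.2] at this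
      exact this
    · intro e he hr
      rw [cylRigid_iff _ p hcyl] at hr
      have h2 := cyl_count_lower _ p hr
      have h3 : (G.deleteEdges {e}).edgeSet.ncard + 1 = G.edgeSet.ncard := by
        rw [SimpleGraph.edgeSet_deleteEdges]
        exact Set.ncard_diff_singleton_add_one he (Set.toFinite _)
      have h4 := hT.1
      omega
end
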